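/- arXiv:0911.4838 — 5 statements merged into one kernel-verified Lean document; each statement's English description precedes it below -/
import Mathlib

section
/- For every C₁ > 0 there exist positive constants B₀ and C₀ (independent of m) such that for all m ∈ ℤ with |δ̃₁| < C₁, all B > B₀, and all ψ in the form domain of q_m: q_m[ψ] ≥ (Θ₀ + λ₁^{ℳ̃}(δ̃₁)·B^{−1/3} − C₀·B^{−3/8})·‖ψ‖². -/
noncomputable section
open MeasureTheory Real Filter Set Topology

/-- The de Gennes energy `λ₁^𝒢(ξ)`. -/
def deGennes (ξ : ℝ) : ℝ :=
  sInf { q : ℝ | ∃ u : ℝ → ℂ, ContDiff ℝ 1 u ∧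
    IntegrableOn (fun t => ‖u t‖ ^ 2) (Ioi 0) ∧
    IntegrableOn (fun t => ‖deriv u t‖ ^ 2 + (t + ξ) ^ 2 * ‖u t‖ ^ 2) (Ioi 0) ∧
    0 < (∫ t in Ioi (0:ℝ), ‖u t‖ ^ 2) ∧
    q = (∫ t in Ioi (0:ℝ), (‖deriv u t‖ ^ 2 + (t + ξ) ^ 2 * ‖u t‖ ^ 2)) /
        ∫ t in Ioi (0:ℝ), ‖u t‖ ^ 2 }

/-- `Θ₀`, the infimum of the de Gennes energy. -/
def Theta0 : ℝ := ⨅ ξ : ℝ, deGennes ξ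

/-- The half plane `ℝ²₊ = {(τ, ρ) : τ > 0}`. -/
def halfPlane : Set (ℝ × ℝ) := Ioi (0:ℝ) ×ˢ (univ : Set ℝ)

/-- The potential of the effective operator `Q_m(B)`. -/
def qPot (B : ℝ) (m : ℤ) (p : ℝ × ℝ) : ℝ :=
  (p.1 + ((m : ℝ) - B / 2) / Real.sqrt B + B ^ (-(1:ℝ)/6) * p.2 ^ 2 / 2) ^ 2

/-- The integrand of the quadratic form `q_m`. -/
def qIntegrand (B : ℝ) (m : ℤ) (ψ : ℝ × ℝ → ℂ) (p : ℝ × ℝ) : ℝ :=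
  ‖fderiv ℝ ψ p (1, 0)‖ ^ 2 + qPot B m p * ‖ψ p‖ ^ 2
    + B ^ (-(1:ℝ)/3) * ‖fderiv ℝ ψ p (0, 1)‖ ^ 2

/-- The quadratic form `q_m[ψ]`. -/
def qForm (B : ℝ) (m : ℤ) (ψ : ℝ × ℝ → ℂ) : ℝ :=
  ∫ p in halfPlane, qIntegrand B m ψ p

/-- Membership in the form domain of `q_m`. -/
def InFormDomain (B : ℝ) (m : ℤ) (ψ : ℝ × ℝ → ℂ) : Prop :=
  ContDiff ℝ 1 ψ ∧ IntegrableOn (fun p => ‖ψ p‖ ^ 2) halfPlane ∧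
    IntegrableOn (qIntegrand B m ψ) halfPlane

/-- The rescaled momentum `δ̃₁ = ((m - B/2)/√B - ξ₀)·B^{1/6}`. -/
def delta1 (B : ℝ) (m : ℤ) (ξ₀ : ℝ) : ℝ :=
  (((m : ℝ) - B / 2) / Real.sqrt B - ξ₀) * B ^ ((1:ℝ)/6)

/-- Second derivative in the `τ` direction. -/
def d2τ (ψ : ℝ × ℝ → ℂ) (p : ℝ × ℝ) : ℂ :=
  fderiv ℝ (fun q => fderiv ℝ ψ q ((1:ℝ), (0:ℝ))) p (1, 0)

/-- Second derivative in the `ρ` direction. -/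
def d2ρ (ψ : ℝ × ℝ → ℂ) (p : ℝ × ℝ) : ℂ :=
  fderiv ℝ (fun q => fderiv ℝ ψ q ((0:ℝ), (1:ℝ))) p (0, 1)

/-- An eigenfunction of the model operator `Q_m(B)` on the half plane, with Neumann
boundary condition at `τ = 0`, eigenvalue `lam`, which is nonzero, smooth up to the
boundary, and lies in `L²` together with its first derivatives. -/
def IsQEigenfunction (B : ℝ) (m : ℤ) (lam : ℝ) (ψ : ℝ × ℝ → ℂ) : Prop :=
  ContDiff ℝ (⊤ : ℕ∞) ψ ∧
  IntegrableOn (fun p => ‖ψ p‖ ^ 2) halfPlane ∧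
  IntegrableOn (fun p => ‖fderiv ℝ ψ p ((1:ℝ), (0:ℝ))‖ ^ 2) halfPlane ∧
  IntegrableOn (fun p => ‖fderiv ℝ ψ p ((0:ℝ), (1:ℝ))‖ ^ 2) halfPlane ∧
  0 < (∫ p in halfPlane, ‖ψ p‖ ^ 2) ∧
  (∀ p ∈ halfPlane,
    -d2τ ψ p - ((B ^ (-(1:ℝ)/3) : ℝ) : ℂ) * d2ρ ψ p + ((qPot B m p : ℝ) : ℂ) * ψ p
      = (lam : ℂ) * ψ p) ∧
  (∀ ρ : ℝ, fderiv ℝ ψ ((0:ℝ), ρ) ((1:ℝ), (0:ℝ)) = 0)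

/-- The modified Montgomery energy `λ₁^{ℳ̃}(ζ)` (with coupling `δ₀`). -/
def montgomeryMod (δ₀ ζ : ℝ) : ℝ :=
  sInf { q : ℝ | ∃ u : ℝ → ℂ, ContDiff ℝ 1 u ∧
    Integrable (fun ρ => ‖u ρ‖ ^ 2) ∧
    Integrable (fun ρ => ‖deriv u ρ‖ ^ 2 + δ₀ * (ζ + ρ ^ 2 / 2) ^ 2 * ‖u ρ‖ ^ 2) ∧
    0 < (∫ ρ : ℝ, ‖u ρ‖ ^ 2) ∧
    q = (∫ ρ : ℝ, (‖deriv u ρ‖ ^ 2 + δ₀ * (ζ + ρ ^ 2 / 2) ^ 2 * ‖u ρ‖ ^ 2)) /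
        ∫ ρ : ℝ, ‖u ρ‖ ^ 2 }

def gN (u : ℝ → ℂ) : ℝ := ∫ t in Ioi (0:ℝ), ‖u t‖ ^ 2

def gF (ξ : ℝ) (u : ℝ → ℂ) : ℝ :=
  ∫ t in Ioi (0:ℝ), (‖deriv u t‖ ^ 2 + (t + ξ) ^ 2 * ‖u t‖ ^ 2)

def gD (u : ℝ → ℂ) : Prop :=
  ContDiff ℝ 1 u ∧ IntegrableOn (fun t => ‖u t‖ ^ 2) (Ioi 0) ∧
    ∀ ξ : ℝ, IntegrableOn (fun t => ‖deriv u t‖ ^ 2 + (t + ξ) ^ 2 * ‖u t‖ ^ 2) (Ioi 0)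

lemma gD_of (ξ : ℝ) {u : ℝ → ℂ} (hu : ContDiff ℝ 1 u)
    (h0 : IntegrableOn (fun t => ‖u t‖ ^ 2) (Ioi 0))
    (h1 : IntegrableOn (fun t => ‖deriv u t‖ ^ 2 + (t + ξ) ^ 2 * ‖u t‖ ^ 2) (Ioi 0)) : gD u := by
  refine ⟨hu, h0, fun ξ' => ?_⟩
  have hc : Continuous u := hu.continuous
  have hc' : Continuous (deriv u) := hu.continuous_deriv le_rfl
  have hb : IntegrableOn (fun t => 2 * (‖deriv u t‖ ^ 2 + (t + ξ) ^ 2 * ‖u t‖ ^ 2)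
      + (2 * (ξ' - ξ) ^ 2) * ‖u t‖ ^ 2) (Ioi 0) := (h1.const_mul 2).add (h0.const_mul _)
  refine Integrable.mono' hb (by fun_prop) (Eventually.of_forall fun t => ?_)
  rw [Real.norm_of_nonneg (by positivity)]
  have h2 : (t + ξ') ^ 2 ≤ 2 * (t + ξ) ^ 2 + 2 * (ξ' - ξ) ^ 2 := by
    nlinarith [sq_nonneg ((t + ξ) - (ξ' - ξ))]
  have h3 := mul_le_mul_of_nonneg_right h2 (sq_nonneg ‖u t‖)
  nlinarith [sq_nonneg ‖deriv u t‖]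

lemma gN_nonneg (u : ℝ → ℂ) : 0 ≤ gN u := integral_nonneg fun t => by positivity

lemma gF_nonneg (ξ : ℝ) (u : ℝ → ℂ) : 0 ≤ gF ξ u := integral_nonneg fun t => by positivity

lemma gD.sq_int {u : ℝ → ℂ} (h : gD u) (ξ : ℝ) :
    IntegrableOn (fun t => (t + ξ) ^ 2 * ‖u t‖ ^ 2) (Ioi 0) := by
  have hc : Continuous u := h.1.continuous
  refine Integrable.mono' (h.2.2 ξ) (by fun_prop) (Eventually.of_forall fun t => ?_)
  rw [Real.norm_of_nonneg (by positivity)]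
  nlinarith [sq_nonneg ‖deriv u t‖]

lemma gD.d_int {u : ℝ → ℂ} (h : gD u) :
    IntegrableOn (fun t => ‖deriv u t‖ ^ 2) (Ioi 0) := by
  have hc' : Continuous (deriv u) := h.1.continuous_deriv le_rfl
  refine Integrable.mono' (h.2.2 0) (by fun_prop) (Eventually.of_forall fun t => ?_)
  rw [Real.norm_of_nonneg (by positivity)]
  have : 0 ≤ (t + 0) ^ 2 * ‖u t‖ ^ 2 := by positivity
  linarith

lemma deGennes_set_eq (ξ : ℝ) : { q : ℝ | ∃ u : ℝ → ℂ, ContDiff ℝ 1 u ∧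
    IntegrableOn (fun t => ‖u t‖ ^ 2) (Ioi 0) ∧
    IntegrableOn (fun t => ‖deriv u t‖ ^ 2 + (t + ξ) ^ 2 * ‖u t‖ ^ 2) (Ioi 0) ∧
    0 < (∫ t in Ioi (0:ℝ), ‖u t‖ ^ 2) ∧
    q = (∫ t in Ioi (0:ℝ), (‖deriv u t‖ ^ 2 + (t + ξ) ^ 2 * ‖u t‖ ^ 2)) /
        ∫ t in Ioi (0:ℝ), ‖u t‖ ^ 2 } = { q : ℝ | ∃ u : ℝ → ℂ, gD u ∧ 0 < gN u ∧ q = gF ξ u / gN u } := by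
  ext q
  constructor
  · rintro ⟨u, h1, h2, h3, h4, h5⟩
    exact ⟨u, gD_of ξ h1 h2 h3, h4, h5⟩
  · rintro ⟨u, h1, h4, h5⟩
    exact ⟨u, h1.1, h1.2.1, h1.2.2 ξ, h4, h5⟩

lemma deGennes_eq (ξ : ℝ) :
    deGennes ξ = sInf { q : ℝ | ∃ u : ℝ → ℂ, gD u ∧ 0 < gN u ∧ q = gF ξ u / gN u } := by
  rw [← deGennes_set_eq]; rfl

lemma gSet_bdd (ξ : ℝ) :
    BddBelow { q : ℝ | ∃ u : ℝ → ℂ, gD u ∧ 0 < gN u ∧ q = gF ξ u / gN u } := by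
  refine ⟨0, ?_⟩
  rintro q ⟨u, -, h, rfl⟩
  exact div_nonneg (gF_nonneg _ _) h.le

lemma deGennes_nonneg (ξ : ℝ) : 0 ≤ deGennes ξ := by
  rw [deGennes_eq]
  apply Real.sInf_nonneg
  rintro q ⟨u, -, h, rfl⟩
  exact div_nonneg (gF_nonneg _ _) h.le

lemma deGennes_le (ξ : ℝ) {u : ℝ → ℂ} (hu : gD u) : deGennes ξ * gN u ≤ gF ξ u := by
  rcases (gN_nonneg u).eq_or_lt with h | h
  · rw [← h, mul_zero]; exact gF_nonneg _ _
  · rw [← le_div_iff₀ h, deGennes_eq]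
    exact csInf_le (gSet_bdd ξ) ⟨u, hu, h, rfl⟩

lemma Theta0_le (ξ : ℝ) : Theta0 ≤ deGennes ξ :=
  ciInf_le ⟨0, by rintro _ ⟨x, rfl⟩; exact deGennes_nonneg x⟩ ξ

lemma Theta0_nonneg : 0 ≤ Theta0 := Real.iInf_nonneg deGennes_nonneg

/-- a test function -/
def tb : ContDiffBump (0:ℝ) := ⟨1, 2, one_pos, one_lt_two⟩

def tu (t : ℝ) : ℂ := ((tb t : ℝ) : ℂ)

lemma tu_contDiff : ContDiff ℝ 1 tu := Complex.ofRealCLM.contDiff.comp tb.contDiff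

lemma tu_supp : HasCompactSupport tu := tb.hasCompactSupport.comp_left (g := fun x : ℝ => (x:ℂ)) (by simp)

lemma tu_one {t : ℝ} (ht : |t| ≤ 1) : tu t = 1 := by
  have : tb t = 1 := tb.one_of_mem_closedBall (by simpa [tb, Real.norm_eq_abs] using ht)
  simp [tu, this]

lemma int_supp {f : ℝ → ℝ} {u : ℝ → ℂ} (hu : HasCompactSupport u) (hf : Continuous f)
    (hc : Continuous u) :
    Integrable (fun t => f t * ‖u t‖ ^ 2) := by
  apply Continuous.integrable_of_hasCompactSupport (by fun_prop)
  exact (hu.comp_left (g := fun z : ℂ => ‖z‖ ^ 2) (by simp)).mul_left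

lemma tu_gD : gD tu := by
  have hc : Continuous tu := tu_contDiff.continuous
  have hc' : Continuous (deriv tu) := tu_contDiff.continuous_deriv le_rfl
  refine gD_of 0 tu_contDiff ?_ ?_
  · have := int_supp (f := fun _ => 1) tu_supp continuous_const hc
    simpa using this.integrableOn
  · have h1 := int_supp (f := fun _ => 1) tu_supp.deriv continuous_const hc'
    have h2 := int_supp (f := fun t => (t + 0) ^ 2) tu_supp (by fun_prop) hc
    simp only [one_mul] at h1
    exact (h1.add h2).integrableOn

lemma tu_gN : 0 < gN tu := by
  have h := tu_gD.2.1
  have : (∫ t in Ioc (0:ℝ) 1, ‖tu t‖ ^ 2) ≤ gN tu :=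
    setIntegral_mono_set h (Eventually.of_forall fun t => by positivity)
      (Eventually.of_forall Ioc_subset_Ioi_self)
  have h2 : (∫ t in Ioc (0:ℝ) 1, ‖tu t‖ ^ 2) = ∫ t in Ioc (0:ℝ) 1, (1:ℝ) := by
    apply setIntegral_congr_fun measurableSet_Ioc
    intro t ht
    simp [tu_one (show |t| ≤ 1 from abs_le.2 ⟨by linarith [ht.1], ht.2⟩)]
  rw [h2] at this
  simp at this
  linarith

lemma deriv_smulc {u : ℝ → ℂ} (hu : ContDiff ℝ 1 u) (c : ℂ) :
    deriv (fun t => c * u t) = fun t => c * deriv u t := by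
  funext t
  exact ((hu.differentiable one_ne_zero t).hasDerivAt.const_mul c).deriv

lemma gD_smul {u : ℝ → ℂ} (hu : gD u) (c : ℂ) : gD (fun t => c * u t) := by
  refine gD_of 0 (contDiff_const.mul hu.1) ?_ ?_
  · have := hu.2.1.const_mul (‖c‖ ^ 2)
    refine this.congr (Eventually.of_forall fun t => ?_)
    simp only [norm_mul]; ring
  · rw [deriv_smulc hu.1]
    have := (hu.2.2 0).const_mul (‖c‖ ^ 2)
    refine this.congr (Eventually.of_forall fun t => ?_)
    simp only [norm_mul]; ring

lemma gN_smul (u : ℝ → ℂ) (c : ℂ) : gN (fun t => c * u t) = ‖c‖ ^ 2 * gN u := by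
  unfold gN
  rw [← integral_const_mul]
  congr 1; funext t; simp [mul_pow]

lemma gF_smul (ξ : ℝ) {u : ℝ → ℂ} (hu : ContDiff ℝ 1 u) (c : ℂ) :
    gF ξ (fun t => c * u t) = ‖c‖ ^ 2 * gF ξ u := by
  unfold gF
  rw [← integral_const_mul, deriv_smulc hu]
  congr 1; funext t; simp only [norm_mul]; ring

lemma deGennes_near (ξ η : ℝ) (hη : 0 < η) :
    ∃ u, gD u ∧ gN u = 1 ∧ gF ξ u ≤ deGennes ξ + η := by
  have hne : { q : ℝ | ∃ u : ℝ → ℂ, gD u ∧ 0 < gN u ∧ q = gF ξ u / gN u }.Nonempty :=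
    ⟨_, tu, tu_gD, tu_gN, rfl⟩
  obtain ⟨q, ⟨u, hu, hN, rfl⟩, hq⟩ := exists_lt_of_csInf_lt hne
    (show sInf _ < deGennes ξ + η by rw [← deGennes_eq]; linarith)
  have hs : ‖(((Real.sqrt (gN u))⁻¹ : ℝ) : ℂ)‖ ^ 2 = (gN u)⁻¹ := by
    rw [Complex.norm_real, Real.norm_of_nonneg (by positivity), inv_pow, Real.sq_sqrt hN.le]
  refine ⟨_, gD_smul hu (((Real.sqrt (gN u))⁻¹ : ℝ) : ℂ), ?_, ?_⟩
  · rw [gN_smul, hs, inv_mul_cancel₀ hN.ne']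
  · rw [gF_smul ξ hu.1, hs, inv_mul_eq_div]; exact hq.le

lemma deGennes_ge_sq {ξ : ℝ} (hξ : 0 ≤ ξ) : ξ ^ 2 ≤ deGennes ξ := by
  apply le_of_forall_pos_le_add
  intro η hη
  obtain ⟨u, hu, hN, hF⟩ := deGennes_near ξ η hη
  refine le_trans ?_ hF
  have : ∫ t in Ioi (0:ℝ), ξ ^ 2 * ‖u t‖ ^ 2 ≤ gF ξ u := by
    refine setIntegral_mono_on (hu.2.1.const_mul _) (hu.2.2 ξ) measurableSet_Ioi fun t ht => ?_
    have h1 : ξ ^ 2 ≤ (t + ξ) ^ 2 := by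
      have : (0:ℝ) < t := ht
      nlinarith [mul_nonneg this.le hξ]
    have := mul_le_mul_of_nonneg_right h1 (sq_nonneg ‖u t‖)
    nlinarith [sq_nonneg ‖deriv u t‖]
  rw [integral_const_mul] at this
  change ξ ^ 2 * gN u ≤ _ at this
  rwa [hN, mul_one] at this

lemma gF_shift {u : ℝ → ℂ} (hu : gD u) (ξ s : ℝ) :
    gF (ξ + s) u = gF ξ u + s * (gF (ξ + 1) u - gF ξ u - gN u) + s ^ 2 * gN u := by
  have e : ∀ x, gF x u = (∫ t in Ioi (0:ℝ), ‖deriv u t‖ ^ 2) + (∫ t in Ioi (0:ℝ), t ^ 2 * ‖u t‖ ^ 2)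
      + x * (∫ t in Ioi (0:ℝ), 2 * t * ‖u t‖ ^ 2) + x ^ 2 * gN u := by
    intro x
    have i0 := hu.2.1
    have i1 : IntegrableOn (fun t => t ^ 2 * ‖u t‖ ^ 2) (Ioi 0) := by simpa using hu.sq_int 0
    have i2 : IntegrableOn (fun t => 2 * t * ‖u t‖ ^ 2) (Ioi 0) := by
      refine (((hu.sq_int 1).sub i1).sub i0).congr (Eventually.of_forall fun t => ?_)
      simp only [Pi.sub_apply]; ring
    have i3 := hu.d_int
    unfold gF gN
    have i4 : IntegrableOn (fun t => ‖deriv u t‖ ^ 2 + t ^ 2 * ‖u t‖ ^ 2) (Ioi 0) := i3.add i1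
    have i5 : IntegrableOn (fun t => ‖deriv u t‖ ^ 2 + t ^ 2 * ‖u t‖ ^ 2
      + x * (2 * t * ‖u t‖ ^ 2)) (Ioi 0) := i4.add (i2.const_mul x)
    rw [← integral_const_mul, ← integral_const_mul, ← integral_add i3 i1,
      ← integral_add i4 (i2.const_mul x), ← integral_add i5 (i0.const_mul _)]
    congr 1; funext t; ring
  rw [e (ξ + s), e ξ, e (ξ + 1)]; ring

lemma gF_W_bound {u : ℝ → ℂ} (hu : gD u) (ξ : ℝ) :
    |gF (ξ + 1) u - gF ξ u - gN u| ≤ gF ξ u + gN u := by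
  have h1 := gF_shift hu ξ (-1)
  have h2 := gF_nonneg (ξ + -1) u
  have h3 := gF_nonneg (ξ + 1) u
  rw [abs_le]; constructor <;> linarith

lemma deGennes_cont : Continuous deGennes := by
  have key : ∀ ξ s : ℝ, deGennes (ξ + s) ≤ deGennes ξ + |s| * (deGennes ξ + 1) + s ^ 2 := by
    intro ξ s
    have : ∀ η > 0, deGennes (ξ + s) ≤ (deGennes ξ + η) + |s| * ((deGennes ξ + η) + 1) + s ^ 2 := by
      intro η hη
      obtain ⟨u, hu, hN, hF⟩ := deGennes_near ξ η hη
      have h1 := deGennes_le (ξ + s) hu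
      rw [gF_shift hu, hN] at h1
      have h2 := gF_W_bound hu ξ
      rw [hN] at h2
      have h3 : s * (gF (ξ + 1) u - gF ξ u - 1) ≤ |s| * (gF ξ u + 1) := by
        refine (le_abs_self _).trans ?_
        rw [abs_mul]; gcongr
      have h4 : |s| * (gF ξ u + 1) ≤ |s| * ((deGennes ξ + η) + 1) := by gcongr
      linarith
    have ht : Tendsto (fun η : ℝ => (deGennes ξ + η) + |s| * ((deGennes ξ + η) + 1) + s ^ 2) (𝓝[>] 0)
        (𝓝 ((deGennes ξ + 0) + |s| * ((deGennes ξ + 0) + 1) + s ^ 2)) := by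
      apply Tendsto.mono_left _ nhdsWithin_le_nhds
      apply Continuous.tendsto (by fun_prop)
    rw [add_zero] at ht
    exact ge_of_tendsto ht (eventually_nhdsWithin_of_forall fun η hη => this η hη)
  rw [continuous_iff_continuousAt]
  intro ξ
  have up : Tendsto (fun x : ℝ => deGennes ξ + |x - ξ| * (deGennes ξ + 1) + (x - ξ) ^ 2) (𝓝 ξ)
      (𝓝 (deGennes ξ)) := by
    have : Continuous (fun x : ℝ => deGennes ξ + |x - ξ| * (deGennes ξ + 1) + (x - ξ) ^ 2) := by fun_prop
    simpa using this.tendsto ξ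
  have lo : Tendsto (fun x : ℝ => (deGennes ξ - |x - ξ| - (x - ξ) ^ 2) / (1 + |x - ξ|)) (𝓝 ξ)
      (𝓝 (deGennes ξ)) := by
    have : Continuous (fun x : ℝ => (deGennes ξ - |x - ξ| - (x - ξ) ^ 2) / (1 + |x - ξ|)) := by
      apply Continuous.div (by fun_prop) (by fun_prop)
      intro x; positivity
    simpa using this.tendsto ξ
  refine tendsto_of_tendsto_of_tendsto_of_le_of_le lo up ?_ ?_
  · intro x
    have h := key x (ξ - x)
    simp only [add_sub_cancel] at h
    rw [abs_sub_comm] at h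
    show _ / _ ≤ _
    rw [div_le_iff₀ (by positivity)]
    nlinarith
  · intro x
    have h := key ξ (x - ξ)
    simpa using h

lemma norm_exp (z w : ℂ) (ε : ℝ) : ‖z + (ε:ℂ) * w‖ ^ 2 =
    ‖z‖ ^ 2 + ε * (‖z + w‖ ^ 2 - ‖z‖ ^ 2 - ‖w‖ ^ 2) + ε ^ 2 * ‖w‖ ^ 2 := by
  simp only [← Complex.normSq_eq_norm_sq, Complex.normSq_apply]
  simp; ring

lemma norm_add_le2 (z w : ℂ) : ‖z + w‖ ^ 2 ≤ 2 * ‖z‖ ^ 2 + 2 * ‖w‖ ^ 2 := by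
  have h := norm_add_le z w
  have : ‖z + w‖ ^ 2 ≤ (‖z‖ + ‖w‖) ^ 2 := by gcongr
  nlinarith [sq_nonneg (‖z‖ - ‖w‖)]

lemma gD_add {u v : ℝ → ℂ} (hu : gD u) (hv : gD v) : gD (fun t => u t + v t) := by
  have hc := hu.1.continuous
  have hc' := hv.1.continuous
  have hd : deriv (fun t => u t + v t) = fun t => deriv u t + deriv v t := by
    funext t
    exact ((hu.1.differentiable one_ne_zero t).hasDerivAt.add
      (hv.1.differentiable one_ne_zero t).hasDerivAt).deriv
  have e := hu.1.continuous_deriv le_rfl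
  have e' := hv.1.continuous_deriv le_rfl
  refine gD_of 0 (hu.1.add hv.1) ?_ ?_
  · refine Integrable.mono' ((hu.2.1.const_mul 2).add (hv.2.1.const_mul 2)) (by fun_prop)
      (Eventually.of_forall fun t => ?_)
    rw [Real.norm_of_nonneg (by positivity)]
    exact norm_add_le2 _ _
  · rw [hd]
    refine Integrable.mono' (((hu.2.2 0).const_mul 2).add ((hv.2.2 0).const_mul 2)) (by fun_prop)
      (Eventually.of_forall fun t => ?_)
    rw [Real.norm_of_nonneg (by positivity)]
    have h1 := norm_add_le2 (u t) (v t)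
    have h2 := norm_add_le2 (deriv u t) (deriv v t)
    have h3 := mul_le_mul_of_nonneg_left h1 (sq_nonneg (t + 0))
    simp only [Pi.add_apply]
    linarith

lemma gN_exp {u v : ℝ → ℂ} (hu : gD u) (hv : gD v) :
    ∃ g : ℝ, ∀ ε : ℝ, gN (fun t => u t + (ε:ℂ) * v t) = gN u + 2 * ε * g + ε ^ 2 * gN v := by
  have i := (gD_add hu hv).2.1
  refine ⟨(∫ t in Ioi (0:ℝ), (‖u t + v t‖ ^ 2 - ‖u t‖ ^ 2 - ‖v t‖ ^ 2)) / 2, fun ε => ?_⟩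
  have i1 : IntegrableOn (fun t => ‖u t + v t‖ ^ 2 - ‖u t‖ ^ 2 - ‖v t‖ ^ 2) (Ioi 0) :=
    (i.sub hu.2.1).sub hv.2.1
  have i2 : IntegrableOn (fun t => ‖u t‖ ^ 2 + ε * (‖u t + v t‖ ^ 2 - ‖u t‖ ^ 2 - ‖v t‖ ^ 2)) (Ioi 0) :=
    hu.2.1.add (i1.const_mul ε)
  have : 2 * ε * ((∫ t in Ioi (0:ℝ), (‖u t + v t‖ ^ 2 - ‖u t‖ ^ 2 - ‖v t‖ ^ 2)) / 2) =
    ε * (∫ t in Ioi (0:ℝ), (‖u t + v t‖ ^ 2 - ‖u t‖ ^ 2 - ‖v t‖ ^ 2)) := by ring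
  rw [this]
  unfold gN
  rw [← integral_const_mul, ← integral_const_mul, ← integral_add hu.2.1 (i1.const_mul _),
    ← integral_add i2 (hv.2.1.const_mul _)]
  congr 1; funext t; exact norm_exp _ _ _

lemma gF_exp (ξ : ℝ) {u v : ℝ → ℂ} (hu : gD u) (hv : gD v) :
    ∃ g : ℝ, ∀ ε : ℝ, gF ξ (fun t => u t + (ε:ℂ) * v t) = gF ξ u + 2 * ε * g + ε ^ 2 * gF ξ v := by
  have i := (gD_add hu hv).2.2 ξ
  have hd : ∀ ε : ℝ, deriv (fun t => u t + (ε:ℂ) * v t) = fun t => deriv u t + (ε:ℂ) * deriv v t := by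
    intro ε
    funext t
    exact ((hu.1.differentiable one_ne_zero t).hasDerivAt.add
      ((hv.1.differentiable one_ne_zero t).hasDerivAt.const_mul (ε:ℂ))).deriv
  have hd1 := hd 1
  simp only [Complex.ofReal_one, one_mul] at hd1
  rw [hd1] at i
  set U := fun t => ‖deriv u t‖ ^ 2 + (t + ξ) ^ 2 * ‖u t‖ ^ 2 with hU
  set V := fun t => ‖deriv v t‖ ^ 2 + (t + ξ) ^ 2 * ‖v t‖ ^ 2 with hV
  set UV := fun t => ‖deriv u t + deriv v t‖ ^ 2 + (t + ξ) ^ 2 * ‖u t + v t‖ ^ 2 with hUV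
  have iu : IntegrableOn U (Ioi 0) := hu.2.2 ξ
  have iv : IntegrableOn V (Ioi 0) := hv.2.2 ξ
  refine ⟨(∫ t in Ioi (0:ℝ), (UV t - U t - V t)) / 2, fun ε => ?_⟩
  have i1 : IntegrableOn (fun t => UV t - U t - V t) (Ioi 0) := (i.sub iu).sub iv
  have i2 : IntegrableOn (fun t => U t + ε * (UV t - U t - V t)) (Ioi 0) :=
    iu.add (i1.const_mul ε)
  have : 2 * ε * ((∫ t in Ioi (0:ℝ), (UV t - U t - V t)) / 2) =
    ε * (∫ t in Ioi (0:ℝ), (UV t - U t - V t)) := by ring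
  rw [this]
  change _ = (∫ t in Ioi (0:ℝ), U t) + _ + _ * ∫ t in Ioi (0:ℝ), V t
  unfold gF
  rw [hd, ← integral_const_mul, ← integral_const_mul, ← integral_add iu (i1.const_mul _),
    ← integral_add i2 (iv.const_mul _)]
  congr 1; funext t
  simp only [hU, hV, hUV]
  rw [norm_exp, norm_exp]; ring

lemma poincare {v : ℝ → ℂ} (hv : gD v) {a : ℝ} (ha : 0 < a) (hva : v a = 0) :
    ∫ t in Ioc 0 a, ‖v t‖ ^ 2 ≤ a ^ 2 * ∫ t in Ioc 0 a, ‖deriv v t‖ ^ 2 := by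
  have hc : Continuous (deriv v) := hv.1.continuous_deriv le_rfl
  have hcv : Continuous v := hv.1.continuous
  set I := ∫ t in Ioc 0 a, ‖deriv v t‖ ^ 2 with hI
  have pt : ∀ t ∈ Ioc 0 a, ‖v t‖ ^ 2 ≤ a * I := by
    intro t ht
    have h1 : ∫ y in t..a, deriv v y = v a - v t :=
      intervalIntegral.integral_eq_sub_of_hasDerivAt
        (fun x _ => (hv.1.differentiable one_ne_zero x).hasDerivAt) (hc.intervalIntegrable _ _)
    have h2 : ‖v t‖ ≤ ∫ y in t..a, ‖deriv v y‖ := by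
      have := intervalIntegral.norm_integral_le_integral_norm (f := deriv v) (μ := volume) ht.2
      rwa [h1, hva, zero_sub, norm_neg] at this
    set S := ∫ y in t..a, ‖deriv v y‖ with hS
    have hSq : ∫ y in t..a, ‖deriv v y‖ ^ 2 ≤ I := by
      rw [intervalIntegral.integral_of_le ht.2]
      refine setIntegral_mono_set ?_ (Eventually.of_forall fun t => by positivity)
        (Eventually.of_forall (Ioc_subset_Ioc_left ht.1.le))
      exact (show Continuous fun t => ‖deriv v t‖ ^ 2 by fun_prop).integrableOn_Ioc
    have h3 : 0 ≤ ∫ y in t..a, (‖deriv v y‖ - S / a) ^ 2 :=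
      intervalIntegral.integral_nonneg ht.2 fun y _ => sq_nonneg _
    have h4 : ∫ y in t..a, (‖deriv v y‖ - S / a) ^ 2 =
        (∫ y in t..a, ‖deriv v y‖ ^ 2) - 2 * (S / a) * S + (a - t) * (S / a) ^ 2 := by
      have : (fun y => (‖deriv v y‖ - S / a) ^ 2) =
        fun y => (‖deriv v y‖ ^ 2 - 2 * (S / a) * ‖deriv v y‖) + (S / a) ^ 2 := by
        funext y; ring
      rw [this, intervalIntegral.integral_add, intervalIntegral.integral_sub,
        intervalIntegral.integral_const_mul, intervalIntegral.integral_const, smul_eq_mul]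
      all_goals exact (Continuous.intervalIntegrable (by fun_prop) _ _)
    have h5 : (a - t) * (S / a) ^ 2 ≤ a * (S / a) ^ 2 := by
      have := ht.1
      gcongr; linarith
    have h6 : a * (S / a) ^ 2 = (S / a) * S := by field_simp
    have h7 : (S / a) * S ≤ I := by nlinarith
    have h8 : ‖v t‖ ^ 2 ≤ S ^ 2 := by gcongr
    have h9 : S ^ 2 = a * ((S / a) * S) := by field_simp
    rw [h9] at h8
    exact h8.trans (by gcongr)
  calc ∫ t in Ioc 0 a, ‖v t‖ ^ 2 ≤ ∫ t in Ioc 0 a, a * I := by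
        refine setIntegral_mono_on ?_ ?_ measurableSet_Ioc pt
        · exact (show Continuous fun t => ‖v t‖ ^ 2 by fun_prop).integrableOn_Ioc
        · exact continuous_const.integrableOn_Ioc
    _ = a ^ 2 * I := by simp [ha.le]; ring

lemma gap (ξ₀ : ℝ) (hξ₀ : deGennes ξ₀ = Theta0)
    (hξ₀uniq : ∀ ξ : ℝ, deGennes ξ = Theta0 → ξ = ξ₀) :
    ∃ a c : ℝ, 0 < a ∧ 0 < c ∧ ∀ v, gD v → v a = 0 → (Theta0 + c) * gN v ≤ gF ξ₀ v := by
  have hT := Theta0_nonneg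
  set a := (Theta0 + 1)⁻¹ with ha
  have ha0 : 0 < a := by positivity
  have ha1 : a ^ 2 * (Theta0 + 1) ≤ 1 := by
    have : a * (Theta0 + 1) = 1 := inv_mul_cancel₀ (by positivity)
    have h2 : a ≤ 1 := inv_le_one_of_one_le₀ (by linarith)
    nlinarith
  have hlt : Theta0 < deGennes (ξ₀ + a) := by
    refine lt_of_le_of_ne (Theta0_le _) fun h => ?_
    have := hξ₀uniq _ h.symm
    linarith
  refine ⟨a, min 1 (deGennes (ξ₀ + a) - Theta0), ha0, lt_min one_pos (by linarith), fun v hv hva => ?_⟩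
  set c := min 1 (deGennes (ξ₀ + a) - Theta0)
  have hc1 : c ≤ 1 := min_le_left _ _
  have hc2 : Theta0 + c ≤ deGennes (ξ₀ + a) := by
    have : c ≤ deGennes (ξ₀ + a) - Theta0 := min_le_right _ _
    linarith
  have hdc : Continuous (deriv v) := hv.1.continuous_deriv le_rfl
  have hcv : Continuous v := hv.1.continuous
  have hun : Ioi (0:ℝ) = Ioc 0 a ∪ Ioi a := (Ioc_union_Ioi_eq_Ioi ha0.le).symm
  have hdis : Disjoint (Ioc (0:ℝ) a) (Ioi a) := by
    rw [Set.disjoint_left]; intro x hx hx'; exact absurd hx.2 (not_le.2 hx')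
  have sub2 : Ioi a ⊆ Ioi (0:ℝ) := Ioi_subset_Ioi ha0.le
  have n1 : gN v = (∫ t in Ioc 0 a, ‖v t‖ ^ 2) + ∫ t in Ioi a, ‖v t‖ ^ 2 := by
    unfold gN
    rw [hun, setIntegral_union hdis measurableSet_Ioi
      (hv.2.1.mono_set Ioc_subset_Ioi_self) (hv.2.1.mono_set sub2)]
  have f1 : gF ξ₀ v = (∫ t in Ioc 0 a, (‖deriv v t‖ ^ 2 + (t + ξ₀) ^ 2 * ‖v t‖ ^ 2)) +
      ∫ t in Ioi a, (‖deriv v t‖ ^ 2 + (t + ξ₀) ^ 2 * ‖v t‖ ^ 2) := by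
    unfold gF
    rw [hun, setIntegral_union hdis measurableSet_Ioi
      ((hv.2.2 ξ₀).mono_set Ioc_subset_Ioi_self) ((hv.2.2 ξ₀).mono_set sub2)]
  have p1 : (Theta0 + c) * (∫ t in Ioc 0 a, ‖v t‖ ^ 2) ≤
      ∫ t in Ioc 0 a, (‖deriv v t‖ ^ 2 + (t + ξ₀) ^ 2 * ‖v t‖ ^ 2) := by
    have h1 := poincare hv ha0 hva
    have h2 : ∫ t in Ioc 0 a, ‖deriv v t‖ ^ 2 ≤
        ∫ t in Ioc 0 a, (‖deriv v t‖ ^ 2 + (t + ξ₀) ^ 2 * ‖v t‖ ^ 2) := by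
      refine setIntegral_mono_on (hv.d_int.mono_set Ioc_subset_Ioi_self)
        ((hv.2.2 ξ₀).mono_set Ioc_subset_Ioi_self) measurableSet_Ioc fun t _ => ?_
      have : 0 ≤ (t + ξ₀) ^ 2 * ‖v t‖ ^ 2 := by positivity
      linarith
    have h3 : 0 ≤ ∫ t in Ioc 0 a, ‖v t‖ ^ 2 := integral_nonneg fun t => by positivity
    have h4 : 0 ≤ ∫ t in Ioc 0 a, ‖deriv v t‖ ^ 2 := integral_nonneg fun t => by positivity
    refine le_trans ?_ h2
    calc _ ≤ (Theta0 + 1) * (∫ t in Ioc 0 a, ‖v t‖ ^ 2) := by gcongr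
      _ ≤ (Theta0 + 1) * (a ^ 2 * ∫ t in Ioc 0 a, ‖deriv v t‖ ^ 2) := by gcongr
      _ = (a ^ 2 * (Theta0 + 1)) * ∫ t in Ioc 0 a, ‖deriv v t‖ ^ 2 := by ring
      _ ≤ 1 * ∫ t in Ioc 0 a, ‖deriv v t‖ ^ 2 := by gcongr
      _ = _ := one_mul _
  have tr : ∀ f : ℝ → ℝ, ∫ t in Ioi (0:ℝ), f (t + a) = ∫ t in Ioi a, f t := by
    intro f
    have := (measurePreserving_add_right volume a).setIntegral_preimage_emb
      (measurableEmbedding_addRight a) f (Ioi a)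
    rw [← this]
    congr 2
    ext x; simp
  have trI : ∀ f : ℝ → ℝ, IntegrableOn f (Ioi a) → IntegrableOn (fun t => f (t + a)) (Ioi 0) := by
    intro f hf
    have := ((measurePreserving_add_right volume a).integrableOn_comp_preimage
      (measurableEmbedding_addRight a) (f := f) (s := Ioi a)).2 hf
    have e : (fun x : ℝ => x + a) ⁻¹' Ioi a = Ioi 0 := by ext x; simp
    rw [e] at this
    exact this
  have hw : gD (fun t => v (t + a)) := by
    refine gD_of (ξ₀ + a) (hv.1.comp (contDiff_id.add contDiff_const)) ?_ ?_
    · exact trI (fun t => ‖v t‖ ^ 2) (hv.2.1.mono_set sub2)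
    · have := trI (fun t => ‖deriv v t‖ ^ 2 + (t + ξ₀) ^ 2 * ‖v t‖ ^ 2) ((hv.2.2 ξ₀).mono_set sub2)
      refine this.congr (Eventually.of_forall fun t => ?_)
      simp only [deriv_comp_add_const]
      ring
  have p2 : (Theta0 + c) * (∫ t in Ioi a, ‖v t‖ ^ 2) ≤
      ∫ t in Ioi a, (‖deriv v t‖ ^ 2 + (t + ξ₀) ^ 2 * ‖v t‖ ^ 2) := by
    have h := deGennes_le (ξ₀ + a) hw
    have e1 : gN (fun t => v (t + a)) = ∫ t in Ioi a, ‖v t‖ ^ 2 := tr (fun t => ‖v t‖ ^ 2)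
    have e2 : gF (ξ₀ + a) (fun t => v (t + a)) =
        ∫ t in Ioi a, (‖deriv v t‖ ^ 2 + (t + ξ₀) ^ 2 * ‖v t‖ ^ 2) := by
      rw [← tr (fun t => ‖deriv v t‖ ^ 2 + (t + ξ₀) ^ 2 * ‖v t‖ ^ 2)]
      unfold gF
      congr 1; funext t; simp only [deriv_comp_add_const]; ring
    rw [e1, e2] at h
    refine le_trans ?_ h
    have h3 : 0 ≤ ∫ t in Ioi a, ‖v t‖ ^ 2 := integral_nonneg fun t => by positivity
    gcongr
  rw [n1, f1, mul_add]
  exact add_le_add p1 p2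

lemma quad_cs {p q r : ℝ} (h : ∀ ε : ℝ, 0 ≤ p + 2 * ε * q + ε ^ 2 * r) : q ^ 2 ≤ p * r := by
  have := discrim_le_zero (a := r) (b := 2 * q) (c := p) (fun x => by have := h x; nlinarith)
  unfold discrim at this
  nlinarith

set_option maxHeartbeats 4000000 in
lemma realLem (μ c δ : ℝ) (hμ : 0 ≤ μ) (hc : 0 < c) (hδ : 0 < δ) (L : ℝ → ℝ)
    (hL : ∀ σ, μ ≤ L σ)
    (hexp : ∀ κ > 0, ∃ r > 0, ∀ σ, |σ| < r → μ + (δ - κ) * σ ^ 2 ≤ L σ) :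
    ∃ C s₀ : ℝ, 0 < C ∧ 0 < s₀ ∧ ∀ s, s ≠ 0 → |s| < s₀ → ∀ κ > 0, ∃ η > 0,
      ∀ A0 b A1 W0 k W1 g G1 : ℝ, 0 ≤ A1 → 0 ≤ G1 → A0 ≤ μ + η → (μ + c) * G1 ≤ A1 →
      (∀ ε : ℝ, 0 ≤ 1 + 2 * ε * g + ε ^ 2 * G1) →
      (∀ ε : ℝ, |W0 + 2 * ε * k + ε ^ 2 * W1| ≤
        (A0 + 2 * ε * b + ε ^ 2 * A1) + (1 + 2 * ε * g + ε ^ 2 * G1)) →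
      |W1| ≤ A1 + G1 →
      (∀ ε σ : ℝ, L σ * (1 + 2 * ε * g + ε ^ 2 * G1) ≤
        (A0 + 2 * ε * b + ε ^ 2 * A1) + σ * (W0 + 2 * ε * k + ε ^ 2 * W1)
          + σ ^ 2 * (1 + 2 * ε * g + ε ^ 2 * G1)) →
      (μ + δ * s ^ 2 - C * |s| ^ 3 - κ) * (1 + 2 * g + G1) ≤
        (A0 + 2 * b + A1) + s * (W0 + 2 * k + W1) + s ^ 2 * (1 + 2 * g + G1) := by
  set c' := c / (μ + c + 1) with hc'
  have hc'0 : 0 < c' := by positivity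
  have hc'1 : c' * (μ + c + 1) = c := by rw [hc']; field_simp
  set K := μ + 2 with hK
  set C2 := 4 * (2 * δ + 16 * K / c' + 4) / c' with hC2
  have hC20 : 0 < C2 := by positivity
  set R2 := Real.sqrt C2 with hR2
  have hR20 : 0 < R2 := Real.sqrt_pos.2 hC20
  have hR2s : R2 ^ 2 = C2 := Real.sq_sqrt hC20.le
  set C3 := 2 * R2 + C2 with hC3
  refine ⟨2 * ((δ + 2) * C3 + 2 * C2), min (min 1 (c' / 16)) (min (c' / (32 * δ)) (1 / (4 * R2))),
    by positivity, by positivity, ?_⟩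
  intro s hs0 hs κ hκ
  have hs1 : |s| ≤ 1 := hs.le.trans ((min_le_left _ _).trans (min_le_left _ _))
  have hs2 : |s| ≤ c' / 16 := hs.le.trans ((min_le_left _ _).trans (min_le_right _ _))
  have hs3 : |s| ≤ c' / (32 * δ) := hs.le.trans ((min_le_right _ _).trans (min_le_left _ _))
  have hs4 : |s| ≤ 1 / (4 * R2) := hs.le.trans ((min_le_right _ _).trans (min_le_right _ _))
  have hsp : 0 < |s| := abs_pos.2 hs0
  have hss : s ^ 2 = |s| ^ 2 := (sq_abs s).symm
  have hs3' : 32 * δ * |s| ≤ c' := by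
    rw [le_div_iff₀ (by positivity)] at hs3; linarith
  have hs4' : 4 * R2 * |s| ≤ 1 := by
    rw [le_div_iff₀ (by positivity)] at hs4; linarith
  have hss1 : s ^ 2 ≤ |s| := by rw [hss, sq]; exact mul_le_of_le_one_left hsp.le hs1
  have hsq1 : s ^ 2 ≤ 1 := hss1.trans hs1
  obtain ⟨r, hr, hrL⟩ := hexp (min 1 (κ / 2)) (by positivity)
  set κ₁ := min 1 (κ / 2) with hκ₁
  have hκ₁0 : 0 < κ₁ := by positivity
  have hκ₁1 : κ₁ ≤ 1 := min_le_left _ _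
  have hκ₁2 : κ₁ ≤ κ / 2 := min_le_right _ _
  set ε := min 1 (r / 2) with hε
  have hε0 : 0 < ε := by positivity
  have hε1 : ε ≤ 1 := min_le_left _ _
  have hε2 : ε ≤ r / 2 := min_le_right _ _
  set T := (2 * R2 + 2) * (1 + 1 / ε) + 1 / ε ^ 2 with hT
  have hT0 : 0 < T := by positivity
  set e := min |s| (κ / (4 * T)) with he
  have he0 : 0 < e := by positivity
  have he1 : e ≤ |s| := min_le_left _ _
  have he2 : e * T ≤ κ / 4 := by
    have : e ≤ κ / (4 * T) := min_le_right _ _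
    rw [le_div_iff₀ (by positivity)] at this; linarith
  refine ⟨e ^ 2, by positivity, ?_⟩
  intro A0 b A1 W0 k W1 g G1 hA1 hG1 hA0 hgap hG hW hW1 hQ
  set q0 := A0 - μ with hq0
  set q1 := A1 - μ * G1 with hq1
  set β := b - μ * g with hβ
  set n1 := A1 + G1 with hn1
  have hn10 : 0 ≤ n1 := by positivity
  have he21 : e ^ 2 ≤ s ^ 2 := by rw [hss]; gcongr
  have hq0e : q0 ≤ e ^ 2 := by linarith
  have hq1n : c' * n1 ≤ q1 := by
    have h1 : (1 - c') * (A1 - (μ + c) * G1) ≥ 0 := by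
      apply mul_nonneg _ (by linarith)
      have : c' ≤ 1 := by rw [hc', div_le_one (by positivity)]; linarith
      linarith
    have h2 : c' * (μ + c + 1) * G1 = c * G1 := by rw [hc'1]
    rw [hn1, hq1]; linarith
  have hq1n' : q1 ≤ n1 := by rw [hn1, hq1]; linarith [mul_nonneg hμ hG1]
  have hq10 : 0 ≤ q1 := le_trans (by positivity) hq1n
  -- positivity of Q_0
  have hQ0 : ∀ x : ℝ, 0 ≤ q0 + 2 * x * β + x ^ 2 * q1 := by
    intro x
    have h1 := hQ x 0
    have h2 := mul_le_mul_of_nonneg_right (hL 0) (hG x)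
    rw [hq0, hβ, hq1]; linarith
  have hβ2 : β ^ 2 ≤ q0 * q1 := quad_cs hQ0
  have hq00 : 0 ≤ q0 := by simpa using hQ0 0
  have hW0 : |W0| ≤ 2 * e := by
    have h1 : ∀ x : ℝ, 0 ≤ q0 + 2 * x * (W0 / 2) + x ^ 2 * 1 := by
      intro x
      have h1 := hQ 0 x
      have h2 := hL x
      rw [hq0]; linarith
    have h2 := quad_cs h1
    apply abs_le_of_sq_le_sq _ (by positivity)
    linarith
  have hg2 : g ^ 2 ≤ n1 := by
    have := quad_cs hG
    rw [hn1]; linarith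
  have hk2 : k ^ 2 ≤ 2 * K * n1 := by
    have h1 := quad_cs (p := A0 + 1 + W0) (q := b + g + k) (r := n1 + W1)
      (fun x => by have := neg_le_of_abs_le (hW x); rw [hn1]; linarith)
    have h2 := quad_cs (p := A0 + 1 - W0) (q := b + g - k) (r := n1 - W1)
      (fun x => by have := le_of_abs_le (hW x); rw [hn1]; linarith)
    have h3 : |W0| ≤ A0 + 1 := by simpa using hW 0
    have h4 : W0 * W1 ≤ (A0 + 1) * n1 := by
      refine (le_abs_self _).trans ?_
      rw [abs_mul]; gcongr
      exact (abs_nonneg _).trans h3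
    have h5 : (A0 + 1) * n1 ≤ K * n1 := by
      gcongr
      have : e ^ 2 ≤ 1 := pow_le_one₀ he0.le (he1.trans hs1)
      linarith
    linarith [sq_nonneg (b + g)]
  set Gs := 1 + 2 * g + G1 with hGs
  have hGs2 : Gs ≤ 2 + 2 * n1 := by
    have : G1 ≤ n1 := by rw [hn1]; linarith
    rw [hGs]; linarith [sq_nonneg (g - 1)]
  have hGs0 : 0 ≤ Gs := by have := hG 1; rw [hGs]; linarith
  set Q := q0 + 2 * β + q1 + s * (W0 + 2 * k + W1) + s ^ 2 * Gs with hQdef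
  suffices h : (δ * s ^ 2 - 2 * ((δ + 2) * C3 + 2 * C2) * |s| ^ 3 - κ) * Gs ≤ Q by
    rw [hQdef, hq0, hβ, hq1] at h
    have : μ * Gs = μ + 2 * (μ * g) + μ * G1 := by rw [hGs]; ring
    linarith
  by_contra hcon
  push Not at hcon
  have hsW0 : |s * W0| ≤ 2 * s ^ 2 := by
    rw [abs_mul, hss]
    have := mul_le_mul_of_nonneg_left hW0 hsp.le
    have h2 := mul_le_mul_of_nonneg_left he1 hsp.le
    linarith
  have hsW1 : |s * W1| ≤ |s| * n1 := by
    rw [abs_mul]; gcongr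
  -- step 1
  have hn1b : n1 ≤ C2 * s ^ 2 := by
    have h1 : Q < δ * s ^ 2 * (2 + 2 * n1) := by
      refine hcon.trans_le ?_
      calc _ ≤ δ * s ^ 2 * Gs := by
            apply mul_le_mul_of_nonneg_right _ hGs0
            have : 0 ≤ 2 * ((δ + 2) * C3 + 2 * C2) * |s| ^ 3 := by positivity
            linarith
        _ ≤ _ := by gcongr
    have h2 : -(q1 / 2) - 2 * e ^ 2 ≤ 2 * β := by
      have : |β| ≤ q1 / 4 + e ^ 2 := by
        apply abs_le_of_sq_le_sq _ (by positivity)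
        linarith [sq_nonneg (q1 / 4 - e ^ 2), mul_le_mul_of_nonneg_right hq0e hq10]
      linarith [neg_le_of_abs_le this]
    have h3 : -(c' * n1 / 8) - 16 * K / c' * s ^ 2 ≤ 2 * s * k := by
      have hK0 : 0 < K := by positivity
      have e1 : 0 ≤ (c' * k + 16 * K * s) ^ 2 := sq_nonneg _
      have e2 : c' ^ 2 * k ^ 2 ≤ c' ^ 2 * (2 * K * n1) := by gcongr
      have e3 : 0 ≤ 16 * K * c' * (c' * n1 / 8 + 16 * K / c' * s ^ 2 + 2 * s * k) := by
        have : 16 * K * c' * (c' * n1 / 8 + 16 * K / c' * s ^ 2 + 2 * s * k) =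
          c' ^ 2 * (2 * K * n1) + 256 * K ^ 2 * s ^ 2 + 32 * K * c' * s * k := by
          field_simp; ring
        rw [this]; linarith
      have := nonneg_of_mul_nonneg_right e3 (by positivity)
      linarith
    have h4 := neg_le_of_abs_le hsW0
    have h5 := neg_le_of_abs_le hsW1
    have h6 : |s| * n1 ≤ c' / 16 * n1 := by gcongr
    have h7 : δ * s ^ 2 * (2 * n1) ≤ c' / 16 * n1 := by
      have : δ * s ^ 2 * 2 ≤ c' / 16 := by linarith [mul_le_mul_of_nonneg_left hss1 hδ.le]
      linarith [mul_le_mul_of_nonneg_right this hn10]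
    have h8 : 0 ≤ s ^ 2 * Gs := by positivity
    have h9 : n1 * (c' / 4) ≤ s ^ 2 * (2 * δ + 16 * K / c' + 4) := by
      rw [hQdef] at h1
      linarith
    rw [hC2]
    have : 4 * (2 * δ + 16 * K / c' + 4) / c' * s ^ 2 =
      (s ^ 2 * (2 * δ + 16 * K / c' + 4)) / (c' / 4) := by field_simp
    rw [this, le_div_iff₀ (by positivity)]
    exact h9
  -- step 2
  have hR2n : n1 ≤ (R2 * |s|) ^ 2 := by rw [mul_pow, hR2s, ← hss]; exact hn1b
  have hgb : |g| ≤ R2 * |s| := abs_le_of_sq_le_sq (hg2.trans hR2n) (by positivity)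
  have hGhalf : 1 / 2 ≤ Gs := by
    have := neg_le_of_abs_le hgb
    rw [hGs]; linarith
  have hβe : |β| ≤ e * R2 := by
    apply abs_le_of_sq_le_sq _ (by positivity)
    calc β ^ 2 ≤ q0 * q1 := hβ2
      _ ≤ e ^ 2 * n1 := by gcongr
      _ ≤ e ^ 2 * (R2 * |s|) ^ 2 := by gcongr
      _ ≤ e ^ 2 * (R2 * 1) ^ 2 := by gcongr
      _ = _ := by ring
  set Gε := 1 + 2 * ε * g + ε ^ 2 * G1 with hGε
  have hGdiff : |Gε - Gs| ≤ C3 * |s| := by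
    have : Gε - Gs = -((1 - ε) * (2 * g) + (1 - ε ^ 2) * G1) := by rw [hGε, hGs]; ring
    rw [this, abs_neg]
    have hG1n : G1 ≤ C2 * |s| := by
      have : G1 ≤ n1 := by rw [hn1]; linarith
      have : C2 * s ^ 2 ≤ C2 * |s| := by gcongr
      linarith
    calc _ ≤ |(1 - ε) * (2 * g)| + |(1 - ε ^ 2) * G1| := abs_add_le _ _
      _ = (1 - ε) * (2 * |g|) + (1 - ε ^ 2) * G1 := by
          rw [abs_mul, abs_mul, abs_mul, abs_of_nonneg (show 0 ≤ 1 - ε by linarith),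
            abs_of_nonneg (show 0 ≤ 1 - ε ^ 2 from sub_nonneg.2 (pow_le_one₀ hε0.le hε1)), abs_of_nonneg hG1, abs_two]
      _ ≤ 1 * (2 * |g|) + 1 * G1 := by
          gcongr
          · linarith
          · linarith [sq_nonneg ε]
      _ ≤ C3 * |s| := by rw [hC3]; linarith
  have hmain : (δ - 1 - κ₁) * s ^ 2 * Gε ≤ q1 + 2 * s * k + ε * (s * W1)
      + (q0 / ε ^ 2 + 2 * β / ε + s * W0 / ε) := by
    have h1 := hQ ε (ε * s)
    have h2 := hrL (ε * s) (by
      rw [abs_mul, abs_of_pos hε0]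
      have : ε * |s| ≤ ε * 1 := by gcongr
      linarith)
    have h3 := mul_le_mul_of_nonneg_right h2 (hG ε)
    have h4 : (δ - κ₁) * (ε * s) ^ 2 * Gε ≤ q0 + 2 * ε * β + ε ^ 2 * q1
        + ε * s * (W0 + 2 * ε * k + ε ^ 2 * W1) + (ε * s) ^ 2 * Gε := by
      have : μ * Gε = μ + 2 * ε * (μ * g) + ε ^ 2 * (μ * G1) := by rw [hGε]; ring
      rw [hq0, hβ, hq1]; linarith
    have h5 : ε ^ 2 * (q1 + 2 * s * k + ε * (s * W1) + (q0 / ε ^ 2 + 2 * β / ε + s * W0 / ε))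
        = q0 + 2 * ε * β + ε ^ 2 * q1 + ε * s * (W0 + 2 * ε * k + ε ^ 2 * W1) := by
      field_simp; ring
    have h6 : ε ^ 2 * ((δ - 1 - κ₁) * s ^ 2 * Gε) ≤
        ε ^ 2 * (q1 + 2 * s * k + ε * (s * W1) + (q0 / ε ^ 2 + 2 * β / ε + s * W0 / ε)) := by
      rw [h5]; linarith
    exact le_of_mul_le_mul_left h6 (by positivity)
  -- remainder
  have hsW0' : |s * W0| ≤ 2 * e := by
    rw [abs_mul]
    calc |s| * |W0| ≤ 1 * (2 * e) := by gcongr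
      _ = _ := one_mul _
  have hstuff : q0 / ε ^ 2 + 2 * β / ε + s * W0 / ε - 2 * β - s * W0 ≤ κ / 4 := by
    have a1 : q0 / ε ^ 2 ≤ e * (1 / ε ^ 2) := by
      rw [div_eq_mul_one_div]; gcongr
      have : e ^ 2 ≤ e := by rw [sq]; exact mul_le_of_le_one_left he0.le (he1.trans hs1)
      linarith
    have a2 : 2 * β / ε ≤ 2 * (e * R2) * (1 / ε) := by
      rw [div_eq_mul_one_div]; gcongr; exact le_of_abs_le hβe
    have a3 : s * W0 / ε ≤ 2 * e * (1 / ε) := by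
      rw [div_eq_mul_one_div]
      exact mul_le_mul_of_nonneg_right (le_of_abs_le hsW0') (by positivity)
    have a4 := neg_le_of_abs_le hβe
    have a5 := neg_le_of_abs_le hsW0'
    have : e * T = e * (1 / ε ^ 2) + 2 * (e * R2) * (1 / ε) + 2 * e * (1 / ε) + 2 * (e * R2) + 2 * e := by
      rw [hT]; ring
    linarith
  have hW1' : -(2 * (C2 * |s| ^ 3)) ≤ s * W1 - ε * (s * W1) := by
    have h1 : |s| * n1 ≤ C2 * |s| ^ 3 := by
      have : |s| * n1 ≤ |s| * (C2 * s ^ 2) := by gcongr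
      rw [hss] at this
      linarith
    have h2 := neg_le_of_abs_le hsW1
    have h3 := le_of_abs_le hsW1
    have h4 : 0 ≤ |s| * n1 := by positivity
    have h5 := mul_le_mul_of_nonneg_left h2 (show 0 ≤ 1 - ε by linarith)
    have h6 := mul_nonneg hε0.le h4
    linarith
  have hGG : -((δ + 2) * C3 * |s| ^ 3) ≤ (δ - 1 - κ₁) * s ^ 2 * (Gε - Gs) := by
    apply neg_le_of_abs_le
    rw [abs_mul, abs_mul, abs_of_nonneg (sq_nonneg s), hss]
    have : |δ - 1 - κ₁| ≤ δ + 2 := by rw [abs_le]; constructor <;> linarith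
    calc _ ≤ (δ + 2) * |s| ^ 2 * (C3 * |s|) := by gcongr
      _ = _ := by ring
  have hC30 : 0 ≤ C3 := by positivity
  have hfin : (δ - κ₁) * s ^ 2 * Gs - ((δ + 2) * C3 + 2 * C2) * |s| ^ 3 - κ / 4 ≤ Q := by
    rw [hQdef]; linarith
  have f1 : κ₁ * s ^ 2 * Gs ≤ κ / 2 * Gs := by
    apply mul_le_mul_of_nonneg_right _ hGs0
    linarith [mul_le_mul_of_nonneg_left hsq1 hκ₁0.le]
  have f2 : ((δ + 2) * C3 + 2 * C2) * |s| ^ 3 ≤ (2 * ((δ + 2) * C3 + 2 * C2) * |s| ^ 3) * Gs := by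
    have : 0 ≤ ((δ + 2) * C3 + 2 * C2) * |s| ^ 3 := by positivity
    linarith [mul_le_mul_of_nonneg_left hGhalf this]
  have f3 : κ / 4 ≤ κ / 2 * Gs := by linarith [mul_le_mul_of_nonneg_left hGhalf hκ.le]
  linarith

/-- lower Taylor expansion from a nonzero second derivative at the minimum -/
lemma taylor_lower (f : ℝ → ℝ) (hf : Continuous f) (x₀ δ : ℝ) (hmin : ∀ x, f x₀ ≤ f x)
    (hδ0 : 0 < δ) (hδ : δ = (1 / 2) * iteratedDeriv 2 f x₀) (κ : ℝ) (hκ : 0 < κ) :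
    ∃ r > 0, ∀ σ, |σ| < r → f x₀ + (δ - κ) * σ ^ 2 ≤ f (x₀ + σ) := by
  wlog hκδ : κ < δ with H
  · obtain ⟨r, hr, h⟩ := H f hf x₀ δ hmin hδ0 hδ (δ / 2) (by positivity) (by linarith)
    refine ⟨r, hr, fun σ hσ => le_trans ?_ (h σ hσ)⟩
    have : (δ - κ) * σ ^ 2 ≤ (δ - δ / 2) * σ ^ 2 := by gcongr; linarith
    linarith
  have h2 : iteratedDeriv 2 f x₀ = deriv (deriv f) x₀ := by
    rw [iteratedDeriv_succ, iteratedDeriv_one]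
  have hd2 : deriv (deriv f) x₀ = 2 * δ := by rw [← h2]; linarith
  have hd1 : deriv f x₀ = 0 :=
    IsLocalMin.deriv_eq_zero (Eventually.of_forall hmin)
  have hdd : DifferentiableAt ℝ (deriv f) x₀ := by
    by_contra h
    rw [deriv_zero_of_not_differentiableAt h] at hd2
    linarith
  have hhas := hdd.hasDerivAt
  rw [hd2, hasDerivAt_iff_isLittleO, Asymptotics.isLittleO_iff] at hhas
  have := hhas (show 0 < 2 * κ by positivity)
  rw [Metric.eventually_nhds_iff] at this
  obtain ⟨r, hr, h⟩ := this
  have hder : ∀ x, |x - x₀| < r → |deriv f x - 2 * δ * (x - x₀)| ≤ 2 * κ * |x - x₀| := by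
    intro x hx
    have := h (y := x) (by rwa [Real.dist_eq])
    rw [hd1, smul_eq_mul, Real.norm_eq_abs, Real.norm_eq_abs] at this
    rwa [sub_zero, mul_comm (x - x₀)] at this
  have hdiff : ∀ x, |x - x₀| < r → x ≠ x₀ → DifferentiableAt ℝ f x := by
    intro x hx hne
    by_contra hnd
    have h1 := hder x hx
    rw [deriv_zero_of_not_differentiableAt hnd, zero_sub, abs_neg, abs_mul, abs_of_pos (by positivity)] at h1
    have h2 : 0 < |x - x₀| := abs_pos.2 (sub_ne_zero.2 hne)
    nlinarith
  refine ⟨r, hr, fun σ hσ => ?_⟩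
  rcases lt_trichotomy σ 0 with hs | hs | hs
  · have := antitoneOn_of_deriv_nonpos (D := Icc (x₀ + σ) x₀)
      (f := fun x => f x - (δ - κ) * (x - x₀) ^ 2) (convex_Icc _ _) (by fun_prop) ?_ ?_
    · have h := this (left_mem_Icc.2 (by linarith)) (right_mem_Icc.2 (by linarith)) (by linarith)
      simp only [add_sub_cancel_left, sub_self] at h
      linarith
    · intro x hx
      rw [interior_Icc] at hx
      have hd := hdiff x (by rw [abs_lt] at hσ ⊢; constructor <;> linarith [hx.1, hx.2]) hx.2.ne
      exact (hd.sub (by fun_prop)).differentiableWithinAt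
    · intro x hx
      rw [interior_Icc] at hx
      have hxr : |x - x₀| < r := by rw [abs_lt] at hσ ⊢; constructor <;> linarith [hx.1, hx.2]
      have hd := (hdiff x hxr hx.2.ne).hasDerivAt
      have h1 := hd.sub ((((hasDerivAt_id x).sub_const x₀).pow 2).const_mul (δ - κ))
      have h2 : deriv (fun x => f x - (δ - κ) * (x - x₀) ^ 2) x
        = deriv f x - (δ - κ) * (2 * (x - x₀)) := by
        refine Eq.trans h1.deriv ?_
        simp
      rw [h2]
      have h3 := hder x hxr
      rw [abs_of_neg (show x - x₀ < 0 by linarith [hx.2])] at h3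
      have := le_of_abs_le h3
      linarith
  · simp [hs]
  · have := monotoneOn_of_deriv_nonneg (D := Icc x₀ (x₀ + σ))
      (f := fun x => f x - (δ - κ) * (x - x₀) ^ 2) (convex_Icc _ _) (by fun_prop) ?_ ?_
    · have h := this (left_mem_Icc.2 (by linarith)) (right_mem_Icc.2 (by linarith)) (by linarith)
      simp only [add_sub_cancel_left, sub_self] at h
      linarith
    · intro x hx
      rw [interior_Icc] at hx
      have hd := hdiff x (by rw [abs_lt] at hσ ⊢; constructor <;> linarith [hx.1, hx.2]) hx.1.ne'
      exact (hd.sub (by fun_prop)).differentiableWithinAt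
    · intro x hx
      rw [interior_Icc] at hx
      have hxr : |x - x₀| < r := by rw [abs_lt] at hσ ⊢; constructor <;> linarith [hx.1, hx.2]
      have hd := (hdiff x hxr hx.1.ne').hasDerivAt
      have h1 := hd.sub ((((hasDerivAt_id x).sub_const x₀).pow 2).const_mul (δ - κ))
      have h2 : deriv (fun x => f x - (δ - κ) * (x - x₀) ^ 2) x
        = deriv f x - (δ - κ) * (2 * (x - x₀)) := by
        refine Eq.trans h1.deriv ?_
        simp
      rw [h2]
      have h3 := hder x hxr
      rw [abs_of_pos (show 0 < x - x₀ by linarith [hx.1])] at h3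
      have := neg_le_of_abs_le h3
      linarith

lemma cubic_lower (ξ₀ : ℝ) (hξ₀ : deGennes ξ₀ = Theta0)
    (hξ₀uniq : ∀ ξ : ℝ, deGennes ξ = Theta0 → ξ = ξ₀)
    (δ₀ : ℝ) (hδ₀ : δ₀ = (1 / 2) * iteratedDeriv 2 deGennes ξ₀) (hpos : 0 < δ₀) :
    ∃ C s₀ : ℝ, 0 < C ∧ 0 < s₀ ∧ ∀ s, |s| < s₀ →
      Theta0 + δ₀ * s ^ 2 - C * |s| ^ 3 ≤ deGennes (ξ₀ + s) := by
  obtain ⟨a, c, ha, hc, hgap⟩ := gap ξ₀ hξ₀ hξ₀uniq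
  have hT := Theta0_nonneg
  obtain ⟨C, s₀, hC, hs₀, hmain⟩ := realLem Theta0 c δ₀ hT hc hpos (fun σ => deGennes (ξ₀ + σ))
    (fun σ => Theta0_le _) (fun κ hκ => by
      have := taylor_lower deGennes deGennes_cont ξ₀ δ₀ (fun x => by rw [hξ₀]; exact Theta0_le x)
        hpos hδ₀ κ hκ
      rwa [hξ₀] at this)
  set c' := c / (Theta0 + c + 1) with hc'
  have hc'0 : 0 < c' := by positivity
  have hc'1 : c' * (Theta0 + c + 1) = c := by rw [hc']; field_simp
  have hc'2 : c' ≤ 1 := by rw [hc', div_le_one (by positivity)]; linarith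
  refine ⟨C, min s₀ (min (c' / 2) (c' / (2 * δ₀))), hC, by positivity, fun s hs => ?_⟩
  have hs1 : |s| < s₀ := hs.trans_le (min_le_left _ _)
  have hs2 : |s| < c' / 2 := hs.trans_le ((min_le_right _ _).trans (min_le_left _ _))
  have hs3 : |s| < c' / (2 * δ₀) := hs.trans_le ((min_le_right _ _).trans (min_le_right _ _))
  rcases eq_or_ne s 0 with rfl | hs0
  · simpa using Theta0_le ξ₀
  have hss : s ^ 2 = |s| ^ 2 := (sq_abs s).symm
  -- suffices for all u up to κ
  suffices H : ∀ u, gD u → gN u = 1 → ∀ κ > 0,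
      Theta0 + δ₀ * s ^ 2 - C * |s| ^ 3 - κ ≤ gF (ξ₀ + s) u by
    apply le_of_forall_pos_le_add
    intro κ hκ
    obtain ⟨u, hu, hN, hF⟩ := deGennes_near (ξ₀ + s) (κ / 2) (by positivity)
    have := H u hu hN (κ / 2) (by positivity)
    linarith
  intro u hu hN κ hκ
  by_cases hua : u a = 0
  · have h1 := hgap u hu hua
    rw [hN, mul_one] at h1
    have h2 := gF_shift hu ξ₀ s
    have h3 := gF_W_bound hu ξ₀
    rw [hN] at h2 h3
    have h4 : -(|s| * (gF ξ₀ u + 1)) ≤ s * (gF (ξ₀ + 1) u - gF ξ₀ u - 1) := by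
      apply neg_le_of_abs_le
      rw [abs_mul]; gcongr
    have h5 : |s| * (gF ξ₀ u + 1) ≤ c' / 2 * (gF ξ₀ u + 1) := by
      gcongr
      linarith
    -- gF - μ ≥ c' (gF + 1)
    have h6 : c' * (gF ξ₀ u + 1) ≤ gF ξ₀ u - Theta0 := by
      have : 0 ≤ (1 - c') * (gF ξ₀ u - (Theta0 + c)) := mul_nonneg (by linarith) (by linarith)
      linarith
    have h7 : δ₀ * s ^ 2 ≤ c' / 2 * 1 := by
      have e1 : |s| * (2 * δ₀) < c' := by rwa [lt_div_iff₀ (by positivity)] at hs3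
      have e2 : |s| ≤ 1 := by linarith
      have e3 : s ^ 2 ≤ |s| := by
        rw [hss, sq]; exact mul_le_of_le_one_left (abs_nonneg _) e2
      have e4 := mul_le_mul_of_nonneg_left e3 hpos.le
      linarith
    have h8 : c' / 2 * 1 ≤ c' / 2 * (gF ξ₀ u + 1) := by
      gcongr
      linarith
    have h9 : 0 ≤ C * |s| ^ 3 := by positivity
    have h10 := sq_nonneg s
    linarith
  · obtain ⟨η, hη, hreal⟩ := hmain s hs0 hs1 κ hκ
    obtain ⟨φ, hφ, hφN, hφF⟩ := deGennes_near ξ₀ (min η (c / 2)) (by positivity)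
    rw [hξ₀] at hφF
    have hφa : φ a ≠ 0 := by
      intro h
      have h1 := hgap φ hφ h
      rw [hφN] at h1
      have := min_le_right η (c / 2)
      linarith
    set z := φ a / u a with hz
    have hz0 : z ≠ 0 := div_ne_zero hφa hua
    have hzu := gD_smul hu z
    have hv0 := gD_add hzu (gD_smul hφ (-1))
    set v : ℝ → ℂ := fun t => z * u t + -1 * φ t with hv
    have hva : v a = 0 := by simp only [hv, hz]; field_simp; ring
    obtain ⟨g, hg⟩ := gN_exp hφ hv0
    obtain ⟨b, hb⟩ := gF_exp ξ₀ hφ hv0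
    obtain ⟨b', hb'⟩ := gF_exp (ξ₀ + 1) hφ hv0
    rw [hφN] at hg
    have hD : ∀ ε : ℝ, gD (fun t => φ t + (ε:ℂ) * v t) := fun ε => gD_add hφ (gD_smul hv0 _)
    have hWe : ∀ ε : ℝ, gF (ξ₀ + 1) (fun t => φ t + (ε:ℂ) * v t) - gF ξ₀ (fun t => φ t + (ε:ℂ) * v t)
        - gN (fun t => φ t + (ε:ℂ) * v t) = (gF (ξ₀ + 1) φ - gF ξ₀ φ - 1) + 2 * ε * (b' - b - g)
          + ε ^ 2 * (gF (ξ₀ + 1) v - gF ξ₀ v - gN v) := by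
      intro ε; rw [hg, hb, hb']; ring
    have key := hreal (gF ξ₀ φ) b (gF ξ₀ v) (gF (ξ₀ + 1) φ - gF ξ₀ φ - 1) (b' - b - g)
      (gF (ξ₀ + 1) v - gF ξ₀ v - gN v) g (gN v) (gF_nonneg _ _) (gN_nonneg _)
      (hφF.trans (by gcongr; exact min_le_left _ _)) (hgap v hv0 hva)
      (fun ε => by rw [← hg]; exact gN_nonneg _)
      (fun ε => by rw [← hWe, ← hg, ← hb]; exact gF_W_bound (hD ε) ξ₀)
      (gF_W_bound hv0 ξ₀)
      (fun ε σ => by rw [← hWe, ← hg, ← hb, ← gF_shift (hD ε)]; exact deGennes_le _ (hD ε))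
    have hone : (fun t => φ t + ((1:ℝ):ℂ) * v t) = fun t => z * u t := by
      funext t; simp only [hv]; push_cast; ring
    have g1 := hg 1
    have b1 := hb 1
    have w1 := hWe 1
    have sh := gF_shift (hD 1) ξ₀ s
    rw [w1, g1, b1, hone, gF_smul _ hu.1] at sh
    rw [hone, gN_smul, hN] at g1
    have e1 : 1 + 2 * g + gN v = ‖z‖ ^ 2 := by linarith
    have e2 : gF ξ₀ φ + 2 * b + gF ξ₀ v + s * (gF (ξ₀ + 1) φ - gF ξ₀ φ - 1 + 2 * (b' - b - g)
        + (gF (ξ₀ + 1) v - gF ξ₀ v - gN v)) + s ^ 2 * (1 + 2 * g + gN v) = ‖z‖ ^ 2 * gF (ξ₀ + s) u := by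
      rw [sh]; ring
    rw [e2, e1, mul_comm] at key
    exact le_of_mul_le_mul_left key (by positivity)

lemma far_lower (ξ₀ : ℝ) (hξ₀uniq : ∀ ξ : ℝ, deGennes ξ = Theta0 → ξ = ξ₀) (s₁ : ℝ) (hs₁ : 0 < s₁) :
    ∃ c : ℝ, 0 < c ∧ ∀ s, s₁ ≤ s → Theta0 + c ≤ deGennes (ξ₀ + s) := by
  have hT := Theta0_nonneg
  set S := s₁ + |ξ₀| + Theta0 + 1 with hS
  have hcmp : IsCompact (Icc s₁ S) := isCompact_Icc
  obtain ⟨x, hx, hmin⟩ := hcmp.exists_isMinOn (f := fun s => deGennes (ξ₀ + s))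
    ⟨s₁, left_mem_Icc.2 (by rw [hS]; linarith [abs_nonneg ξ₀])⟩
    ((deGennes_cont.comp (continuous_const.add continuous_id)).continuousOn)
  have hlt : Theta0 < deGennes (ξ₀ + x) := by
    refine lt_of_le_of_ne (Theta0_le _) fun h => ?_
    have := hξ₀uniq _ h.symm
    linarith [hx.1]
  refine ⟨min 1 (deGennes (ξ₀ + x) - Theta0), lt_min one_pos (by linarith), fun s hs => ?_⟩
  rcases le_total s S with h | h
  · have h1 : deGennes (ξ₀ + x) ≤ deGennes (ξ₀ + s) := hmin ⟨hs, h⟩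
    linarith [min_le_right 1 (deGennes (ξ₀ + x) - Theta0)]
  · have h0 := neg_abs_le ξ₀
    have h1 : Theta0 + 1 ≤ ξ₀ + s := by linarith
    have h2 := deGennes_ge_sq (ξ := ξ₀ + s) (by linarith)
    have h3 : Theta0 + 1 ≤ (ξ₀ + s) ^ 2 := by nlinarith
    linarith [min_le_left 1 (deGennes (ξ₀ + x) - Theta0)]

lemma halfPlane_vol : (volume : Measure (ℝ × ℝ)).restrict halfPlane
    = ((volume : Measure ℝ).restrict (Ioi 0)).prod (volume : Measure ℝ) := by
  rw [halfPlane, Measure.volume_eq_prod, ← Measure.prod_restrict, Measure.restrict_univ]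

lemma slice1_deriv {ψ : ℝ × ℝ → ℂ} (h : ContDiff ℝ 1 ψ) (ρ : ℝ) :
    deriv (fun τ => ψ (τ, ρ)) = fun τ => fderiv ℝ ψ (τ, ρ) (1, 0) := by
  funext τ
  have h1 : HasFDerivAt ψ (fderiv ℝ ψ (τ, ρ)) (τ, ρ) :=
    (h.differentiable one_ne_zero _).hasFDerivAt
  have h2 : HasDerivAt (fun τ : ℝ => (τ, ρ)) ((1:ℝ), (0:ℝ)) τ :=
    (hasDerivAt_id τ).prodMk (hasDerivAt_const τ ρ)
  exact (h1.comp_hasDerivAt τ h2).deriv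

lemma slice2_deriv {ψ : ℝ × ℝ → ℂ} (h : ContDiff ℝ 1 ψ) (τ : ℝ) :
    deriv (fun ρ => ψ (τ, ρ)) = fun ρ => fderiv ℝ ψ (τ, ρ) (0, 1) := by
  funext ρ
  have h1 : HasFDerivAt ψ (fderiv ℝ ψ (τ, ρ)) (τ, ρ) :=
    (h.differentiable one_ne_zero _).hasFDerivAt
  have h2 : HasDerivAt (fun ρ : ℝ => (τ, ρ)) ((0:ℝ), (1:ℝ)) ρ :=
    (hasDerivAt_const ρ τ).prodMk (hasDerivAt_id ρ)
  exact (h1.comp_hasDerivAt ρ h2).deriv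

lemma fd_cont {ψ : ℝ × ℝ → ℂ} (h : ContDiff ℝ 1 ψ) (v : ℝ × ℝ) :
    Continuous (fun p => fderiv ℝ ψ p v) :=
  (h.continuous_fderiv one_ne_zero).clm_apply continuous_const

lemma qPot_cont (B : ℝ) (m : ℤ) : Continuous (qPot B m) := by
  unfold qPot; fun_prop

lemma slicing (B : ℝ) (hB : 0 < B) (m : ℤ) (ψ : ℝ × ℝ → ℂ) (hψ : InFormDomain B m ψ)
    (W : ℝ → ℝ) (hWc : Continuous W) (hW0 : ∀ ρ, 0 ≤ W ρ) (hW1 : ∀ ρ, W ρ ≤ 1)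
    (hW : ∀ ρ, Theta0 + W ρ ≤
      deGennes (((m : ℝ) - B / 2) / Real.sqrt B + B ^ (-(1:ℝ)/6) * ρ ^ 2 / 2))
    (K : ℝ)
    (hK : ∀ u : ℝ → ℂ, ContDiff ℝ 1 u → Integrable (fun ρ => ‖u ρ‖ ^ 2) →
      Integrable (fun ρ => ‖deriv u ρ‖ ^ 2) →
      K * ∫ ρ, ‖u ρ‖ ^ 2 ≤ ∫ ρ, (B ^ (-(1:ℝ)/3) * ‖deriv u ρ‖ ^ 2 + W ρ * ‖u ρ‖ ^ 2)) :
    (Theta0 + K) * (∫ p in halfPlane, ‖ψ p‖ ^ 2) ≤ qForm B m ψ := by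
  obtain ⟨hc1, hi0, hi1⟩ := hψ
  have hc : Continuous ψ := hc1.continuous
  have hd1 := fd_cont hc1 (1, 0)
  have hd2 := fd_cont hc1 (0, 1)
  have hq := qPot_cont B m
  have hb : 0 < B ^ (-(1:ℝ)/3) := rpow_pos_of_pos hB _
  have hq0 : ∀ p, 0 ≤ qPot B m p := fun p => sq_nonneg _
  unfold qForm
  unfold IntegrableOn at hi0 hi1
  rw [halfPlane_vol] at *
  set μ := (volume : Measure ℝ).restrict (Ioi 0) with hμ
  set ν := μ.prod (volume : Measure ℝ) with hν
  have hI1 : Integrable (fun p => ‖fderiv ℝ ψ p (1, 0)‖ ^ 2 + qPot B m p * ‖ψ p‖ ^ 2) ν := by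
    refine Integrable.mono' hi1 (by fun_prop) (Eventually.of_forall fun p => ?_)
    have := hq0 p
    rw [Real.norm_of_nonneg (by positivity), qIntegrand]
    have : 0 ≤ B ^ (-(1:ℝ)/3) * ‖fderiv ℝ ψ p (0, 1)‖ ^ 2 := by positivity
    linarith
  have hI2 : Integrable (fun p => B ^ (-(1:ℝ)/3) * ‖fderiv ℝ ψ p (0, 1)‖ ^ 2) ν := by
    refine Integrable.mono' hi1 (by fun_prop) (Eventually.of_forall fun p => ?_)
    have := hq0 p
    rw [Real.norm_of_nonneg (by positivity), qIntegrand]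
    have : 0 ≤ ‖fderiv ℝ ψ p (1, 0)‖ ^ 2 + qPot B m p * ‖ψ p‖ ^ 2 := by positivity
    linarith
  have hI3 : Integrable (fun p : ℝ × ℝ => W p.2 * ‖ψ p‖ ^ 2) ν := by
    refine Integrable.mono' hi0 (by fun_prop) (Eventually.of_forall fun p => ?_)
    have := hW0 p.2
    rw [Real.norm_of_nonneg (by positivity)]
    nlinarith [hW1 p.2, sq_nonneg ‖ψ p‖]
  have hI4 : Integrable (fun p : ℝ × ℝ => (Theta0 + W p.2) * ‖ψ p‖ ^ 2) ν := by
    refine ((hi0.const_mul Theta0).add hI3).congr (Eventually.of_forall fun p => ?_)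
    simp only [Pi.add_apply]; ring
  have hI5 : Integrable (fun p : ℝ × ℝ => B ^ (-(1:ℝ)/3) * ‖fderiv ℝ ψ p (0, 1)‖ ^ 2
      + W p.2 * ‖ψ p‖ ^ 2) ν := hI2.add hI3
  have s1 : ∫ p, (Theta0 + W p.2) * ‖ψ p‖ ^ 2 ∂ν
      ≤ ∫ p, (‖fderiv ℝ ψ p (1, 0)‖ ^ 2 + qPot B m p * ‖ψ p‖ ^ 2) ∂ν := by
    rw [integral_prod_symm _ hI4, integral_prod_symm _ hI1]
    refine integral_mono_ae hI4.integral_prod_right hI1.integral_prod_right ?_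
    filter_upwards [hi0.prod_left_ae, hI1.prod_left_ae] with ρ h0 h1
    set ξ := ((m : ℝ) - B / 2) / Real.sqrt B + B ^ (-(1:ℝ)/6) * ρ ^ 2 / 2 with hξ
    have hu : ContDiff ℝ 1 (fun τ => ψ (τ, ρ)) := hc1.comp (contDiff_id.prodMk contDiff_const)
    have heq : ∀ τ, ‖fderiv ℝ ψ (τ, ρ) (1, 0)‖ ^ 2 + qPot B m (τ, ρ) * ‖ψ (τ, ρ)‖ ^ 2
        = ‖deriv (fun τ => ψ (τ, ρ)) τ‖ ^ 2 + (τ + ξ) ^ 2 * ‖ψ (τ, ρ)‖ ^ 2 := by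
      intro τ
      rw [slice1_deriv hc1, qPot, hξ]; simp only [add_assoc]
    have hg : gD (fun τ => ψ (τ, ρ)) := gD_of ξ hu h0 (h1.congr (Eventually.of_forall heq))
    have h2 := deGennes_le ξ hg
    simp only [heq]
    rw [integral_const_mul]
    exact (mul_le_mul_of_nonneg_right (hW ρ) (gN_nonneg _)).trans h2
  have s2 : ∫ p, K * ‖ψ p‖ ^ 2 ∂ν ≤ ∫ p, (B ^ (-(1:ℝ)/3) * ‖fderiv ℝ ψ p (0, 1)‖ ^ 2
      + W p.2 * ‖ψ p‖ ^ 2) ∂ν := by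
    have hK0 := hi0.const_mul K
    rw [integral_prod _ hK0, integral_prod _ hI5]
    refine integral_mono_ae hK0.integral_prod_left hI5.integral_prod_left ?_
    filter_upwards [hi0.prod_right_ae, hI2.prod_right_ae] with τ h0 h1
    have hu : ContDiff ℝ 1 (fun ρ => ψ (τ, ρ)) := hc1.comp (contDiff_const.prodMk contDiff_id)
    have h2 := hK _ hu h0 (by
      rw [slice2_deriv hc1]
      have := h1.const_mul (B ^ (-(1:ℝ)/3))⁻¹
      refine this.congr (Eventually.of_forall fun ρ => ?_)
      simp only []
      rw [← mul_assoc, inv_mul_cancel₀ hb.ne', one_mul])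
    rw [slice2_deriv hc1] at h2
    simp only [integral_const_mul]
    exact h2
  have e1 : ∫ p, qIntegrand B m ψ p ∂ν
      = (∫ p, (‖fderiv ℝ ψ p (1, 0)‖ ^ 2 + qPot B m p * ‖ψ p‖ ^ 2) ∂ν)
        + ∫ p, B ^ (-(1:ℝ)/3) * ‖fderiv ℝ ψ p (0, 1)‖ ^ 2 ∂ν := integral_add hI1 hI2
  have e2 : ∫ p, (Theta0 + W p.2) * ‖ψ p‖ ^ 2 ∂ν
      = Theta0 * (∫ p, ‖ψ p‖ ^ 2 ∂ν) + ∫ p, W p.2 * ‖ψ p‖ ^ 2 ∂ν := by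
    rw [← integral_const_mul, ← integral_add (hi0.const_mul _) hI3]
    congr 1; funext p; ring
  rw [integral_const_mul, integral_add hI2 hI3] at s2
  rw [e1]
  rw [e2] at s1
  linarith

lemma mont_int {u : ℝ → ℂ} (hu : ContDiff ℝ 1 u) (hs : HasCompactSupport u) (δ ζ : ℝ) :
    Integrable (fun ρ => ‖u ρ‖ ^ 2) ∧
    Integrable (fun ρ => ‖deriv u ρ‖ ^ 2 + δ * (ζ + ρ ^ 2 / 2) ^ 2 * ‖u ρ‖ ^ 2) := by
  have hc : Continuous u := hu.continuous
  have hc' : Continuous (deriv u) := hu.continuous_deriv le_rfl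
  have h0 := int_supp (f := fun _ => 1) hs continuous_const hc
  have h1 := int_supp (f := fun _ => 1) hs.deriv continuous_const hc'
  have h2 := int_supp (f := fun ρ => δ * (ζ + ρ ^ 2 / 2) ^ 2) hs (by fun_prop) hc
  simp only [one_mul] at h0 h1
  exact ⟨h0, h1.add h2⟩

/-- generic inequality -/
lemma mont_le' {δ ζ : ℝ} (hbd : BddBelow { q : ℝ | ∃ u : ℝ → ℂ, ContDiff ℝ 1 u ∧
    Integrable (fun ρ => ‖u ρ‖ ^ 2) ∧
    Integrable (fun ρ => ‖deriv u ρ‖ ^ 2 + δ * (ζ + ρ ^ 2 / 2) ^ 2 * ‖u ρ‖ ^ 2) ∧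
    0 < (∫ ρ : ℝ, ‖u ρ‖ ^ 2) ∧
    q = (∫ ρ : ℝ, (‖deriv u ρ‖ ^ 2 + δ * (ζ + ρ ^ 2 / 2) ^ 2 * ‖u ρ‖ ^ 2)) /
        ∫ ρ : ℝ, ‖u ρ‖ ^ 2 }) {u : ℝ → ℂ} (hu : ContDiff ℝ 1 u) (hs : HasCompactSupport u)
    (h : 0 < ∫ ρ, ‖u ρ‖ ^ 2) :
    montgomeryMod δ ζ * ∫ ρ, ‖u ρ‖ ^ 2 ≤
      ∫ ρ, (‖deriv u ρ‖ ^ 2 + δ * (ζ + ρ ^ 2 / 2) ^ 2 * ‖u ρ‖ ^ 2) := by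
  rw [← le_div_iff₀ h]
  exact csInf_le hbd ⟨u, hu, (mont_int hu hs δ ζ).1, (mont_int hu hs δ ζ).2, h, rfl⟩

lemma mont_le {δ : ℝ} (hδ : 0 ≤ δ) (ζ : ℝ) {u : ℝ → ℂ} (hu : ContDiff ℝ 1 u)
    (hs : HasCompactSupport u) :
    montgomeryMod δ ζ * ∫ ρ, ‖u ρ‖ ^ 2 ≤
      ∫ ρ, (‖deriv u ρ‖ ^ 2 + δ * (ζ + ρ ^ 2 / 2) ^ 2 * ‖u ρ‖ ^ 2) := by
  have h0 : 0 ≤ ∫ ρ, ‖u ρ‖ ^ 2 := integral_nonneg fun ρ => by positivity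
  rcases h0.eq_or_lt with h | h
  · rw [← h, mul_zero]; exact integral_nonneg fun ρ => by positivity
  · refine mont_le' ⟨0, ?_⟩ hu hs h
    rintro q ⟨v, -, -, -, hv, rfl⟩
    exact div_nonneg (integral_nonneg fun ρ => by positivity) hv.le

lemma tu_N : 0 < ∫ ρ, ‖tu ρ‖ ^ 2 := by
  refine tu_gN.trans_le ?_
  exact setIntegral_le_integral (mont_int tu_contDiff tu_supp 0 0).1
    (Eventually.of_forall fun t => by positivity)

lemma mont_bound {δ : ℝ} (hδ : 0 ≤ δ) (C₁ : ℝ) :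
    ∃ M : ℝ, 0 < M ∧ ∀ ζ, |ζ| < C₁ → montgomeryMod δ ζ ≤ M := by
  have hN := tu_N
  set N := ∫ ρ, ‖tu ρ‖ ^ 2 with hNd
  set A := ∫ ρ, (‖deriv tu ρ‖ ^ 2 + δ * (C₁ + ρ ^ 2 / 2) ^ 2 * ‖tu ρ‖ ^ 2) with hA
  have hA0 : 0 ≤ A := integral_nonneg fun ρ => by positivity
  refine ⟨A / N + 1, by positivity, fun ζ hζ => ?_⟩
  have h1 := mont_le hδ ζ tu_contDiff tu_supp
  have h2 : ∫ ρ, (‖deriv tu ρ‖ ^ 2 + δ * (ζ + ρ ^ 2 / 2) ^ 2 * ‖tu ρ‖ ^ 2) ≤ A := by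
    refine integral_mono (mont_int tu_contDiff tu_supp δ ζ).2
      (mont_int tu_contDiff tu_supp δ C₁).2 fun ρ => ?_
    have h3 : (ζ + ρ ^ 2 / 2) ^ 2 ≤ (C₁ + ρ ^ 2 / 2) ^ 2 := by
      obtain ⟨a, b⟩ := abs_lt.1 hζ
      apply sq_le_sq'
      · nlinarith [sq_nonneg ρ]
      · linarith
    simp only
    gcongr
  have h3 : montgomeryMod δ ζ ≤ A / N := by
    rw [le_div_iff₀ hN]; exact h1.trans h2
  linarith

lemma mont_nonpos {δ : ℝ} (hδ : δ ≤ 0) (ζ : ℝ) : montgomeryMod δ ζ ≤ 0 := by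
  by_cases hbd : BddBelow { q : ℝ | ∃ u : ℝ → ℂ, ContDiff ℝ 1 u ∧
    Integrable (fun ρ => ‖u ρ‖ ^ 2) ∧
    Integrable (fun ρ => ‖deriv u ρ‖ ^ 2 + δ * (ζ + ρ ^ 2 / 2) ^ 2 * ‖u ρ‖ ^ 2) ∧
    0 < (∫ ρ : ℝ, ‖u ρ‖ ^ 2) ∧
    q = (∫ ρ : ℝ, (‖deriv u ρ‖ ^ 2 + δ * (ζ + ρ ^ 2 / 2) ^ 2 * ‖u ρ‖ ^ 2)) /
        ∫ ρ : ℝ, ‖u ρ‖ ^ 2 }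
  swap
  · exact (Real.sInf_of_not_bddBelow hbd).le
  have hN := tu_N
  set N := ∫ ρ, ‖tu ρ‖ ^ 2 with hNd
  set D := ∫ ρ, ‖deriv tu ρ‖ ^ 2 with hD
  have hD0 : 0 ≤ D := integral_nonneg fun ρ => by positivity
  by_contra! hE
  set E := montgomeryMod δ ζ with hEd
  have key : ∀ r : ℝ, 0 < r → E * (r * N) ≤ D / r := by
    intro r hr
    have hu : ContDiff ℝ 1 (fun ρ => tu (ρ / r)) := tu_contDiff.comp (by fun_prop)
    have hs : HasCompactSupport (fun ρ => tu (ρ / r)) := by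
      have := tu_supp.comp_homeomorph (Homeomorph.mulRight₀ r⁻¹ (by positivity))
      exact this
    have hd : ∀ ρ, deriv (fun ρ => tu (ρ / r)) ρ = (r⁻¹ : ℝ) • deriv tu (ρ / r) := by
      intro ρ
      have h1 : HasDerivAt tu (deriv tu (ρ / r)) (ρ / r) :=
        (tu_contDiff.differentiable one_ne_zero _).hasDerivAt
      have h2 : HasDerivAt (fun ρ : ℝ => ρ / r) (1 / r) ρ := (hasDerivAt_id ρ).div_const r
      have := (h1.scomp ρ h2).deriv
      rw [one_div] at this
      exact this
    have hn : ∫ ρ, ‖tu (ρ / r)‖ ^ 2 = r * N := by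
      rw [Measure.integral_comp_div (fun x => ‖tu x‖ ^ 2) r, abs_of_pos hr, smul_eq_mul]
    have hdn : ∫ ρ, ‖deriv (fun ρ => tu (ρ / r)) ρ‖ ^ 2 = D / r := by
      simp only [hd, norm_smul, mul_pow]
      rw [integral_const_mul, Measure.integral_comp_div (fun x => ‖deriv tu x‖ ^ 2) r,
        abs_of_pos hr, smul_eq_mul, Real.norm_of_nonneg (by positivity)]
      field_simp
      exact hD.symm
    have h1 := mont_le' hbd hu hs (by rw [hn]; positivity)
    rw [hn] at h1
    refine h1.trans ?_
    rw [← hdn]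
    refine integral_mono (mont_int hu hs δ ζ).2 (by simpa using (mont_int hu hs 0 0).2) fun ρ => ?_
    have : δ * (ζ + ρ ^ 2 / 2) ^ 2 * ‖tu (ρ / r)‖ ^ 2 ≤ 0 := by
      rw [mul_assoc]; exact mul_nonpos_of_nonpos_of_nonneg hδ (by positivity)
    simp only
    linarith
  have h1 := key (D / (E * N) + 1) (by positivity)
  set r := D / (E * N) + 1 with hr
  have hEN : 0 < E * N := by positivity
  have hr1 : 1 ≤ r := by rw [hr]; linarith [div_nonneg hD0 hEN.le]
  have h2 : D / r ≤ D := div_le_self hD0 hr1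
  have h3 : E * (r * N) = D + E * N := by rw [hr]; field_simp
  linarith

lemma tb_deriv_bound : ∃ L : ℝ, 0 < L ∧ ∀ x, |deriv tb x| ≤ L := by
  have hc : Continuous (deriv tb) := (tb.contDiff (n := 1)).continuous_deriv le_rfl
  obtain ⟨L, hL⟩ := tb.hasCompactSupport.deriv.exists_bound_of_continuous hc
  exact ⟨max L 1, by positivity, fun x => (hL x).trans (le_max_left _ _)⟩

lemma trig_norm {c s : ℝ} (h : c ^ 2 + s ^ 2 = 1) (a b : ℂ) :
    ‖(c:ℂ) * a + (s:ℂ) * b‖ ^ 2 ≤ ‖a‖ ^ 2 + ‖b‖ ^ 2 := by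
  have h1 : ‖(c:ℂ) * a + (s:ℂ) * b‖ ≤ |c| * ‖a‖ + |s| * ‖b‖ := by
    refine (norm_add_le _ _).trans ?_
    simp
  have h2 : ‖(c:ℂ) * a + (s:ℂ) * b‖ ^ 2 ≤ (|c| * ‖a‖ + |s| * ‖b‖) ^ 2 := by gcongr
  have h3 : |c| ^ 2 + |s| ^ 2 = 1 := by simpa using h
  have h4 : (|c| * ‖a‖ + |s| * ‖b‖) ^ 2 + (|s| * ‖a‖ - |c| * ‖b‖) ^ 2
    = (|c| ^ 2 + |s| ^ 2) * (‖a‖ ^ 2 + ‖b‖ ^ 2) := by ring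
  rw [h3, one_mul] at h4
  nlinarith [sq_nonneg (|s| * ‖a‖ - |c| * ‖b‖)]

lemma ims {δ : ℝ} (hδ : 0 ≤ δ) : ∃ L : ℝ, 0 < L ∧ ∀ (ζ R err : ℝ) (V : ℝ → ℝ) (M : ℝ),
    0 < R → 0 ≤ err → Continuous V → (∀ ρ, 0 ≤ V ρ) → (∀ ρ, V ρ ≤ M) →
    (∀ ρ, |ρ| ≤ 2 * R → δ * (ζ + ρ ^ 2 / 2) ^ 2 - err ≤ V ρ) →
    (∀ ρ, R ≤ |ρ| → montgomeryMod δ ζ ≤ V ρ) →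
    ∀ u : ℝ → ℂ, ContDiff ℝ 1 u → Integrable (fun ρ => ‖u ρ‖ ^ 2) →
      Integrable (fun ρ => ‖deriv u ρ‖ ^ 2) →
      (montgomeryMod δ ζ - err - L / R ^ 2) * ∫ ρ, ‖u ρ‖ ^ 2
        ≤ ∫ ρ, (‖deriv u ρ‖ ^ 2 + V ρ * ‖u ρ‖ ^ 2) := by
  obtain ⟨L₀, hL₀, hLb⟩ := tb_deriv_bound
  refine ⟨(π / 2 * L₀) ^ 2, by positivity, ?_⟩
  intro ζ R err V M hR herr hVc hV0 hVM hV1 hV2 u hu hi hi'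
  set E := montgomeryMod δ ζ with hE
  have hc : Continuous u := hu.continuous
  have hc' : Continuous (deriv u) := hu.continuous_deriv le_rfl
  set θ : ℝ → ℝ := fun ρ => π / 2 * (1 - tb (ρ / R)) with hθ
  have hθd : ∀ ρ, HasDerivAt θ (π / 2 * (-(deriv tb (ρ / R) * (1 / R)))) ρ := by
    intro ρ
    have h1 : HasDerivAt tb (deriv tb (ρ / R)) (ρ / R) :=
      ((tb.contDiff (n := 1)).differentiable one_ne_zero _).hasDerivAt
    have h2 : HasDerivAt (fun ρ : ℝ => ρ / R) (1 / R) ρ := (hasDerivAt_id ρ).div_const R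
    exact ((h1.comp ρ h2).const_sub 1).const_mul (π / 2)
  set dθ : ℝ → ℝ := fun ρ => π / 2 * (-(deriv tb (ρ / R) * (1 / R))) with hdθ
  have hdθb : ∀ ρ, dθ ρ ^ 2 ≤ (π / 2 * L₀) ^ 2 / R ^ 2 := by
    intro ρ
    have h1 : dθ ρ ^ 2 = (π / 2 * |deriv tb (ρ / R)|) ^ 2 / R ^ 2 := by
      simp only [hdθ]; rw [mul_pow _ (|_|), sq_abs]; field_simp
    rw [h1]
    have := hLb (ρ / R)
    gcongr
  have hθc : ContDiff ℝ 1 θ := by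
    have : ContDiff ℝ 1 (fun ρ => tb (ρ / R)) := tb.contDiff.comp (by fun_prop)
    exact contDiff_const.mul (contDiff_const.sub this)
  set v : ℝ → ℂ := fun ρ => ((Real.cos (θ ρ) : ℝ) : ℂ) * u ρ with hv
  have hvc : ContDiff ℝ 1 v :=
    (Complex.ofRealCLM.contDiff.comp (Real.contDiff_cos.comp hθc)).mul hu
  have hfar : ∀ ρ, 2 * R ≤ |ρ| → Real.cos (θ ρ) = 0 := by
    intro ρ h
    have : tb (ρ / R) = 0 := by
      apply tb.zero_of_le_dist
      rw [Real.dist_eq, sub_zero, abs_div, abs_of_pos hR, le_div_iff₀ hR]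
      exact h
    simp [hθ, this]
  have hnear : ∀ ρ, |ρ| ≤ R → Real.sin (θ ρ) = 0 := by
    intro ρ h
    have : tb (ρ / R) = 1 := by
      apply tb.one_of_mem_closedBall
      rw [Metric.mem_closedBall, Real.dist_eq, sub_zero, abs_div, abs_of_pos hR, div_le_iff₀ hR]
      simpa [tb] using h
    simp [hθ, this]
  have hvs : HasCompactSupport v := by
    refine HasCompactSupport.intro (isCompact_closedBall (0:ℝ) (2 * R)) fun ρ hρ => ?_
    rw [Metric.mem_closedBall, Real.dist_eq, sub_zero, not_le] at hρ
    simp only [hv]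
    rw [hfar ρ hρ.le, Complex.ofReal_zero, zero_mul]
  have hvd : ∀ ρ, deriv v ρ = ((Real.cos (θ ρ) : ℝ) : ℂ) * deriv u ρ
      + ((Real.sin (θ ρ) : ℝ) : ℂ) * (-(((dθ ρ : ℝ) : ℂ) * u ρ)) := by
    intro ρ
    have h1 : HasDerivAt (fun ρ => ((Real.cos (θ ρ) : ℝ) : ℂ))
      ((-Real.sin (θ ρ) * dθ ρ : ℝ) : ℂ) ρ := ((hθd ρ).cos).ofReal_comp
    have h2 : HasDerivAt u (deriv u ρ) ρ := (hu.differentiable one_ne_zero _).hasDerivAt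
    refine (h1.mul h2).deriv.trans ?_
    push_cast; ring
  have hm := mont_le hδ ζ hvc hvs
  obtain ⟨hvi, hvi'⟩ := mont_int hvc hvs δ ζ
  have hVi : Integrable (fun ρ => V ρ * ‖u ρ‖ ^ 2) := by
    refine Integrable.mono' (hi.const_mul M) (by fun_prop) (Eventually.of_forall fun ρ => ?_)
    have := hV0 ρ
    rw [Real.norm_of_nonneg (by positivity)]
    have := hVM ρ
    gcongr
  have hpt : ∀ ρ, (‖deriv v ρ‖ ^ 2 + δ * (ζ + ρ ^ 2 / 2) ^ 2 * ‖v ρ‖ ^ 2)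
      + (E - err - (π / 2 * L₀) ^ 2 / R ^ 2) * ‖u ρ‖ ^ 2 - E * ‖v ρ‖ ^ 2
      ≤ ‖deriv u ρ‖ ^ 2 + V ρ * ‖u ρ‖ ^ 2 := by
    intro ρ
    have hcs := Real.cos_sq_add_sin_sq (θ ρ)
    have h1 : ‖deriv v ρ‖ ^ 2 ≤ ‖deriv u ρ‖ ^ 2 + (π / 2 * L₀) ^ 2 / R ^ 2 * ‖u ρ‖ ^ 2 := by
      rw [hvd]
      refine (trig_norm hcs _ _).trans ?_
      rw [norm_neg, norm_mul, mul_pow, Complex.norm_real, Real.norm_eq_abs, sq_abs]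
      have := hdθb ρ
      gcongr
    have h2 : ‖v ρ‖ ^ 2 = Real.cos (θ ρ) ^ 2 * ‖u ρ‖ ^ 2 := by
      rw [hv]; simp only
      rw [norm_mul, mul_pow, Complex.norm_real, Real.norm_eq_abs, sq_abs]
    have h3 : (δ * (ζ + ρ ^ 2 / 2) ^ 2 - err) * Real.cos (θ ρ) ^ 2 ≤ V ρ * Real.cos (θ ρ) ^ 2 := by
      by_cases h : |ρ| ≤ 2 * R
      · exact mul_le_mul_of_nonneg_right (hV1 ρ h) (sq_nonneg _)
      · rw [hfar ρ (not_le.1 h).le]; simp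
    have h4 : E * Real.sin (θ ρ) ^ 2 ≤ V ρ * Real.sin (θ ρ) ^ 2 := by
      by_cases h : R ≤ |ρ|
      · exact mul_le_mul_of_nonneg_right (hV2 ρ h) (sq_nonneg _)
      · rw [hnear ρ (not_le.1 h).le]; simp
    have h5 : δ * (ζ + ρ ^ 2 / 2) ^ 2 * Real.cos (θ ρ) ^ 2 - err + E * (1 - Real.cos (θ ρ) ^ 2)
        ≤ V ρ := by
      have e1 : Real.sin (θ ρ) ^ 2 = 1 - Real.cos (θ ρ) ^ 2 := by linarith
      rw [e1] at h4
      have : err * Real.cos (θ ρ) ^ 2 ≤ err := by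
        nlinarith [sq_nonneg (Real.sin (θ ρ))]
      linarith
    have h6 := mul_le_mul_of_nonneg_right h5 (sq_nonneg ‖u ρ‖)
    rw [h2]
    linarith
  have hint := integral_mono (((hvi'.add (hi.const_mul (E - err - (π / 2 * L₀) ^ 2 / R ^ 2)))).sub
    (hvi.const_mul E)) (hi'.add hVi) hpt
  have e1 := integral_sub' (hvi'.add (hi.const_mul (E - err - (π / 2 * L₀) ^ 2 / R ^ 2)))
    (hvi.const_mul E)
  have e2 := integral_add' hvi' (hi.const_mul (E - err - (π / 2 * L₀) ^ 2 / R ^ 2))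
  rw [e1, e2, integral_const_mul, integral_const_mul] at hint
  have e3 : ∀ a : ℝ, a ≤ ∫ ρ, ((fun ρ => ‖deriv u ρ‖ ^ 2) + fun ρ => V ρ * ‖u ρ‖ ^ 2) ρ →
    a ≤ ∫ ρ, (‖deriv u ρ‖ ^ 2 + V ρ * ‖u ρ‖ ^ 2) := fun a h => h
  have := e3 _ hint
  linarith

lemma Vbounds (ξ₀ : ℝ) (hξ₀ : deGennes ξ₀ = Theta0)
    (hξ₀uniq : ∀ ξ : ℝ, deGennes ξ = Theta0 → ξ = ξ₀)
    (δ₀ : ℝ) (hδ₀ : δ₀ = (1 / 2) * iteratedDeriv 2 deGennes ξ₀) (hpos : 0 < δ₀)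
    (C₁ M : ℝ) (hC₁ : 0 < C₁) (hM : 0 < M) :
    ∃ β₀ C₂ : ℝ, 1 ≤ β₀ ∧ 0 < C₂ ∧ ∀ β ζ : ℝ, β₀ < β → |ζ| < C₁ →
      (∀ ρ, |ρ| ≤ 2 * β → δ₀ * (ζ + ρ ^ 2 / 2) ^ 2 - C₂ / β ^ 2 ≤
        β ^ 16 * min (deGennes (ξ₀ + (ζ + ρ ^ 2 / 2) / β ^ 8) - Theta0) 1) ∧
      (∀ ρ, β ≤ |ρ| → M ≤
        β ^ 16 * min (deGennes (ξ₀ + (ζ + ρ ^ 2 / 2) / β ^ 8) - Theta0) 1) := by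
  obtain ⟨C, s₀, hC, hs₀, hcub⟩ := cubic_lower ξ₀ hξ₀ hξ₀uniq δ₀ hδ₀ hpos
  set s₁ := min (s₀ / 2) (δ₀ / (2 * C)) with hs₁d
  have hs₁ : 0 < s₁ := by positivity
  obtain ⟨c, hc, hfar⟩ := far_lower ξ₀ hξ₀uniq s₁ hs₁
  have hk : 0 < min c 1 := by positivity
  have a1 : 0 < (C₁ + 2) / s₀ := by positivity
  have a2 : 0 < δ₀ * (C₁ + 2) ^ 2 := by positivity
  have a3 : 0 < 32 * M / δ₀ := by positivity
  have a4 : 0 < M / min c 1 := by positivity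
  refine ⟨1 + (C₁ + 2) / s₀ + δ₀ * (C₁ + 2) ^ 2 + 4 * C₁ + 32 * M / δ₀ + M / min c 1 + M,
    C * (C₁ + 2) ^ 3, by linarith, by positivity, ?_⟩
  intro β ζ hβ hζ
  have hβ1 : 1 ≤ β := by linarith
  have hβ0 : 0 < β := by linarith
  have hp : ∀ n : ℕ, n ≠ 0 → β ≤ β ^ n := fun n hn => le_self_pow₀ hβ1 hn
  obtain ⟨hζ1, hζ2⟩ := abs_lt.1 hζ
  refine ⟨fun ρ hρ => ?_, fun ρ hρ => ?_⟩
  · set y := ζ + ρ ^ 2 / 2 with hy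
    have hρ2 : ρ ^ 2 ≤ 4 * β ^ 2 := by
      have : |ρ| ^ 2 ≤ (2 * β) ^ 2 := by gcongr
      rw [sq_abs] at this; linarith
    have hβ2 : 1 ≤ β ^ 2 := one_le_pow₀ hβ1
    have hyb : |y| ≤ (C₁ + 2) * β ^ 2 := by
      rw [abs_le]
      constructor <;> nlinarith [sq_nonneg ρ]
    have hsb : |y / β ^ 8| ≤ (C₁ + 2) / β ^ 6 := by
      rw [abs_div, abs_of_pos (by positivity : 0 < β ^ 8), div_le_div_iff₀ (by positivity) (by positivity)]
      calc |y| * β ^ 6 ≤ ((C₁ + 2) * β ^ 2) * β ^ 6 := by gcongr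
        _ = _ := by ring
    have hs : |y / β ^ 8| < s₀ := by
      refine hsb.trans_lt ?_
      rw [div_lt_comm₀ (by positivity) hs₀]
      exact lt_of_lt_of_le (by linarith) (hp 6 (by norm_num))
    have h1 := hcub _ hs
    rw [mul_min_of_nonneg _ _ (by positivity), mul_one]
    refine le_min ?_ ?_
    · have h2 : β ^ 16 * (δ₀ * (y / β ^ 8) ^ 2 - C * |y / β ^ 8| ^ 3) ≤
          β ^ 16 * (deGennes (ξ₀ + y / β ^ 8) - Theta0) :=
        mul_le_mul_of_nonneg_left (by linarith) (by positivity)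
      refine le_trans ?_ h2
      have h3 : β ^ 16 * (δ₀ * (y / β ^ 8) ^ 2) = δ₀ * y ^ 2 := by field_simp
      have h4 : β ^ 16 * (C * |y / β ^ 8| ^ 3) ≤ C * (C₁ + 2) ^ 3 / β ^ 2 := by
        calc β ^ 16 * (C * |y / β ^ 8| ^ 3) ≤ β ^ 16 * (C * ((C₁ + 2) / β ^ 6) ^ 3) := by gcongr
          _ = _ := by field_simp
      rw [mul_sub, h3]
      linarith
    · have h2 : y ^ 2 ≤ ((C₁ + 2) * β ^ 2) ^ 2 := by
        rw [← sq_abs y]; gcongr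
      have h3 : δ₀ * y ^ 2 ≤ β ^ 16 := by
        calc δ₀ * y ^ 2 ≤ δ₀ * ((C₁ + 2) * β ^ 2) ^ 2 := by gcongr
          _ = (δ₀ * (C₁ + 2) ^ 2) * β ^ 4 := by ring
          _ ≤ β ^ 12 * β ^ 4 := by
            gcongr
            exact le_trans (by linarith) (hp 12 (by norm_num))
          _ = _ := by ring
      have : 0 ≤ C * (C₁ + 2) ^ 3 / β ^ 2 := by positivity
      linarith
  · set y := ζ + ρ ^ 2 / 2 with hy
    have hρ2 : β ^ 2 ≤ ρ ^ 2 := by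
      rw [← sq_abs ρ]; gcongr
    have hyb : β ^ 2 / 4 ≤ y := by
      have := hp 2 (by norm_num)
      linarith
    have hy0 : 0 < y := lt_of_lt_of_le (by positivity) hyb
    have hs0 : 0 < y / β ^ 8 := by positivity
    have hM16 : M ≤ β ^ 16 := le_trans (by linarith) (hp 16 (by norm_num))
    have hM1 : M ≤ β ^ 16 * c := by
      have h1 : M / min c 1 ≤ β ^ 16 := le_trans (by linarith) (hp 16 (by norm_num))
      rw [div_le_iff₀ hk] at h1
      exact h1.trans (by gcongr; exact min_le_left _ _)
    rw [mul_min_of_nonneg _ _ (by positivity), mul_one]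
    refine le_min ?_ hM16
    rcases le_total s₁ (y / β ^ 8) with h | h
    · have := hfar _ h
      refine hM1.trans ?_
      gcongr; linarith
    · have hb1 : y / β ^ 8 ≤ s₀ / 2 := h.trans (min_le_left _ _)
      have hb2 : y / β ^ 8 ≤ δ₀ / (2 * C) := h.trans (min_le_right _ _)
      have h1 := hcub (y / β ^ 8) (by rw [abs_of_pos hs0]; linarith)
      rw [abs_of_pos hs0] at h1
      have h2 : C * (y / β ^ 8) ^ 3 ≤ δ₀ / 2 * (y / β ^ 8) ^ 2 := by
        calc C * (y / β ^ 8) ^ 3 = C * (y / β ^ 8) ^ 2 * (y / β ^ 8) := by ring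
          _ ≤ C * (y / β ^ 8) ^ 2 * (δ₀ / (2 * C)) := by gcongr
          _ = _ := by field_simp
      have h3 : β ^ 16 * (δ₀ / 2 * (y / β ^ 8) ^ 2) ≤
          β ^ 16 * (deGennes (ξ₀ + y / β ^ 8) - Theta0) := by
        gcongr; linarith
      refine le_trans ?_ h3
      have h4 : β ^ 16 * (δ₀ / 2 * (y / β ^ 8) ^ 2) = δ₀ / 2 * y ^ 2 := by field_simp
      rw [h4]
      have h5 : 32 * M / δ₀ ≤ β ^ 4 := le_trans (by linarith) (hp 4 (by norm_num))
      rw [div_le_iff₀ hpos] at h5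
      calc M ≤ δ₀ / 2 * (β ^ 2 / 4) ^ 2 := by linarith
        _ ≤ _ := by gcongr

/-- Proposition 4.1 (A): refined lower bound for `q_m` in terms of the
modified Montgomery energy. -/
theorem statement10
    (ξ₀ : ℝ) (hξ₀ : deGennes ξ₀ = Theta0)
    (hξ₀uniq : ∀ ξ : ℝ, deGennes ξ = Theta0 → ξ = ξ₀)
    (δ₀ : ℝ) (hδ₀ : δ₀ = (1 / 2) * iteratedDeriv 2 deGennes ξ₀)
    (C₁ : ℝ) (hC₁ : 0 < C₁) :
    ∃ B₀ C₀ : ℝ, 0 < B₀ ∧ 0 < C₀ ∧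
      ∀ (m : ℤ) (B : ℝ), B₀ < B → |delta1 B m ξ₀| < C₁ →
        ∀ ψ : ℝ × ℝ → ℂ, InFormDomain B m ψ →
          (Theta0 + montgomeryMod δ₀ (delta1 B m ξ₀) * B ^ (-(1:ℝ)/3)
              - C₀ * B ^ (-(3:ℝ)/8)) * (∫ p in halfPlane, ‖ψ p‖ ^ 2)
            ≤ qForm B m ψ := by

  rcases le_or_gt δ₀ 0 with hneg | hpos
  · refine ⟨1, 1, one_pos, one_pos, fun m B hB hd ψ hψ => ?_⟩
    have hB0 : 0 < B := by linarith
    have h1 := slicing B hB0 m ψ hψ (fun _ => 0) continuous_const (fun _ => le_rfl)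
      (fun _ => zero_le_one) (fun ρ => by rw [add_zero]; exact Theta0_le _) 0
      (fun u _ _ _ => by
        rw [zero_mul]
        exact integral_nonneg fun ρ => by positivity)
    refine le_trans ?_ h1
    have h2 : 0 ≤ ∫ p in halfPlane, ‖ψ p‖ ^ 2 := integral_nonneg fun p => by positivity
    refine mul_le_mul_of_nonneg_right ?_ h2
    have h3 := mul_nonpos_of_nonpos_of_nonneg (mont_nonpos hneg (delta1 B m ξ₀))
      (rpow_pos_of_pos hB0 (-(1:ℝ)/3)).le
    have h4 := rpow_pos_of_pos hB0 (-(3:ℝ)/8)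
    linarith
  obtain ⟨M, hM, hMb⟩ := mont_bound hpos.le C₁
  obtain ⟨β₀, C₂, hβ₀, hC₂, hV⟩ := Vbounds ξ₀ hξ₀ hξ₀uniq δ₀ hδ₀ hpos C₁ M hC₁ hM
  obtain ⟨L, hL, hims⟩ := ims hpos.le
  refine ⟨β₀ ^ 48, C₂ + L, by positivity, by positivity, fun m B hB hd ψ hψ => ?_⟩
  have hB0 : 0 < B := lt_trans (by positivity) hB
  set β := B ^ ((1:ℝ) / 48) with hβd
  have hβ0 : 0 < β := rpow_pos_of_pos hB0 _
  have hpw : ∀ n : ℕ, β ^ n = B ^ ((n:ℝ) / 48) := by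
    intro n
    rw [hβd, ← rpow_natCast, ← rpow_mul hB0.le]
    congr 1; ring
  have hpn : ∀ n : ℕ, (β ^ n)⁻¹ = B ^ (-((n:ℝ) / 48)) := by
    intro n
    rw [hpw, rpow_neg hB0.le]
  have e48 : β ^ 48 = B := by rw [hpw]; norm_num
  have hβ : β₀ < β := by
    by_contra! h
    have : β ^ 48 ≤ β₀ ^ 48 := by gcongr
    linarith
  have e3 : B ^ (-(1:ℝ)/3) = (β ^ 16)⁻¹ := by rw [hpn]; norm_num
  have e6 : B ^ (-(1:ℝ)/6) = (β ^ 8)⁻¹ := by rw [hpn]; norm_num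
  have e6' : B ^ ((1:ℝ)/6) = β ^ 8 := by rw [hpw]; norm_num
  have e38 : B ^ (-(3:ℝ)/8) = (β ^ 18)⁻¹ := by rw [hpn]; norm_num
  set ζ := delta1 B m ξ₀ with hζ
  set W : ℝ → ℝ := fun ρ => min (deGennes (ξ₀ + (ζ + ρ ^ 2 / 2) / β ^ 8) - Theta0) 1 with hWd
  have hW0 : ∀ ρ, 0 ≤ W ρ := fun ρ => le_min (by linarith [Theta0_le (ξ₀ + (ζ + ρ ^ 2 / 2) / β ^ 8)]) zero_le_one
  have hW1 : ∀ ρ, W ρ ≤ 1 := fun ρ => min_le_right _ _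
  have hWc : Continuous W := by
    have := deGennes_cont
    have h2 : Continuous (fun ρ : ℝ => ξ₀ + (ζ + ρ ^ 2 / 2) / β ^ 8) := by fun_prop
    exact ((this.comp h2).sub continuous_const).min continuous_const
  obtain ⟨hV1, hV2⟩ := hV β ζ hβ hd
  have hβ16 : 0 < β ^ 16 := by positivity
  have key := hims ζ β (C₂ / β ^ 2) (fun ρ => β ^ 16 * W ρ) (β ^ 16) hβ0 (by positivity)
    (by fun_prop) (fun ρ => mul_nonneg hβ16.le (hW0 ρ))
    (fun ρ => by simpa using mul_le_mul_of_nonneg_left (hW1 ρ) hβ16.le)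
    hV1 (fun ρ hρ => (hMb ζ hd).trans (hV2 ρ hρ))
  have main := slicing B hB0 m ψ hψ W hWc hW0 hW1 (fun ρ => by
      have : ((m : ℝ) - B / 2) / Real.sqrt B + B ^ (-(1:ℝ)/6) * ρ ^ 2 / 2
          = ξ₀ + (ζ + ρ ^ 2 / 2) / β ^ 8 := by
        rw [hζ, delta1, e6, e6']; field_simp; ring
      rw [this]
      have := min_le_left (deGennes (ξ₀ + (ζ + ρ ^ 2 / 2) / β ^ 8) - Theta0) 1
      simp only [hWd]
      linarith)
    ((β ^ 16)⁻¹ * (montgomeryMod δ₀ ζ - C₂ / β ^ 2 - L / β ^ 2)) (fun u hu h0 h1 => by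
      have h2 := mul_le_mul_of_nonneg_left (key u hu h0 h1) (inv_pos.2 hβ16).le
      rw [← mul_assoc] at h2
      refine h2.trans (le_of_eq ?_)
      rw [← integral_const_mul]
      congr 1
      funext ρ
      rw [e3]
      field_simp)
  refine le_trans (le_of_eq ?_) main
  congr 1
  rw [e3, e38]
  field_simp
  ring
end
end

section
/- Let α < β be real numbers, p ∈ C¹([α,β];ℝ), λ ∈ ℝ, and let u ∈ C²([α,β];ℝ) satisfy −u″(x) + p(x)·u(x) = λ·u(x) for all x ∈ [α,β]. Then for every polynomial b with real coefficients: ∫_α^β (b‴ + 4(λ−p)·b′ − 2p′·b)·u² dx = F(β) − F(α), where F(x) = 2b(x)·u′(x)² + b″(x)·u(x)² − 2b′(x)·u(x)·u′(x) + 2(λ−p(x))·b(x)·u(x)². -/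
noncomputable section
open MeasureTheory Real Set Polynomial

/-- The boundary bracket term of the moment formula of Lemma A.1. -/
def bracketTerm (p u : ℝ → ℝ) (lam α β : ℝ) (b : Polynomial ℝ) (x : ℝ) : ℝ :=
  2 * b.eval x * (derivWithin u (Icc α β) x) ^ 2
    + (Polynomial.derivative (Polynomial.derivative b)).eval x * u x ^ 2
    - 2 * (Polynomial.derivative b).eval x * u x * derivWithin u (Icc α β) x
    + 2 * (lam - p x) * b.eval x * u x ^ 2

/-- Lemma A.1, compact interval case: moment formula for solutions of
`-u'' + p u = λ u` on `[α, β]`. -/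
theorem statement16 (α β : ℝ) (hαβ : α < β) (p u : ℝ → ℝ) (lam : ℝ)
    (hp : ContDiffOn ℝ 1 p (Icc α β)) (hu : ContDiffOn ℝ 2 u (Icc α β))
    (heq : ∀ x ∈ Icc α β,
      -(derivWithin (derivWithin u (Icc α β)) (Icc α β) x) + p x * u x = lam * u x)
    (b : Polynomial ℝ) :
    ∫ x in α..β,
        ((Polynomial.derivative (Polynomial.derivative (Polynomial.derivative b))).eval x
          + 4 * (lam - p x) * (Polynomial.derivative b).eval x
          - 2 * derivWithin p (Icc α β) x * b.eval x) * u x ^ 2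
      = bracketTerm p u lam α β b β - bracketTerm p u lam α β b α := by
  have hU : UniqueDiffOn ℝ (Icc α β) := uniqueDiffOn_Icc hαβ
  have hu1 : ContDiffOn ℝ 1 (derivWithin u (Icc α β)) (Icc α β) :=
    hu.derivWithin hU (by norm_num)
  have hpc : ContinuousOn p (Icc α β) := hp.continuousOn
  have huc : ContinuousOn u (Icc α β) := hu.continuousOn
  have hu1c := hu1.continuousOn
  have hp1c : ContinuousOn (derivWithin p (Icc α β)) (Icc α β) :=
    hp.continuousOn_derivWithin hU le_rfl
  have hP : ∀ q : Polynomial ℝ, ContinuousOn (fun x => q.eval x) (Icc α β) :=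
    fun q => q.continuous.continuousOn
  have h0 := hP b
  have h1 := hP (derivative b)
  have h2 := hP (derivative (derivative b))
  have h3 := hP (derivative (derivative (derivative b)))
  refine intervalIntegral.integral_eq_sub_of_hasDerivAt_of_le (f := bracketTerm p u lam α β b) hαβ.le ?_ ?_ ?_
  · unfold bracketTerm
    fun_prop
  · intro x hx
    have hxI : x ∈ Icc α β := Ioo_subset_Icc_self hx
    have hn : Icc α β ∈ nhds x := Icc_mem_nhds hx.1 hx.2
    have du := ((hu.differentiableOn (by norm_num)) x hxI).hasDerivWithinAt.hasDerivAt hn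
    have dv := ((hu1.differentiableOn (by norm_num)) x hxI).hasDerivWithinAt.hasDerivAt hn
    have dp := ((hp.differentiableOn (by norm_num)) x hxI).hasDerivWithinAt.hasDerivAt hn
    have hw : derivWithin (derivWithin u (Icc α β)) (Icc α β) x = p x * u x - lam * u x := by
      linarith [heq x hxI]
    rw [hw] at dv
    have d0 := b.hasDerivAt x
    have d1 := (derivative b).hasDerivAt x
    have d2 := (derivative (derivative b)).hasDerivAt x
    have key := ((((d0.const_mul 2).mul (dv.pow 2)).add (d2.mul (du.pow 2))).sub
      (((d1.const_mul 2).mul du).mul dv)).add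
      ((((dp.const_sub lam).const_mul 2).mul d0).mul (du.pow 2))
    refine HasDerivAt.congr_deriv (f := bracketTerm p u lam α β b) key ?_
    simp only [Pi.mul_apply, Pi.pow_apply]
    push_cast
    ring
  · apply ContinuousOn.intervalIntegrable
    rw [uIcc_of_le hαβ.le]
    fun_prop
end
end

section
/- Let p be a polynomial with real coefficients such that p(x) → +∞ as |x| → ∞, let λ ∈ ℝ, and let u ∈ C²(ℝ;ℝ) ∩ L²(ℝ) satisfy −u″(x) + p(x)·u(x) = λ·u(x) for all x ∈ ℝ. Then for every polynomial b with real coefficients, the function (b‴ + 4(λ−p)·b′ − 2p′·b)·u² is integrable on ℝ and ∫_ℝ (b‴ + 4(λ−p)·b′ − 2p′·b)·u² dx = 0. -/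
noncomputable section
open MeasureTheory Real Set Filter Polynomial

lemma aux_mono {f f' : ℝ → ℝ} (hf : ∀ x, HasDerivAt f (f' x) x) {a b : ℝ} (hab : a ≤ b)
    (h : ∀ x, a ≤ x → x ≤ b → 0 ≤ f' x) : f a ≤ f b := by
  have : MonotoneOn f (Icc a b) := by
    apply monotoneOn_of_deriv_nonneg (convex_Icc a b)
    · exact fun x _ => (hf x).continuousAt.continuousWithinAt
    · exact fun x _ => (hf x).differentiableAt.differentiableWithinAt
    · intro x hx
      rw [interior_Icc] at hx
      rw [(hf x).deriv]
      exact h x hx.1.le hx.2.le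
  exact this (left_mem_Icc.2 hab) (right_mem_Icc.2 hab) hab

lemma aux_nonint {W : ℝ → ℝ} (hW : Integrable W) {a c : ℝ} (hc : 0 < c)
    (h : ∀ x, a ≤ x → c ≤ W x) : False := by
  have h1 : IntegrableOn (fun _ : ℝ => c) (Ioi a) := by
    refine Integrable.mono' (hW.integrableOn (s := Ioi a)) (by fun_prop) ?_
    refine (ae_restrict_iff' measurableSet_Ioi).2 (Eventually.of_forall fun x hx => ?_)
    rw [Real.norm_of_nonneg hc.le]
    exact h x (le_of_lt hx)
  rw [integrableOn_const_iff] at h1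
  rcases h1 with h1 | h1
  · exact hc.ne' (enorm_eq_zero.1 h1)
  · simp at h1

lemma aux_decay {v w q : ℝ → ℝ} (hv : ∀ x, HasDerivAt v (w x) x)
    (hw : ∀ x, HasDerivAt w (q x * v x) x) (hq : ∀ᶠ x in atTop, 1 ≤ q x)
    (hi : Integrable (fun x => v x ^ 2)) :
    ∃ C R : ℝ, ∀ x, R ≤ x → v x ^ 2 ≤ C * rexp (-x) ∧ w x ^ 2 ≤ C * rexp (-x) := by
  obtain ⟨R, hR⟩ := eventually_atTop.1 hq
  have dW : ∀ x, HasDerivAt (fun x => v x ^ 2) (2 * v x * w x) x := fun x => by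
    refine ((hv x).pow 2).congr_deriv ?_
    simp
  have dW1 : ∀ x, HasDerivAt (fun x => 2 * v x * w x) (2 * w x ^ 2 + 2 * q x * v x ^ 2) x := fun x => by
    refine (((hv x).const_mul 2).mul (hw x)).congr_deriv ?_
    ring
  have dZ : ∀ x, HasDerivAt (fun x => w x ^ 2) (q x * (2 * v x * w x)) x := fun x => by
    refine ((hw x).pow 2).congr_deriv ?_
    simp
    ring
  have h2 : ∀ x, R ≤ x → v x ^ 2 ≤ 2 * w x ^ 2 + 2 * q x * v x ^ 2 := fun x hx => by
    nlinarith [hR x hx, sq_nonneg (w x), sq_nonneg (v x), mul_nonneg (sub_nonneg.2 (hR x hx)) (sq_nonneg (v x))]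
  have h2' : ∀ x, R ≤ x → 2 * w x ^ 2 ≤ 2 * w x ^ 2 + 2 * q x * v x ^ 2 := fun x hx => by
    nlinarith [hR x hx, sq_nonneg (w x), sq_nonneg (v x), mul_nonneg (sub_nonneg.2 (hR x hx)) (sq_nonneg (v x))]
  have m1 : ∀ a b, R ≤ a → a ≤ b → 2 * v a * w a ≤ 2 * v b * w b := fun a b ha hab =>
    aux_mono dW1 hab fun x hx _ => (sq_nonneg _).trans (h2 x (ha.trans hx))
  have neg : ∀ x, R ≤ x → 2 * v x * w x ≤ 0 := by
    intro x hx
    by_contra! hpos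
    have g : ∀ y, x + 1 ≤ y → 2 * v x * w x ≤ v y ^ 2 := by
      intro y hy
      have := aux_mono (f := fun t => v t ^ 2 - t * (2 * v x * w x))
        (fun t => (dW t).sub ((hasDerivAt_id t).mul_const _)) (a := x) (b := y) (by linarith)
        (fun t ht _ => by have := m1 x t hx ht; linarith)
      nlinarith [sq_nonneg (v x)]
    exact aux_nonint hi hpos g
  have neg2 : ∀ x, R ≤ x → 2 * v x * w x + v x ^ 2 ≤ 0 := by
    intro x hx
    by_contra! hpos
    have g : ∀ y, x ≤ y → 2 * v x * w x + v x ^ 2 ≤ v y ^ 2 := by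
      intro y hy
      have := aux_mono (f := fun t => rexp (-t) * (2 * v t * w t + v t ^ 2))
        (fun t => ((hasDerivAt_neg t).exp).mul ((dW1 t).add (dW t))) (a := x) (b := y) hy
        (fun t ht _ => by
          have := h2 t (hx.trans ht)
          have := mul_nonneg (Real.exp_pos (-t)).le (sub_nonneg.2 this)
          simp only [Pi.add_apply]
          linarith)
      have e : rexp (-y) ≤ rexp (-x) := Real.exp_le_exp.2 (by linarith)
      have n := neg y (hx.trans hy)
      by_contra! hlt
      have hA : 2 * v y * w y + v y ^ 2 < 2 * v x * w x + v x ^ 2 := by linarith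
      have := mul_lt_mul_of_pos_left hA (Real.exp_pos (-y))
      have := mul_le_mul_of_nonneg_right e hpos.le
      linarith
    exact aux_nonint hi hpos g
  have bW : ∀ x, R ≤ x → v x ^ 2 ≤ (rexp R * v R ^ 2) * rexp (-x) := by
    intro x hx
    have := aux_mono (f := fun t => - (rexp t * v t ^ 2))
      (fun t => ((Real.hasDerivAt_exp t).mul (dW t)).neg) hx
      (fun t ht _ => by
        have := mul_nonneg (Real.exp_pos t).le (neg_nonneg.2 (neg2 t ht))
        linarith)
    rw [Real.exp_neg, ← div_eq_mul_inv, le_div_iff₀ (Real.exp_pos x)]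
    linarith
  have b1 : ∀ x, R + 1 ≤ x → -(2 * v x * w x) ≤ v (x-1) ^ 2 := by
    intro x hx
    have := aux_mono (f := fun t => t * (2 * v x * w x) - v t ^ 2)
        (fun t => ((hasDerivAt_id t).mul_const _).sub (dW t)) (a := x-1) (b := x) (by linarith)
        (fun t ht ht' => by have := m1 t x (by linarith) ht'; linarith)
    nlinarith [sq_nonneg (v x)]
  have mZ : ∀ a b, R ≤ a → a ≤ b → w b ^ 2 ≤ w a ^ 2 := fun a b ha hab => by
    have := aux_mono (fun t => (dZ t).neg) hab (fun x hx _ => by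
      have := neg x (ha.trans hx)
      have := hR x (ha.trans hx)
      nlinarith)
    simp only [Pi.neg_apply] at this
    linarith
  have b2 : ∀ x, R + 2 ≤ x → 2 * w x ^ 2 ≤ v (x-2) ^ 2 := by
    intro x hx
    have := aux_mono (f := fun t => 2 * v t * w t - t * (2 * w x ^ 2))
        (fun t => (dW1 t).sub ((hasDerivAt_id t).mul_const _)) (a := x-1) (b := x) (by linarith)
        (fun t ht ht' => by
          have := mZ t x (by linarith) ht'
          have := h2' t (by linarith)
          linarith)
    have k := b1 (x-1) (by linarith)
    have n := neg x (by linarith)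
    rw [show x - 1 - 1 = x - 2 by ring] at k
    nlinarith
  refine ⟨rexp R * v R ^ 2 * rexp 2, R + 2, fun x hx => ⟨?_, ?_⟩⟩
  · refine (bW x (by linarith)).trans ?_
    have : 1 ≤ rexp 2 := Real.one_le_exp (by norm_num)
    have h0 : 0 ≤ rexp R * v R ^ 2 := by positivity
    have h1 := mul_le_mul_of_nonneg_left this h0
    rw [mul_one] at h1
    exact mul_le_mul_of_nonneg_right h1 (Real.exp_pos _).le
  · have := bW (x-2) (by linarith)
    rw [show -(x-2) = 2 + -x by ring, Real.exp_add] at this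
    have := b2 x hx
    nlinarith [sq_nonneg (w x)]

lemma aux_poly (P : ℝ[X]) :
    (fun x => P.eval x) =O[atTop] (fun x : ℝ => rexp ((1/2) * x)) := by
  have h1 := P.isBigO_atTop_of_degree_le (X ^ P.natDegree) (by simp)
  refine h1.trans ?_
  simpa using (isLittleO_pow_exp_pos_mul_atTop P.natDegree (b := 1/2) (by norm_num)).isBigO

lemma aux_half {v w : ℝ → ℝ} {q : ℝ[X]} (hv : ∀ x, HasDerivAt v (w x) x)
    (hw : ∀ x, HasDerivAt w (q.eval x * v x) x) (hq : Tendsto (fun x => q.eval x) atTop atTop)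
    (hi : Integrable (fun x => v x ^ 2)) (P : ℝ[X]) :
    IntegrableOn (fun x => P.eval x * v x ^ 2) (Ioi 0) ∧
    Tendsto (fun x => P.eval x * v x ^ 2) atTop (nhds 0) ∧
    Tendsto (fun x => P.eval x * w x ^ 2) atTop (nhds 0) ∧
    Tendsto (fun x => P.eval x * (v x * w x)) atTop (nhds 0) := by
  obtain ⟨C, R, h⟩ := aux_decay hv hw (hq.eventually_ge_atTop 1) hi
  have cv : Continuous v := continuous_iff_continuousAt.2 fun x => (hv x).continuousAt
  have key : ∀ g : ℝ → ℝ, (∀ x, R ≤ x → |g x| ≤ C * rexp (-x)) →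
      (fun x => P.eval x * g x) =O[atTop] (fun x : ℝ => rexp (-(1/2) * x)) := by
    intro g hg
    have : g =O[atTop] (fun x : ℝ => rexp (-x)) := by
      refine Asymptotics.IsBigO.of_bound C ?_
      filter_upwards [eventually_ge_atTop R] with x hx
      simpa using hg x hx
    refine ((aux_poly P).mul this).congr_right fun x => ?_
    rw [← Real.exp_add]
    ring_nf
  have t0 : Tendsto (fun x : ℝ => rexp (-(1/2) * x)) atTop (nhds 0) := by
    refine Real.tendsto_exp_atBot.comp ?_
    exact tendsto_id.const_mul_atTop_of_neg (by norm_num)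
  have k1 := key (fun x => v x ^ 2) (fun x hx => by rw [abs_of_nonneg (sq_nonneg _)]; exact (h x hx).1)
  have k2 := key (fun x => w x ^ 2) (fun x hx => by rw [abs_of_nonneg (sq_nonneg _)]; exact (h x hx).2)
  have k3 := key (fun x => v x * w x) (fun x hx => by
    have := h x hx
    rw [abs_le]
    constructor <;> nlinarith [sq_nonneg (v x + w x), sq_nonneg (v x - w x)])
  refine ⟨integrable_of_isBigO_exp_neg (b := 1/2) (by norm_num) ?_ k1, k1.trans_tendsto t0,
    k2.trans_tendsto t0, k3.trans_tendsto t0⟩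
  exact (P.continuous.mul (cv.pow 2)).continuousOn

/-- Lemma A.1, whole-line case: moment formula for `L²` solutions of
`-u'' + p u = λ u` on `ℝ`, with a confining polynomial potential `p`. -/
theorem statement17 (p : Polynomial ℝ)
    (hp : Tendsto (fun x : ℝ => p.eval x) (cocompact ℝ) atTop)
    (lam : ℝ) (u : ℝ → ℝ) (hu : ContDiff ℝ 2 u)
    (huL2 : Integrable (fun x => u x ^ 2))
    (heq : ∀ x : ℝ, -(deriv (deriv u) x) + p.eval x * u x = lam * u x)
    (b : Polynomial ℝ) :
    Integrable (fun x =>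
      ((Polynomial.derivative (Polynomial.derivative (Polynomial.derivative b))).eval x
        + 4 * (lam - p.eval x) * (Polynomial.derivative b).eval x
        - 2 * (Polynomial.derivative p).eval x * b.eval x) * u x ^ 2) ∧
    ∫ x : ℝ,
        ((Polynomial.derivative (Polynomial.derivative (Polynomial.derivative b))).eval x
          + 4 * (lam - p.eval x) * (Polynomial.derivative b).eval x
          - 2 * (Polynomial.derivative p).eval x * b.eval x) * u x ^ 2 = 0 := by
  have hv : ∀ x, HasDerivAt u (deriv u x) x := fun x =>
    (hu.differentiable (by norm_num) x).hasDerivAt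
  have hd : Differentiable ℝ (deriv u) :=
    (contDiff_succ_iff_deriv (n := 1).1 hu).2.2.differentiable (by norm_num)
  have hw : ∀ x, HasDerivAt (deriv u) ((p - C lam).eval x * u x) x := fun x => by
    refine (hd x).hasDerivAt.congr_deriv ?_
    have := heq x
    simp only [eval_sub, eval_C]
    linarith
  rw [cocompact_eq_atBot_atTop, tendsto_sup] at hp
  have hq : Tendsto (fun x => (p - C lam).eval x) atTop atTop := by
    simpa [sub_eq_add_neg] using tendsto_atTop_add_const_right _ (-lam) hp.2
  have hq' : Tendsto (fun x => ((p - C lam).comp (-X)).eval x) atTop atTop := by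
    simpa [sub_eq_add_neg, Function.comp_def] using
      tendsto_atTop_add_const_right _ (-lam) (hp.1.comp tendsto_neg_atTop_atBot)
  have hvn : ∀ x, HasDerivAt (fun x => u (-x)) (-deriv u (-x)) x := fun x => by
    exact ((hv (-x)).comp x (hasDerivAt_neg x)).congr_deriv (by simp)
  have hwn : ∀ x, HasDerivAt (fun x => -deriv u (-x))
      (((p - C lam).comp (-X)).eval x * u (-x)) x := fun x => by
    have := ((hw (-x)).comp x (hasDerivAt_neg x)).neg
    exact this.congr_deriv (by simp)
  have A := aux_half hv hw hq huL2
  have B := aux_half hvn hwn hq' huL2.comp_neg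
  have hint : ∀ P : ℝ[X], Integrable (fun x => P.eval x * u x ^ 2) := by
    intro P
    rw [← integrableOn_univ, ← Iic_union_Ioi (a := (0:ℝ))]
    refine IntegrableOn.union ?_ (A P).1
    have := (B (P.comp (-X))).1
    have := this.comp_neg
    rw [integrableOn_Iic_iff_integrableOn_Iio]
    simpa using this
  have hbot : ∀ g : ℝ → ℝ, Tendsto (fun x => g (-x)) atTop (nhds 0) → Tendsto g atBot (nhds 0) := by
    intro g hg
    simpa [Function.comp_def] using hg.comp tendsto_neg_atBot_atTop
  have hI : Integrable (fun x =>
      ((Polynomial.derivative (Polynomial.derivative (Polynomial.derivative b))).eval x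
        + 4 * (lam - p.eval x) * (Polynomial.derivative b).eval x
        - 2 * (Polynomial.derivative p).eval x * b.eval x) * u x ^ 2) := by
    refine (hint (derivative (derivative (derivative b)) + C 4 * (C lam - p) * derivative b
      - C 2 * derivative p * b)).congr (Eventually.of_forall fun x => ?_)
    simp only [eval_sub, eval_add, eval_mul, eval_C]
  refine ⟨hI, ?_⟩
  let G : ℝ → ℝ := fun x => (derivative (derivative b) + C 2 * (C lam - p) * b).eval x * u x ^ 2
    + (C 2 * b).eval x * deriv u x ^ 2 + (- C 2 * derivative b).eval x * (u x * deriv u x)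
  have hG : ∀ x, HasDerivAt G (((Polynomial.derivative (Polynomial.derivative (Polynomial.derivative b))).eval x
        + 4 * (lam - p.eval x) * (Polynomial.derivative b).eval x
        - 2 * (Polynomial.derivative p).eval x * b.eval x) * u x ^ 2) x := by
    intro x
    refine HasDerivAt.congr_deriv (((((derivative (derivative b) + C 2 * (C lam - p) * b).hasDerivAt x).mul ((hv x).pow 2)).add
      (((C 2 * b).hasDerivAt x).mul ((hw x).pow 2))).add
      (((- C 2 * derivative b).hasDerivAt x).mul ((hv x).mul (hw x)))) ?_
    simp
    ring
  have tT : Tendsto G atTop (nhds 0) := by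
    simpa [G] using (((A _).2.1.add (A _).2.2.1).add (A _).2.2.2 : Tendsto G atTop (nhds (0 + 0 + 0)))
  have tB : Tendsto G atBot (nhds 0) := by
    refine hbot _ ?_
    have := (((B ((derivative (derivative b) + C 2 * (C lam - p) * b).comp (-X))).2.1.add
      (B ((C 2 * b).comp (-X))).2.2.1).add (B ((C 2 * derivative b).comp (-X))).2.2.2)
    simpa [G] using this
  rw [integral_of_hasDerivAt_of_tendsto hG hI tB tT, sub_self]
end
end

section
/- Let ζ, ν ∈ ℝ and let φ ∈ C²(ℝ;ℝ) ∩ L²(ℝ) satisfy −φ″(ρ) + (ζ + ρ²)²·φ(ρ) = ν·φ(ρ) for all ρ ∈ ℝ. Then for every a with 0 < a < 1/3 and every k ∈ ℕ there exists a constant C_k (depending on ζ, ν, a and k but not on φ) such that ∫_ℝ e^{2a|ρ|³}·(|φ(ρ)|² + |ρᵏ·φ(ρ)|² + |φ^{(k)}(ρ)|²) dρ ≤ C_k·∫_ℝ |φ(ρ)|² dρ. (In particular φ ∈ 𝒮(ℝ).) -/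
noncomputable section
open MeasureTheory Real Set Filter

lemma aux_poly_s18 (ε : ℝ) (hε : 0 < ε) (P : Polynomial ℝ) :
    ∃ K : ℝ, 0 ≤ K ∧ ∀ x : ℝ, |P.eval x| ≤ K * Real.exp (ε * |x| ^ 3) := by
  induction P using Polynomial.induction_on' with
  | add p q hp hq =>
    obtain ⟨K, hK0, hK⟩ := hp
    obtain ⟨L, hL0, hL⟩ := hq
    refine ⟨K + L, by positivity, fun x => ?_⟩
    rw [Polynomial.eval_add, add_mul]
    exact (abs_add_le _ _).trans (add_le_add (hK x) (hL x))
  | monomial n c =>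
    set s : ℝ := 1 / ε + 1 with hs
    have hs0 : 0 < s := by positivity
    have hes : 1 ≤ 3 * ε * s ^ 2 := by
      have h1 : ε * s = 1 + ε := by rw [hs]; field_simp
      have h2 : 1 ≤ s := by rw [hs]; have : 0 < 1 / ε := by positivity
                            linarith
      nlinarith
    refine ⟨|c| * n.factorial * Real.exp (2 * ε * s ^ 3), by positivity, fun x => ?_⟩
    rw [Polynomial.eval_monomial, abs_mul, abs_pow]
    have h1 := Real.pow_div_factorial_le_exp |x| (abs_nonneg x) n
    rw [div_le_iff₀ (by positivity)] at h1
    have h2 : |x| ≤ 2 * ε * s ^ 3 + ε * |x| ^ 3 := by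
      have ht := abs_nonneg x
      set t := |x|
      have h3 : 0 ≤ (t - s) ^ 2 * (t + 2 * s) := by positivity
      have h4 : 3 * s ^ 2 * t ≤ t ^ 3 + 2 * s ^ 3 := by nlinarith
      have h5 := mul_le_mul_of_nonneg_left h4 hε.le
      have h6 := mul_le_mul_of_nonneg_right hes ht
      nlinarith
    have h3 : Real.exp |x| ≤ Real.exp (2 * ε * s ^ 3) * Real.exp (ε * |x| ^ 3) := by
      rw [← Real.exp_add]; exact Real.exp_le_exp.2 h2
    calc |c| * |x| ^ n ≤ |c| * (Real.exp |x| * n.factorial) := by gcongr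
      _ ≤ |c| * ((Real.exp (2 * ε * s ^ 3) * Real.exp (ε * |x| ^ 3)) * n.factorial) := by gcongr
      _ = _ := by ring

lemma aux_half_s18 (V f g : ℝ → ℝ) (hVc : Continuous V) (θ R₀ : ℝ) (hθ0 : 0 < θ) (hθ : θ < 1)
    (hV : ∀ x, R₀ ≤ x → θ * x ^ 4 + (1 - θ) ≤ V x)
    (hf : ∀ x, HasDerivAt f (g x) x) (hg : ∀ x, HasDerivAt g (V x * f x) x)
    (hint : Integrable (fun x => f x ^ 2)) :
    f (R₀ + 2) * g (R₀ + 2) ≤ 0 ∧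
    IntegrableOn (fun x => Real.exp (2 / 3 * θ * x ^ 3) * (f x ^ 2 + g x ^ 2)) (Ioi (R₀ + 2)) ∧
    ∫ x in Ioi (R₀ + 2), Real.exp (2 / 3 * θ * x ^ 3) * (f x ^ 2 + g x ^ 2)
      ≤ Real.exp (2 / 3 * θ * (R₀ + 2) ^ 3) / (2 * (1 - θ)) * ∫ x, f x ^ 2 := by
  have hfc : Continuous f := continuous_iff_continuousAt.2 fun x => (hf x).continuousAt
  have hgc : Continuous g := continuous_iff_continuousAt.2 fun x => (hg x).continuousAt
  have hθ1 : 0 < 1 - θ := by linarith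
  have hV0 : ∀ x, R₀ ≤ x → 0 ≤ V x := fun x hx => by
    have := hV x hx
    have : 0 ≤ θ * x ^ 4 := by positivity
    linarith
  -- p = f g
  have hp : ∀ x, HasDerivAt (fun x => f x * g x) (g x ^ 2 + V x * f x ^ 2) x := fun x => by
    have := (hf x).mul (hg x)
    refine HasDerivAt.congr_deriv this ?_
    ring
  have hu : ∀ x, HasDerivAt (fun x => f x ^ 2) (2 * (f x * g x)) x := fun x => by
    have := (hf x).pow 2
    refine HasDerivAt.congr_deriv this ?_
    push_cast; ring
  have hpmono : MonotoneOn (fun x => f x * g x) (Ici R₀) := by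
    apply monotoneOn_of_deriv_nonneg (convex_Ici _) (by fun_prop)
    · exact fun x _ => (hp x).differentiableAt.differentiableWithinAt
    · intro x hx
      rw [interior_Ici] at hx
      rw [(hp x).deriv]
      have := hV0 x (le_of_lt hx)
      positivity
  have hpneg : ∀ x, R₀ ≤ x → f x * g x ≤ 0 := by
    intro r hr
    by_contra! hpos
    have humono : MonotoneOn (fun x => f x ^ 2) (Ici r) := by
      apply monotoneOn_of_deriv_nonneg (convex_Ici _) (by fun_prop)
      · exact fun x _ => (hu x).differentiableAt.differentiableWithinAt
      · intro x hx
        rw [interior_Ici] at hx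
        rw [(hu x).deriv]
        have hx' : r ≤ x := le_of_lt hx
        have : f r * g r ≤ f x * g x := hpmono hr (hr.trans hx') hx'
        linarith
    have hfr : 0 < f r ^ 2 := by
      have : f r ≠ 0 := by rintro h; simp [h] at hpos
      positivity
    have hc : IntegrableOn (fun _ : ℝ => f r ^ 2) (Ioi r) := by
      refine Integrable.mono' (hint.integrableOn (s := Ioi r)) (by fun_prop) ?_
      refine (ae_restrict_iff' measurableSet_Ioi).2 (ae_of_all _ fun x hx => ?_)
      rw [Real.norm_eq_abs, abs_of_pos hfr]
      exact humono self_mem_Ici (mem_Ici.2 (le_of_lt hx)) (le_of_lt hx)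
    rw [integrableOn_const_iff] at hc
    simp at hc
    exact hfr.ne' (by simp [hc])
  have huanti : AntitoneOn (fun x => f x ^ 2) (Ici R₀) := by
    apply antitoneOn_of_deriv_nonpos (convex_Ici _) (by fun_prop)
    · exact fun x _ => (hu x).differentiableAt.differentiableWithinAt
    · intro x hx
      rw [interior_Ici] at hx
      rw [(hu x).deriv]
      have := hpneg x (le_of_lt hx)
      linarith
  set N := ∫ x, f x ^ 2 with hN
  -- u (R₀+1) ≤ N
  have hu1 : f (R₀ + 1) ^ 2 ≤ N := by
    have h1 : ∫ x in R₀..(R₀ + 1), f (R₀ + 1) ^ 2 ≤ ∫ x in R₀..(R₀ + 1), f x ^ 2 := by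
      apply intervalIntegral.integral_mono_on (by linarith)
      · exact intervalIntegrable_const
      · exact (by fun_prop : Continuous fun x => f x ^ 2).intervalIntegrable _ _
      · intro x hx
        exact huanti (mem_Ici.2 hx.1) (mem_Ici.2 (by linarith)) hx.2
    have h2 : ∫ x in R₀..(R₀ + 1), f x ^ 2 ≤ N := by
      rw [intervalIntegral.integral_of_le (by linarith)]
      exact setIntegral_le_integral hint (ae_of_all _ fun x => sq_nonneg _)
    rw [intervalIntegral.integral_const] at h1
    simp at h1
    linarith
  have hp2 : -(f (R₀ + 2) * g (R₀ + 2)) ≤ N / 2 := by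
    have h1 : ∫ x in (R₀ + 1)..(R₀ + 2), 2 * (f x * g x) ≤
        ∫ x in (R₀ + 1)..(R₀ + 2), 2 * (f (R₀ + 2) * g (R₀ + 2)) := by
      apply intervalIntegral.integral_mono_on (by linarith)
      · exact (by fun_prop : Continuous fun x => 2 * (f x * g x)).intervalIntegrable _ _
      · exact intervalIntegrable_const
      · intro x hx
        have : f x * g x ≤ f (R₀ + 2) * g (R₀ + 2) :=
          hpmono (mem_Ici.2 (by linarith [hx.1])) (mem_Ici.2 (by linarith)) hx.2
        linarith
    rw [intervalIntegral.integral_eq_sub_of_hasDerivAt (f := fun x => f x ^ 2) (fun x _ => hu x)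
      ((by fun_prop : Continuous fun x => 2 * (f x * g x)).intervalIntegrable _ _),
      intervalIntegral.integral_const] at h1
    have : (R₀ + 2 - (R₀ + 1)) = 1 := by ring
    rw [this, one_smul] at h1
    nlinarith [sq_nonneg (f (R₀ + 2))]
  set R := R₀ + 2 with hR
  have hRR : R₀ ≤ R := by linarith
  set w : ℝ → ℝ := fun x => Real.exp (2 / 3 * θ * x ^ 3) with hw
  have hwc : Continuous w := by fun_prop
  have hwd : ∀ x, HasDerivAt w (w x * (2 * θ * x ^ 2)) x := fun x => by
    have := (((hasDerivAt_id x).pow 3).const_mul (2 / 3 * θ)).exp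
    refine HasDerivAt.congr_deriv this ?_
    simp [hw]; ring
  have hq : ∀ x, HasDerivAt (fun x => w x * (f x * g x))
      (w x * (2 * θ * x ^ 2) * (f x * g x) + w x * (g x ^ 2 + V x * f x ^ 2)) x :=
    fun x => (hwd x).mul (hp x)
  have hbound : ∀ T, R ≤ T → ∫ x in R..T, w x * (f x ^ 2 + g x ^ 2) ≤
      w R / (2 * (1 - θ)) * N := by
    intro T hT
    have h1 : ∫ x in R..T, (1 - θ) * (w x * (f x ^ 2 + g x ^ 2)) ≤ ∫ x in R..T,
        (w x * (2 * θ * x ^ 2) * (f x * g x) + w x * (g x ^ 2 + V x * f x ^ 2)) := by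
      apply intervalIntegral.integral_mono_on hT
      · exact (by fun_prop : Continuous _).intervalIntegrable _ _
      · exact (by fun_prop : Continuous _).intervalIntegrable _ _
      · intro x hx
        have hw0 : 0 ≤ w x := (Real.exp_pos _).le
        have hVx := hV x (hRR.trans hx.1)
        have h3 : (1 - θ) * (f x ^ 2 + g x ^ 2) ≤
            2 * θ * x ^ 2 * (f x * g x) + (g x ^ 2 + V x * f x ^ 2) := by
          have h4 := mul_le_mul_of_nonneg_right hVx (sq_nonneg (f x))
          have h5 : 0 ≤ θ * (g x + x ^ 2 * f x) ^ 2 := by positivity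
          nlinarith
        have := mul_le_mul_of_nonneg_left h3 hw0
        nlinarith
    rw [intervalIntegral.integral_eq_sub_of_hasDerivAt (fun x _ => hq x)
      ((by fun_prop : Continuous _).intervalIntegrable _ _),
      intervalIntegral.integral_const_mul] at h1
    have h2 : w T * (f T * g T) ≤ 0 :=
      mul_nonpos_of_nonneg_of_nonpos (Real.exp_pos _).le (hpneg T (hRR.trans hT))
    have h3 : w R * (-(f R * g R)) ≤ w R * (N / 2) :=
      mul_le_mul_of_nonneg_left hp2 (Real.exp_pos _).le
    have h4 : w R / (2 * (1 - θ)) * N = (w R * (N / 2)) / (1 - θ) := by field_simp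
    rw [h4, le_div_iff₀ hθ1]
    nlinarith
  have hI : IntegrableOn (fun x => w x * (f x ^ 2 + g x ^ 2)) (Ioi R) := by
    refine integrableOn_Ioi_of_intervalIntegral_norm_bounded (w R / (2 * (1 - θ)) * N) R
      (b := fun T : ℝ => T) (l := atTop) (fun T => ?_) tendsto_id ?_
    · exact ((by fun_prop : Continuous fun x => w x * (f x ^ 2 + g x ^ 2)).integrableOn_Icc).mono_set
        Ioc_subset_Icc_self
    · filter_upwards [eventually_ge_atTop R] with T hT
      have : ∀ x, ‖w x * (f x ^ 2 + g x ^ 2)‖ = w x * (f x ^ 2 + g x ^ 2) := fun x => by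
        rw [Real.norm_eq_abs, abs_of_nonneg]
        have : 0 < w x := Real.exp_pos _
        positivity
      simp only [this]
      exact hbound T hT
  refine ⟨hpneg R hRR, hI, ?_⟩
  refine le_of_tendsto (intervalIntegral_tendsto_integral_Ioi R hI tendsto_id) ?_
  filter_upwards [eventually_ge_atTop R] with T hT
  exact hbound T hT

lemma aux_deriv (VP : Polynomial ℝ) (f g : ℝ → ℝ)
    (hf : ∀ x, HasDerivAt f (g x) x) (hg : ∀ x, HasDerivAt g (VP.eval x * f x) x)
    (P Q : ℕ → Polynomial ℝ) (hP0 : P 0 = 1) (hQ0 : Q 0 = 0)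
    (hP : ∀ k, P (k + 1) = (P k).derivative + Q k * VP)
    (hQ : ∀ k, Q (k + 1) = P k + (Q k).derivative) (k : ℕ) :
    iteratedDeriv k f = fun x => (P k).eval x * f x + (Q k).eval x * g x := by
  induction k with
  | zero => simp [hP0, hQ0]
  | succ k ih =>
    rw [iteratedDeriv_succ, ih]
    funext x
    have := (((P k).hasDerivAt x).mul (hf x)).add (((Q k).hasDerivAt x).mul (hg x))
    rw [show (fun x => (P k).eval x * f x + (Q k).eval x * g x) =
      ((fun x => (P k).eval x) * f + (fun x => (Q k).eval x) * g) from rfl, this.deriv, hP, hQ]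
    simp only [Polynomial.eval_add, Polynomial.eval_mul]
    ring

lemma aux_PQ (VP : Polynomial ℝ) : ∃ P Q : ℕ → Polynomial ℝ, P 0 = 1 ∧ Q 0 = 0 ∧
    (∀ k, P (k + 1) = (P k).derivative + Q k * VP) ∧
    (∀ k, Q (k + 1) = P k + (Q k).derivative) := by
  let S : ℕ → Polynomial ℝ × Polynomial ℝ := fun k =>
    Nat.rec (1, 0) (fun _ s => (s.1.derivative + s.2 * VP, s.1 + s.2.derivative)) k
  exact ⟨fun k => (S k).1, fun k => (S k).2, rfl, rfl, fun k => rfl, fun k => rfl⟩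

lemma aux_line (ζ ν θ : ℝ) (hθ0 : 0 < θ) (hθ : θ < 1) : ∃ C : ℝ, 0 ≤ C ∧ ∀ f g : ℝ → ℝ,
    (∀ x, HasDerivAt f (g x) x) → (∀ x, HasDerivAt g (((ζ + x ^ 2) ^ 2 - ν) * f x) x) →
    Integrable (fun x => f x ^ 2) →
    Integrable (fun x => Real.exp (2 / 3 * θ * |x| ^ 3) * (f x ^ 2 + g x ^ 2)) ∧
    ∫ x, Real.exp (2 / 3 * θ * |x| ^ 3) * (f x ^ 2 + g x ^ 2) ≤ C * ∫ x, f x ^ 2 := by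
  have hθ1 : 0 < 1 - θ := by linarith
  set R₀ : ℝ := (2 * |ζ| + |ν| + 1) / (1 - θ) + 1 with hR₀
  have hR1 : 1 ≤ R₀ := by
    have : 0 ≤ (2 * |ζ| + |ν| + 1) / (1 - θ) := by positivity
    linarith
  have hV : ∀ x, R₀ ≤ x → θ * x ^ 4 + (1 - θ) ≤ (ζ + x ^ 2) ^ 2 - ν := by
    intro x hx
    have h1 : (1 - θ) * R₀ = 2 * |ζ| + |ν| + 1 + (1 - θ) := by rw [hR₀]; field_simp
    have h2 : R₀ ≤ x ^ 2 := by nlinarith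
    have hs1 : 1 ≤ x ^ 2 := by linarith
    rw [show x ^ 4 = (x ^ 2) ^ 2 by ring]
    set s := x ^ 2
    have h3 : 2 * |ζ| + |ν| + 1 + (1 - θ) ≤ (1 - θ) * s := by
      rw [← h1]; exact mul_le_mul_of_nonneg_left h2 hθ1.le
    have h4 := mul_le_mul_of_nonneg_right h3 (by linarith : 0 ≤ s)
    have h5 : |ν| ≤ |ν| * s := le_mul_of_one_le_right (abs_nonneg _) hs1
    have h6 : -(ζ * s) ≤ |ζ| * s := by
      have := mul_le_mul_of_nonneg_right (neg_abs_le ζ) (by linarith : 0 ≤ s)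
      linarith
    have h7 := le_abs_self ν
    nlinarith [sq_nonneg ζ]
  set R := R₀ + 2 with hR
  set E := Real.exp (2 / 3 * θ * R ^ 3) with hE
  have hE0 : 0 < E := Real.exp_pos _
  refine ⟨E * (1 + |ν|) + E / (2 * (1 - θ)) + E / (2 * (1 - θ)), by positivity, ?_⟩
  intro f g hf hg hint
  have hfc : Continuous f := continuous_iff_continuousAt.2 fun x => (hf x).continuousAt
  have hgc : Continuous g := continuous_iff_continuousAt.2 fun x => (hg x).continuousAt
  set N := ∫ x, f x ^ 2 with hN
  obtain ⟨hp1, hI1, hb1⟩ := aux_half_s18 (fun x => (ζ + x ^ 2) ^ 2 - ν) f g (by fun_prop) θ R₀ hθ0 hθ hV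
    hf hg hint
  obtain ⟨hp2, hI2, hb2⟩ := aux_half_s18 (fun x => (ζ + x ^ 2) ^ 2 - ν) (fun x => f (-x))
    (fun x => - g (-x)) (by fun_prop) θ R₀ hθ0 hθ hV
    (fun x => by
      have := (hf (-x)).comp x (hasDerivAt_neg x)
      refine HasDerivAt.congr_deriv this ?_
      ring)
    (fun x => by
      have := ((hg (-x)).comp x (hasDerivAt_neg x)).neg
      refine HasDerivAt.congr_deriv this ?_
      ring)
    (hint.comp_neg)
  have hNN : ∫ x, f (-x) ^ 2 = N := integral_neg_eq_self (fun x => f x ^ 2) volume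
  rw [hNN] at hb2
  set W : ℝ → ℝ := fun x => Real.exp (2 / 3 * θ * |x| ^ 3) * (f x ^ 2 + g x ^ 2) with hWdef
  have hWc : Continuous W := by fun_prop
  have hRpos : 0 < R := by linarith
  have e1 : EqOn (fun x => Real.exp (2 / 3 * θ * x ^ 3) * (f x ^ 2 + g x ^ 2)) W (Ioi R) := by
    intro x hx
    have : 0 < x := hRpos.trans hx
    simp [hWdef, abs_of_pos this]
  have e2 : EqOn (fun x => Real.exp (2 / 3 * θ * x ^ 3) * (f (-x) ^ 2 + (- g (-x)) ^ 2))
      (fun x => W (-x)) (Ioi R) := by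
    intro x hx
    have : 0 < x := hRpos.trans hx
    simp [hWdef, abs_of_pos this]
  rw [setIntegral_congr_fun measurableSet_Ioi e1] at hb1
  rw [setIntegral_congr_fun measurableSet_Ioi e2, integral_comp_neg_Ioi] at hb2
  have hI1' : IntegrableOn W (Ioi R) := hI1.congr_fun e1 measurableSet_Ioi
  have hI2' : IntegrableOn W (Iic (-R)) := by
    have := hI2.congr_fun e2 measurableSet_Ioi
    have h3 := (integrableOn_Ici_iff_integrableOn_Ioi).2 this
    have h4 := h3.comp_neg
    rw [neg_Ici] at h4
    simpa only [neg_neg] using h4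
  have hI3 : IntegrableOn W (Ioc (-R) R) := hWc.integrableOn_Icc.mono_set Ioc_subset_Icc_self
  have hI4 : IntegrableOn W (Iic R) := by
    rw [← Iic_union_Ioc_eq_Iic (by linarith : -R ≤ R)]
    exact hI2'.union hI3
  have hIW : Integrable W := by
    rw [← integrableOn_univ, ← Iic_union_Ioi (a := R)]
    exact hI4.union hI1'
  refine ⟨hIW, ?_⟩
  have hsplit : ∫ x, W x = (∫ x in Iic (-R), W x) + (∫ x in (-R)..R, W x) + ∫ x in Ioi R, W x := by
    rw [← intervalIntegral.integral_Iic_add_Ioi hI4 hI1',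
      ← intervalIntegral.integral_Iic_sub_Iic hI2' hI4]
    ring
  -- middle
  have hp : ∀ x, HasDerivAt (fun x => f x * g x) (g x ^ 2 + ((ζ + x ^ 2) ^ 2 - ν) * f x ^ 2) x :=
    fun x => by
      have := (hf x).mul (hg x)
      refine HasDerivAt.congr_deriv this ?_
      ring
  have hle : -R ≤ R := by linarith
  have hfN : ∫ x in (-R)..R, f x ^ 2 ≤ N := by
    rw [intervalIntegral.integral_of_le hle]
    exact setIntegral_le_integral hint (ae_of_all _ fun x => sq_nonneg _)
  have hm1 : ∫ x in (-R)..R, g x ^ 2 ≤ |ν| * N := by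
    have h1 : ∫ x in (-R)..R, (g x ^ 2 - |ν| * f x ^ 2) ≤
        ∫ x in (-R)..R, (g x ^ 2 + ((ζ + x ^ 2) ^ 2 - ν) * f x ^ 2) := by
      apply intervalIntegral.integral_mono_on hle
      · exact (by fun_prop : Continuous _).intervalIntegrable _ _
      · exact (by fun_prop : Continuous _).intervalIntegrable _ _
      · intro x hx
        have : -|ν| ≤ (ζ + x ^ 2) ^ 2 - ν := by
          have := le_abs_self ν
          have := sq_nonneg (ζ + x ^ 2)
          linarith
        have := mul_le_mul_of_nonneg_right this (sq_nonneg (f x))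
        linarith
    rw [intervalIntegral.integral_eq_sub_of_hasDerivAt (fun x _ => hp x)
      ((by fun_prop : Continuous _).intervalIntegrable _ _),
      intervalIntegral.integral_sub
        ((by fun_prop : Continuous _).intervalIntegrable _ _)
        ((by fun_prop : Continuous _).intervalIntegrable _ _),
      intervalIntegral.integral_const_mul] at h1
    have := mul_le_mul_of_nonneg_left hfN (abs_nonneg ν)
    have hp2' : f (-R) * -g (-R) ≤ 0 := hp2
    linarith
  have hm2 : ∫ x in (-R)..R, W x ≤ E * (1 + |ν|) * N := by
    have h1 : ∫ x in (-R)..R, W x ≤ ∫ x in (-R)..R, E * (f x ^ 2 + g x ^ 2) := by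
      apply intervalIntegral.integral_mono_on hle
      · exact hWc.intervalIntegrable _ _
      · exact (by fun_prop : Continuous _).intervalIntegrable _ _
      · intro x hx
        have h2 : |x| ≤ R := abs_le.2 hx
        simp only [hWdef, hE]
        gcongr
    rw [intervalIntegral.integral_const_mul, intervalIntegral.integral_add
        ((by fun_prop : Continuous _).intervalIntegrable _ _)
        ((by fun_prop : Continuous _).intervalIntegrable _ _)] at h1
    have := mul_le_mul_of_nonneg_left (add_le_add hfN hm1) hE0.le
    linarith
  rw [hsplit]
  linarith

/-- Lemma A.8: cubic-exponential decay, with all derivatives and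
polynomial moments, of `L²` eigenfunctions of the Montgomery operator, with a constant
independent of the eigenfunction. -/
theorem statement18 (ζ ν a : ℝ) (ha : 0 < a) (ha' : a < 1/3) (k : ℕ) :
    ∃ C : ℝ,
      ∀ φ : ℝ → ℝ, ContDiff ℝ 2 φ → Integrable (fun ρ => φ ρ ^ 2) →
        (∀ ρ : ℝ, -(deriv (deriv φ) ρ) + (ζ + ρ ^ 2) ^ 2 * φ ρ = ν * φ ρ) →
        (∫⁻ ρ : ℝ, ENNReal.ofReal (Real.exp (2 * a * |ρ| ^ 3) *
            (φ ρ ^ 2 + (ρ ^ k * φ ρ) ^ 2 + iteratedDeriv k φ ρ ^ 2)))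
          ≤ ENNReal.ofReal (C * ∫ ρ : ℝ, φ ρ ^ 2) := by
  set θ : ℝ := (3 * a + 1) / 2 with hθ
  obtain ⟨C, hC0, hC⟩ := aux_line ζ ν θ (by linarith) (by linarith)
  set VP : Polynomial ℝ := (Polynomial.C ζ + Polynomial.X ^ 2) ^ 2 - Polynomial.C ν with hVP
  have hVPe : ∀ x, VP.eval x = (ζ + x ^ 2) ^ 2 - ν := fun x => by simp [hVP]
  obtain ⟨P, Q, hP0, hQ0, hP, hQ⟩ := aux_PQ VP
  obtain ⟨K, hK0, hK⟩ := aux_poly_s18 (2 / 3 * θ - 2 * a) (by linarith)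
    (1 + Polynomial.X ^ (2 * k) + 2 * P k ^ 2 + 2 * Q k ^ 2)
  refine ⟨K * C, fun φ hφ hint heq => ?_⟩
  have hd1 : ∀ x, HasDerivAt φ (deriv φ x) x := fun x =>
    (hφ.differentiable (by norm_num) x).hasDerivAt
  have hd2 : ∀ x, HasDerivAt (deriv φ) (((ζ + x ^ 2) ^ 2 - ν) * φ x) x := fun x => by
    have h1 : ContDiff ℝ 1 (deriv φ) := by
      have : ContDiff ℝ (1 + 1) φ := by convert hφ using 1; norm_num
      exact (contDiff_succ_iff_deriv.1 this).2.2
    have := (h1.differentiable (by norm_num) x).hasDerivAt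
    refine HasDerivAt.congr_deriv this ?_
    linarith [heq x]
  obtain ⟨hI, hb⟩ := hC φ (deriv φ) hd1 hd2 hint
  have hk := aux_deriv VP φ (deriv φ) hd1 (fun x => by rw [hVPe]; exact hd2 x) P Q hP0 hQ0 hP hQ k
  set W : ℝ → ℝ := fun x => Real.exp (2 / 3 * θ * |x| ^ 3) * (φ x ^ 2 + deriv φ x ^ 2) with hW
  have hW0 : ∀ x, 0 ≤ W x := fun x => by positivity
  calc _ ≤ ∫⁻ ρ : ℝ, ENNReal.ofReal (K * W ρ) := by
        refine lintegral_mono fun x => ENNReal.ofReal_le_ofReal ?_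
        have hx := (le_abs_self _).trans (hK x)
        simp only [Polynomial.eval_add, Polynomial.eval_mul, Polynomial.eval_pow,
          Polynomial.eval_X, Polynomial.eval_one, Polynomial.eval_ofNat] at hx
        rw [hk]
        simp only [hW]
        set p := (P k).eval x
        set q := (Q k).eval x
        set y := φ x
        set z := deriv φ x
        have h1 : y ^ 2 + (x ^ k * y) ^ 2 + (p * y + q * z) ^ 2 ≤
            (1 + x ^ (2 * k) + 2 * p ^ 2 + 2 * q ^ 2) * (y ^ 2 + z ^ 2) := by
          have e : x ^ (2 * k) = (x ^ k) ^ 2 := by rw [← pow_mul, mul_comm]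
          rw [e]
          nlinarith [sq_nonneg (p * y - q * z), sq_nonneg (p * z), sq_nonneg (q * y),
            sq_nonneg z, sq_nonneg (x ^ k * z)]
        calc Real.exp (2 * a * |x| ^ 3) * (y ^ 2 + (x ^ k * y) ^ 2 + (p * y + q * z) ^ 2)
            ≤ Real.exp (2 * a * |x| ^ 3) *
              ((K * Real.exp ((2 / 3 * θ - 2 * a) * |x| ^ 3)) * (y ^ 2 + z ^ 2)) := by
              refine mul_le_mul_of_nonneg_left (h1.trans ?_) (Real.exp_pos _).le
              exact mul_le_mul_of_nonneg_right hx (by positivity)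
          _ = K * ((Real.exp (2 * a * |x| ^ 3) * Real.exp ((2 / 3 * θ - 2 * a) * |x| ^ 3)) *
              (y ^ 2 + z ^ 2)) := by ring
          _ = _ := by
              rw [← Real.exp_add]
              congr 3
              ring_nf
    _ = ENNReal.ofReal (∫ ρ, K * W ρ) := by
        rw [ofReal_integral_eq_lintegral_ofReal (hI.const_mul K)
          (ae_of_all _ fun x => mul_nonneg hK0 (hW0 x))]
    _ ≤ _ := by
        refine ENNReal.ofReal_le_ofReal ?_
        rw [integral_const_mul, mul_assoc]
        exact mul_le_mul_of_nonneg_left hb hK0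
end
end

section
/- Let ζ, ν ∈ ℝ and 0 < a < 1/3. Let u ∈ C^∞(ℝ;ℝ) be such that for every k ∈ ℕ the functions e^{a|ρ|³}·u, e^{a|ρ|³}·ρᵏ·u and e^{a|ρ|³}·u^{(k)} belong to L²(ℝ). If w ∈ C²(ℝ;ℝ) ∩ L²(ℝ) satisfies −w″(ρ) + ((ζ + ρ²)² − ν)·w(ρ) = u(ρ) for all ρ ∈ ℝ, then for every b with 0 < b < a and every ℓ ∈ ℕ, the functions e^{b|ρ|³}·w, e^{b|ρ|³}·ρ^ℓ·w and e^{b|ρ|³}·w^{(ℓ)} belong to L²(ℝ). -/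
noncomputable section
open MeasureTheory Real Set Filter

lemma half_bound (a : ℝ) (ha : 0 < a) (f f' : ℝ → ℝ) (hf : ∀ x, HasDerivAt f (f' x) x)
    (hc : Continuous f')
    (h1 : Integrable (fun x => (Real.exp (a * |x| ^ 3) * f x) ^ 2))
    (h2 : Integrable (fun x => (Real.exp (a * |x| ^ 3) * f' x) ^ 2)) :
    ∃ C, ∀ x, 0 ≤ x → |f x| ≤ C * Real.exp (-(a * |x| ^ 3)) := by
  have hfc : Continuous f := continuous_iff_continuousAt.2 fun x => (hf x).continuousAt
  have hE : ∀ x : ℝ, 1 ≤ Real.exp (a * |x| ^ 3) := fun x => Real.one_le_exp (by positivity)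
  have key : ∀ g : ℝ → ℝ, Continuous g →
      Integrable (fun x => (Real.exp (a * |x| ^ 3) * g x) ^ 2) → Integrable (fun x => g x ^ 2) := by
    intro g hg hi
    refine hi.mono' (by fun_prop) (Eventually.of_forall fun x => ?_)
    rw [Real.norm_of_nonneg (by positivity), mul_pow]
    have : 1 ≤ Real.exp (a * |x| ^ 3) ^ 2 := one_le_pow₀ (hE x)
    nlinarith [sq_nonneg (g x)]
  have i1 := key f hfc h1
  have i2 := key f' hc h2
  have i3 : Integrable (fun x => 2 * f x * f' x) := by
    refine (i1.add i2).mono' (by fun_prop) (Eventually.of_forall fun x => ?_)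
    simp only [Pi.add_apply, Real.norm_eq_abs]
    rw [abs_le]; constructor <;> nlinarith [sq_nonneg (f x + f' x), sq_nonneg (f x - f' x)]
  have hd : ∀ x, HasDerivAt (fun x => f x ^ 2) (2 * f x * f' x) x := by
    intro x
    have := (hf x).pow 2
    exact HasDerivAt.congr_deriv this (by simp)
  set M := ∫ x, ((Real.exp (a * |x| ^ 3) * f x) ^ 2 + (Real.exp (a * |x| ^ 3) * f' x) ^ 2) with hM
  have hM0 : 0 ≤ M := integral_nonneg fun x => by positivity
  refine ⟨Real.sqrt M, fun x hx => ?_⟩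
  have ht : Tendsto (fun x => f x ^ 2) atTop (nhds 0) :=
    tendsto_zero_of_hasDerivAt_of_integrableOn_Ioi (a := x) (fun y _ => hd y)
      i3.integrableOn i1.integrableOn
  have hint := integral_Ioi_of_hasDerivAt_of_tendsto' (a := x) (fun y _ => hd y)
      i3.integrableOn ht
  have hsq : f x ^ 2 ≤ M * Real.exp (-(a * |x| ^ 3)) ^ 2 := by
    have e1 : f x ^ 2 = ∫ y in Ioi x, -(2 * f y * f' y) := by
      rw [integral_neg, hint]; ring
    rw [e1, mul_comm, hM, ← integral_const_mul]
    have i4 : Integrable (fun y => Real.exp (-(a * |x| ^ 3)) ^ 2 *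
      ((Real.exp (a * |y| ^ 3) * f y) ^ 2 + (Real.exp (a * |y| ^ 3) * f' y) ^ 2)) :=
      (h1.add h2).const_mul _
    refine le_trans (setIntegral_mono_on i3.neg.integrableOn i4.integrableOn measurableSet_Ioi ?_)
      (setIntegral_le_integral i4 (Eventually.of_forall fun y => by positivity))
    intro y hy
    have hxy : |x| ^ 3 ≤ |y| ^ 3 := by
      have : x < y := hy
      rw [abs_of_nonneg hx, abs_of_nonneg (by linarith)]
      gcongr
    have h5 : 1 ≤ Real.exp (-(a * |x| ^ 3)) * Real.exp (a * |y| ^ 3) := by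
      rw [← Real.exp_add]; apply Real.one_le_exp; nlinarith
    have h6 := one_le_pow₀ h5 (n := 2)
    rw [mul_pow] at h6
    have h7 : -(2 * f y * f' y) ≤ f y ^ 2 + f' y ^ 2 := by nlinarith [sq_nonneg (f y + f' y)]
    calc _ ≤ 1 * (f y ^ 2 + f' y ^ 2) := by linarith
      _ ≤ (Real.exp (-(a * |x| ^ 3)) ^ 2 * Real.exp (a * |y| ^ 3) ^ 2) * (f y ^ 2 + f' y ^ 2) := by
        gcongr
      _ = _ := by ring
  apply abs_le_of_sq_le_sq
  · rw [mul_pow, Real.sq_sqrt hM0]; exact hsq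
  · positivity

def Dec (a : ℝ) (f : ℝ → ℝ) : Prop :=
  ∀ b, 0 < b → b < a → ∃ C, ∀ x, |f x| ≤ C * Real.exp (-(b * |x| ^ 3))

lemma two_sided (b : ℝ) (f : ℝ → ℝ)
    (h1 : ∃ C, ∀ x, 0 ≤ x → |f x| ≤ C * Real.exp (-(b * |x| ^ 3)))
    (h2 : ∃ C, ∀ x, 0 ≤ x → |f (-x)| ≤ C * Real.exp (-(b * |x| ^ 3))) :
    ∃ C, ∀ x, |f x| ≤ C * Real.exp (-(b * |x| ^ 3)) := by
  obtain ⟨C, hC⟩ := h1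
  obtain ⟨D, hD⟩ := h2
  refine ⟨max C D, fun x => ?_⟩
  rcases le_total 0 x with h | h
  · exact (hC x h).trans (by gcongr; exact le_max_left _ _)
  · have := hD (-x) (by linarith)
    rw [neg_neg, abs_neg] at this
    exact this.trans (by gcongr; exact le_max_right _ _)

lemma full_bound (a : ℝ) (ha : 0 < a) (f f' : ℝ → ℝ) (hf : ∀ x, HasDerivAt f (f' x) x)
    (hc : Continuous f')
    (h1 : Integrable (fun x => (Real.exp (a * |x| ^ 3) * f x) ^ 2))
    (h2 : Integrable (fun x => (Real.exp (a * |x| ^ 3) * f' x) ^ 2)) :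
    Dec a f := by
  have := two_sided a f (half_bound a ha f f' hf hc h1 h2)
    (half_bound a ha (fun x => f (-x)) (fun x => - f' (-x))
      (fun x => by
        have := (hf (-x)).comp x (hasDerivAt_neg x)
        exact HasDerivAt.congr_deriv this (by simp))
      (by fun_prop)
      (by have := h1.comp_neg; simpa using this)
      (by have := h2.comp_neg; simpa using this))
  obtain ⟨C, hC⟩ := this
  intro b hb hba
  have hC0 : 0 ≤ C := by have := (abs_nonneg _).trans (hC 0); simpa using this
  exact ⟨C, fun x => (hC x).trans (by gcongr)⟩

lemma Dec.add {a : ℝ} {f g : ℝ → ℝ} (hf : Dec a f) (hg : Dec a g) :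
    Dec a (fun x => f x + g x) := by
  intro b hb hba
  obtain ⟨C, hC⟩ := hf b hb hba
  obtain ⟨D, hD⟩ := hg b hb hba
  exact ⟨C + D, fun x => (abs_add_le _ _).trans (by linarith [hC x, hD x])⟩

lemma Dec.smul {a : ℝ} {f : ℝ → ℝ} (hf : Dec a f) (c : ℝ) :
    Dec a (fun x => c * f x) := by
  intro b hb hba
  obtain ⟨C, hC⟩ := hf b hb hba
  refine ⟨|c| * C, fun x => ?_⟩
  rw [abs_mul, mul_assoc]
  gcongr
  exact hC x

lemma Dec.xmul {a : ℝ} {f : ℝ → ℝ} (hf : Dec a f) :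
    Dec a (fun x => x * f x) := by
  intro b hb hba
  obtain ⟨C, hC⟩ := hf ((a + b) / 2) (by linarith) (by linarith)
  have hC0 : 0 ≤ C := by have := (abs_nonneg _).trans (hC 0); simpa using this
  set δ := (a - b) / 2 with hδ
  have hδ0 : 0 < δ := by rw [hδ]; linarith
  refine ⟨C * (1 + 1 / δ), fun x => ?_⟩
  set t := |x| ^ 3 with ht
  have ht0 : 0 ≤ t := by positivity
  have h1 : |x| ≤ 1 + t := by
    rw [ht]; nlinarith [abs_nonneg x, sq_nonneg (|x| - 1), sq_nonneg (|x|)]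
  have h2 : 1 ≤ Real.exp (δ * t) := Real.one_le_exp (by positivity)
  have h3 : δ * t ≤ Real.exp (δ * t) := by linarith [Real.add_one_le_exp (δ * t)]
  have h4 : t ≤ 1 / δ * Real.exp (δ * t) := by
    rw [one_div, inv_mul_eq_div, le_div_iff₀ hδ0]; linarith
  have h5 : |x| ≤ (1 + 1 / δ) * Real.exp (δ * t) := by linarith
  rw [abs_mul]
  calc |x| * |f x| ≤ ((1 + 1 / δ) * Real.exp (δ * t)) * (C * Real.exp (-((a + b) / 2 * t))) := by
        gcongr
        exact hC x
    _ = C * (1 + 1 / δ) * (Real.exp (δ * t) * Real.exp (-((a + b) / 2 * t))) := by ring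
    _ = _ := by rw [← Real.exp_add]; congr 2; rw [hδ]; ring

lemma Dec.xpow {a : ℝ} {f : ℝ → ℝ} (hf : Dec a f) (n : ℕ) :
    Dec a (fun x => x ^ n * f x) := by
  induction n with
  | zero => simpa using hf
  | succ n ih =>
    convert ih.xmul using 2
    ring

lemma Dec.integrable {a : ℝ} {f : ℝ → ℝ} (hf : Dec a f) (hc : Continuous f)
    {b : ℝ} (hb : 0 < b) (hba : b < a) :
    Integrable (fun x => (Real.exp (b * |x| ^ 3) * f x) ^ 2) := by
  obtain ⟨b', h1, h2⟩ := exists_between hba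
  obtain ⟨C, hC⟩ := hf b' (by linarith) h2
  obtain ⟨D, hD⟩ := hf.xmul b' (by linarith) h2
  have hC0 : 0 ≤ C := by have := (abs_nonneg _).trans (hC 0); simpa using this
  refine (integrable_inv_one_add_sq.const_mul (C ^ 2 + D ^ 2)).mono' (by fun_prop)
    (Eventually.of_forall fun x => ?_)
  rw [Real.norm_of_nonneg (by positivity)]
  have hE : Real.exp (b * |x| ^ 3) * Real.exp (-(b' * |x| ^ 3)) ≤ 1 := by
    rw [← Real.exp_add, Real.exp_le_one_iff]
    nlinarith [pow_nonneg (abs_nonneg x) 3]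
  have hD0 : 0 ≤ D := by have := (abs_nonneg _).trans (hD 0); simpa using this
  have gen : ∀ y K : ℝ, 0 ≤ K → |y| ≤ K * Real.exp (-(b' * |x| ^ 3)) →
      (Real.exp (b * |x| ^ 3) * y) ^ 2 ≤ K ^ 2 := by
    intro y K hK hy
    apply sq_le_sq'
    · have : |Real.exp (b * |x| ^ 3) * y| ≤ K := by
        rw [abs_mul, abs_of_pos (Real.exp_pos _)]
        calc _ ≤ Real.exp (b * |x| ^ 3) * (K * Real.exp (-(b' * |x| ^ 3))) := by gcongr
          _ = K * (Real.exp (b * |x| ^ 3) * Real.exp (-(b' * |x| ^ 3))) := by ring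
          _ ≤ K * 1 := by gcongr
          _ = K := by ring
      exact (abs_le.1 this).1
    · have : |Real.exp (b * |x| ^ 3) * y| ≤ K := by
        rw [abs_mul, abs_of_pos (Real.exp_pos _)]
        calc _ ≤ Real.exp (b * |x| ^ 3) * (K * Real.exp (-(b' * |x| ^ 3))) := by gcongr
          _ = K * (Real.exp (b * |x| ^ 3) * Real.exp (-(b' * |x| ^ 3))) := by ring
          _ ≤ K * 1 := by gcongr
          _ = K := by ring
      exact (abs_le.1 this).2
  have g1 := gen _ C hC0 (hC x)
  have g2 := gen _ D hD0 (hD x)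
  rw [← div_eq_mul_inv, le_div_iff₀ (by positivity)]
  nlinarith

lemma half_comparison (ζ ν b : ℝ) (hb : 0 < b) (hb' : b < 1/3) (u w w' w'' : ℝ → ℝ)
    (hw : ∀ x, HasDerivAt w (w' x) x) (hw' : ∀ x, HasDerivAt w' (w'' x) x)
    (hwL2 : Integrable (fun x => w x ^ 2))
    (heq : ∀ x : ℝ, -(w'' x) + ((ζ + x ^ 2) ^ 2 - ν) * w x = u x)
    (hu : ∃ C, ∀ x, 0 ≤ x → |u x| ≤ C * Real.exp (-(b * |x| ^ 3))) :
    ∃ C, ∀ x, 0 ≤ x → w x ≤ C * Real.exp (-(b * |x| ^ 3)) := by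
  have hwc : Continuous w := continuous_iff_continuousAt.2 fun x => (hw x).continuousAt
  obtain ⟨C, hC⟩ := hu
  have hc0 : 0 < 1 - 9 * b ^ 2 := by nlinarith
  obtain ⟨R, hR1, hR⟩ : ∃ R : ℝ, 1 ≤ R ∧ ∀ x, R ≤ x →
      1 ≤ (ζ + x ^ 2) ^ 2 - ν - 9 * b ^ 2 * x ^ 4 := by
    set K := (2 * |ζ| + 1 + |ν|) / (1 - 9 * b ^ 2) with hK
    have hK0 : 0 ≤ K := by positivity
    refine ⟨1 + K, by linarith, fun x hx => ?_⟩
    have hx1 : 1 ≤ x := by linarith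
    have h1 : K ≤ x ^ 2 := by nlinarith
    have h2 : 2 * |ζ| + 1 + |ν| ≤ (1 - 9 * b ^ 2) * x ^ 2 := by
      rw [hK, div_le_iff₀ hc0] at h1; linarith
    have h3 : 1 ≤ x ^ 2 := by nlinarith
    have h4 : (1 + |ν|) ≤ x ^ 2 * ((1 - 9 * b ^ 2) * x ^ 2 - 2 * |ζ|) := by
      calc 1 + |ν| = 1 * (1 + |ν|) := by ring
        _ ≤ _ := by gcongr; linarith
    have h5 := neg_abs_le ζ
    have h6 := le_abs_self ν
    nlinarith [mul_le_mul_of_nonneg_left h5 (sq_nonneg x), sq_nonneg ζ]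
  obtain ⟨B, hB⟩ := (isCompact_Icc (a := (0:ℝ)) (b := R)).exists_bound_of_continuousOn
    (f := fun x => w x * Real.exp (b * |x| ^ 3)) (by fun_prop)
  set D := max C B with hD
  refine ⟨D, ?_⟩
  have hsmall : ∀ x, 0 ≤ x → x ≤ R → w x ≤ D * Real.exp (-(b * |x| ^ 3)) := by
    intro x h1 h2
    have := (le_abs_self _).trans (hB x ⟨h1, h2⟩)
    rw [Real.exp_neg, ← div_eq_mul_inv, le_div_iff₀ (Real.exp_pos _)]
    exact this.trans (le_max_right _ _)
  by_contra! hcon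
  obtain ⟨x0, hx0, hx0'⟩ := hcon
  have hRx : R < x0 := by
    by_contra! h
    linarith [hsmall x0 hx0 h]
  set g : ℝ → ℝ := fun x => w x - D * Real.exp (-(b * x ^ 3)) with hg
  have hC0 : 0 ≤ C := by have := (abs_nonneg _).trans (hC 0 le_rfl); simpa using this
  have hD0 : 0 ≤ D := hC0.trans (le_max_left _ _)
  have hgx0 : 0 < g x0 := by
    rw [abs_of_nonneg hx0] at hx0'
    simp only [hg]; linarith
  obtain ⟨y, hy, hyg⟩ : ∃ y, x0 < y ∧ w y < g x0 := by
    by_contra! h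
    have : IntegrableOn (fun _ : ℝ => g x0 ^ 2) (Ioi x0) := by
      refine hwL2.integrableOn.mono' (by fun_prop) ?_
      refine (ae_restrict_iff' measurableSet_Ioi).2 (Eventually.of_forall fun y hy => ?_)
      rw [Real.norm_of_nonneg (by positivity)]
      have := h y hy
      gcongr
    rw [integrableOn_const_iff] at this
    simp at this
    linarith
  have hgc : Continuous g := by fun_prop
  have hdE : ∀ x : ℝ, HasDerivAt (fun x : ℝ => Real.exp (-(b * x ^ 3)))
      (-(3 * b * x ^ 2) * Real.exp (-(b * x ^ 3))) x := by
    intro x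
    have := (((hasDerivAt_pow 3 x).const_mul b).neg).exp
    refine HasDerivAt.congr_deriv this ?_
    simp only [Pi.neg_apply]
    norm_num; ring
  have hdg : ∀ x, HasDerivAt g (w' x - D * (-(3 * b * x ^ 2) * Real.exp (-(b * x ^ 3)))) x :=
    fun x => (hw x).sub ((hdE x).const_mul D)
  have hdg1 : deriv g = fun x => w' x - D * (-(3 * b * x ^ 2) * Real.exp (-(b * x ^ 3))) :=
    funext fun x => (hdg x).deriv
  have hdg2 : ∀ x, deriv (deriv g) x =
      w'' x - D * ((9 * b ^ 2 * x ^ 4 - 6 * b * x) * Real.exp (-(b * x ^ 3))) := by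
    intro x
    rw [hdg1]
    have h1 := (((hasDerivAt_pow 2 x).const_mul (3 * b)).neg).mul (hdE x)
    have := ((hw' x).sub (h1.const_mul D)).deriv
    refine Eq.trans this ?_
    simp only [Pi.neg_apply]
    push_cast
    ring
  obtain ⟨m, hm, hmax⟩ := (isCompact_Icc (a := R) (b := y)).exists_isMaxOn
    ⟨R, le_rfl, by linarith⟩ hgc.continuousOn
  have hgm : g x0 ≤ g m := hmax ⟨hRx.le, hy.le⟩
  have hgR : g R ≤ 0 := by
    have := hsmall R (by linarith) le_rfl
    rw [abs_of_nonneg (by linarith)] at this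
    simp only [hg]; linarith
  have hgy : g y < g x0 := by
    refine lt_of_le_of_lt ?_ hyg
    simp only [hg]
    have : 0 ≤ D * Real.exp (-(b * y ^ 3)) := by positivity
    linarith
  have hmR : R < m := lt_of_le_of_ne hm.1 (by rintro rfl; linarith)
  have hmy : m < y := lt_of_le_of_ne hm.2 (by rintro rfl; linarith)
  have hloc : IsLocalMax g m := hmax.isLocalMax (Icc_mem_nhds hmR hmy)
  have hpos : 0 < deriv (deriv g) m := by
    rw [hdg2]
    have hV := hR m hmR.le
    have hum := (le_abs_self _).trans (hC m (by linarith))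
    rw [abs_of_nonneg (by linarith : (0:ℝ) ≤ m)] at hum
    set e := Real.exp (-(b * m ^ 3)) with he
    have he0 : 0 < e := Real.exp_pos _
    have hCD : C * e ≤ D * e := by gcongr; exact le_max_left _ _
    have hwm : w m = g m + D * e := by simp only [hg, he]; ring
    have hE := heq m
    have h1 : w'' m - D * ((9 * b ^ 2 * m ^ 4 - 6 * b * m) * e) =
      ((ζ + m ^ 2) ^ 2 - ν) * g m +
        ((ζ + m ^ 2) ^ 2 - ν - 9 * b ^ 2 * m ^ 4 + 6 * b * m) * (D * e) - u m := by
      have : w'' m = ((ζ + m ^ 2) ^ 2 - ν) * w m - u m := by linarith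
      rw [this, hwm]; ring
    rw [h1]
    have h2 : 0 < (ζ + m ^ 2) ^ 2 - ν := by
      have : 0 ≤ 9 * b ^ 2 * m ^ 4 := by positivity
      linarith
    have h3 : 0 < ((ζ + m ^ 2) ^ 2 - ν) * g m := mul_pos h2 (by linarith)
    have h4 : 1 * (D * e) ≤
        ((ζ + m ^ 2) ^ 2 - ν - 9 * b ^ 2 * m ^ 4 + 6 * b * m) * (D * e) := by
      gcongr
      have : 0 ≤ 6 * b * m := by
        have : 0 ≤ m := by linarith
        positivity
      linarith
    linarith
  have hmin : IsLocalMin g m :=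
    isLocalMin_of_deriv_deriv_pos hpos hloc.deriv_eq_zero hgc.continuousAt
  have hconst : g =ᶠ[nhds m] fun _ => g m := by
    filter_upwards [hloc, hmin] with x h1 h2 using le_antisymm h1 h2
  have := hconst.deriv.deriv_eq
  simp at this
  linarith

lemma full_comparison (ζ ν a : ℝ) (ha' : a < 1/3) (u w w' w'' : ℝ → ℝ)
    (hw : ∀ x, HasDerivAt w (w' x) x) (hw' : ∀ x, HasDerivAt w' (w'' x) x)
    (hwL2 : Integrable (fun x => w x ^ 2))
    (heq : ∀ x : ℝ, -(w'' x) + ((ζ + x ^ 2) ^ 2 - ν) * w x = u x)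
    (hu : Dec a u) : Dec a w := by
  intro b hb hba
  obtain ⟨C, hC⟩ := hu b hb hba
  have half : ∀ u w w' w'' : ℝ → ℝ,
    (∀ x, HasDerivAt w (w' x) x) → (∀ x, HasDerivAt w' (w'' x) x) →
    (Integrable (fun x => w x ^ 2)) →
    (∀ x : ℝ, -(w'' x) + ((ζ + x ^ 2) ^ 2 - ν) * w x = u x) →
    (∀ x, |u x| ≤ C * Real.exp (-(b * |x| ^ 3))) →
    ∃ C, ∀ x, 0 ≤ x → |w x| ≤ C * Real.exp (-(b * |x| ^ 3)) := by
    intro u w w' w'' h1 h2 h3 h4 h5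
    obtain ⟨A, hA⟩ := half_comparison ζ ν b hb (by linarith) u w w' w'' h1 h2 h3 h4
      ⟨C, fun x _ => h5 x⟩
    obtain ⟨B, hB⟩ := half_comparison ζ ν b hb (by linarith) (fun x => - u x) (fun x => - w x)
      (fun x => - w' x) (fun x => - w'' x) (fun x => (h1 x).neg) (fun x => (h2 x).neg)
      (by simpa using h3) (fun x => by linarith [h4 x]) ⟨C, fun x _ => by rw [abs_neg]; exact h5 x⟩
    refine ⟨max A B, fun x hx => abs_le'.2 ⟨(hA x hx).trans ?_, (hB x hx).trans ?_⟩⟩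
    · gcongr; exact le_max_left _ _
    · gcongr; exact le_max_right _ _
  refine two_sided b w (half u w w' w'' hw hw' hwL2 heq hC) ?_
  refine half (fun x => u (-x)) (fun x => w (-x)) (fun x => - w' (-x)) (fun x => w'' (-x))
    (fun x => ?_) (fun x => ?_) (by simpa using hwL2.comp_neg) (fun x => ?_) (fun x => ?_)
  · have := (hw (-x)).comp x (hasDerivAt_neg x)
    exact HasDerivAt.congr_deriv this (by simp)
  · have := ((hw' (-x)).comp x (hasDerivAt_neg x)).neg
    exact HasDerivAt.congr_deriv this (by simp)
  · have := heq (-x)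
    simpa using this
  · have := hC (-x)
    simpa using this

lemma dec_deriv (a : ℝ) (w w' w'' : ℝ → ℝ)
    (hw : ∀ x, HasDerivAt w (w' x) x) (hw' : ∀ x, HasDerivAt w' (w'' x) x)
    (h0 : Dec a w) (h2 : Dec a w'') : Dec a w' := by
  intro b hb hba
  obtain ⟨C, hC⟩ := h0 b hb hba
  obtain ⟨D, hD⟩ := h2 b hb hba
  have hC0 : 0 ≤ C := by have := (abs_nonneg _).trans (hC 0); simpa using this
  have hD0 : 0 ≤ D := by have := (abs_nonneg _).trans (hD 0); simpa using this
  have half : ∀ w w' w'' : ℝ → ℝ,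
    (∀ x, HasDerivAt w (w' x) x) → (∀ x, HasDerivAt w' (w'' x) x) →
    (∀ x, |w x| ≤ C * Real.exp (-(b * |x| ^ 3))) →
    (∀ x, |w'' x| ≤ D * Real.exp (-(b * |x| ^ 3))) →
    ∃ C, ∀ x, 0 ≤ x → |w' x| ≤ C * Real.exp (-(b * |x| ^ 3)) := by
    intro w w' w'' hw hw' hC hD
    refine ⟨2 * C + D, fun x hx => ?_⟩
    obtain ⟨c, hc, hc'⟩ := exists_hasDerivAt_eq_slope w w' (by linarith : x < x + 1)
      (fun y _ => (hw y).continuousAt.continuousWithinAt) (fun y _ => hw y)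
    obtain ⟨d, hd, hd'⟩ := exists_hasDerivAt_eq_slope w' w'' hc.1
      (fun y _ => (hw' y).continuousAt.continuousWithinAt) (fun y _ => hw' y)
    have hcx : 0 < c - x := by linarith [hc.1]
    rw [eq_div_iff hcx.ne'] at hd'
    have mono : ∀ y, x ≤ y → Real.exp (-(b * |y| ^ 3)) ≤ Real.exp (-(b * |x| ^ 3)) := by
      intro y hy
      have : |x| ≤ |y| := by rwa [abs_of_nonneg hx, abs_of_nonneg (by linarith)]
      gcongr
    have e1 : w' x = w (x + 1) - w x - w'' d * (c - x) := by
      rw [hd', hc']; ring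
    have b1 := (hC (x + 1)).trans (mul_le_mul_of_nonneg_left (mono (x + 1) (by linarith)) hC0)
    have b2 := hC x
    have b3 := (hD d).trans (mul_le_mul_of_nonneg_left (mono d hd.1.le) hD0)
    have b4 : |w'' d * (c - x)| ≤ |w'' d| := by
      rw [abs_mul, abs_of_pos hcx]
      exact mul_le_of_le_one_right (abs_nonneg _) (by linarith [hc.2])
    rw [e1]
    have t1 := abs_sub (w (x + 1) - w x) (w'' d * (c - x))
    have t2 := abs_sub (w (x + 1)) (w x)
    linarith
  refine two_sided b w' (half w w' w'' hw hw' hC hD) ?_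
  have := half (fun x => w (-x)) (fun x => - w' (-x)) (fun x => w'' (-x)) (fun x => ?_)
    (fun x => ?_) (fun x => by simpa using hC (-x)) (fun x => by simpa using hD (-x))
  · simpa using this
  · have := (hw (-x)).comp x (hasDerivAt_neg x)
    exact HasDerivAt.congr_deriv this (by simp)
  · have := ((hw' (-x)).comp x (hasDerivAt_neg x)).neg
    exact HasDerivAt.congr_deriv this (by simp)

inductive Cls (w w' : ℝ → ℝ) (U : ℕ → ℝ → ℝ) : (ℝ → ℝ) → Prop
  | w0 : Cls w w' U w
  | w1 : Cls w w' U w'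
  | uk (k : ℕ) : Cls w w' U (U k)
  | add (f g : ℝ → ℝ) : Cls w w' U f → Cls w w' U g → Cls w w' U (fun x => f x + g x)
  | smul (c : ℝ) (f : ℝ → ℝ) : Cls w w' U f → Cls w w' U (fun x => c * f x)
  | xmul (f : ℝ → ℝ) : Cls w w' U f → Cls w w' U (fun x => x * f x)

lemma Cls.der {w w' : ℝ → ℝ} {U : ℕ → ℝ → ℝ} (ζ ν : ℝ)
    (hw : ∀ x, HasDerivAt w (w' x) x)
    (hw' : ∀ x, HasDerivAt w' (((ζ + x ^ 2) ^ 2 - ν) * w x - U 0 x) x)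
    (hU : ∀ k x, HasDerivAt (U k) (U (k + 1) x) x) {f : ℝ → ℝ} (hf : Cls w w' U f) :
    ∃ f', Cls w w' U f' ∧ ∀ x, HasDerivAt f (f' x) x := by
  induction hf with
  | w0 => exact ⟨w', .w1, hw⟩
  | w1 =>
    refine ⟨_, ?_, hw'⟩
    have h2 := Cls.xmul _ (Cls.xmul _ (Cls.w0 (w := w) (w' := w') (U := U)))
    have h4 := Cls.xmul _ (Cls.xmul _ h2)
    have := Cls.add _ _ (Cls.add _ _ (Cls.add _ _ (Cls.smul (ζ ^ 2 - ν) _ Cls.w0)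
      (Cls.smul (2 * ζ) _ h2)) h4) (Cls.smul (-1) _ (Cls.uk 0))
    convert this using 2
    ring
  | uk k => exact ⟨_, .uk (k + 1), hU k⟩
  | add f g _ _ hf hg =>
    obtain ⟨f', h1, h2⟩ := hf
    obtain ⟨g', h3, h4⟩ := hg
    exact ⟨_, .add _ _ h1 h3, fun x => (h2 x).add (h4 x)⟩
  | smul c f _ hf =>
    obtain ⟨f', h1, h2⟩ := hf
    exact ⟨_, .smul c _ h1, fun x => (h2 x).const_mul c⟩
  | xmul f h hf =>
    obtain ⟨f', h1, h2⟩ := hf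
    refine ⟨_, .add _ _ h (.xmul _ h1), fun x => ?_⟩
    have := (hasDerivAt_id x).mul (h2 x)
    exact HasDerivAt.congr_deriv this (by simp)

lemma Cls.dec {w w' : ℝ → ℝ} {U : ℕ → ℝ → ℝ} {a : ℝ}
    (hw : Dec a w) (hw' : Dec a w') (hU : ∀ k, Dec a (U k)) {f : ℝ → ℝ} (hf : Cls w w' U f) :
    Dec a f := by
  induction hf with
  | w0 => exact hw
  | w1 => exact hw'
  | uk k => exact hU k
  | add f g _ _ hf hg => exact hf.add hg
  | smul c f _ hf => exact hf.smul c
  | xmul f _ hf => exact hf.xmul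

/-- Lemma A.9: the regularized resolvent of the Montgomery operator
preserves cubic-exponential decay (up to a loss in the rate), together with all
derivatives and polynomial moments. -/
theorem statement19 (ζ ν a : ℝ) (ha : 0 < a) (ha' : a < 1/3)
    (u : ℝ → ℝ) (hu : ContDiff ℝ (⊤ : ℕ∞) u)
    (hdecay : ∀ k : ℕ,
      Integrable (fun ρ => (Real.exp (a * |ρ| ^ 3) * u ρ) ^ 2) ∧
      Integrable (fun ρ => (Real.exp (a * |ρ| ^ 3) * ρ ^ k * u ρ) ^ 2) ∧
      Integrable (fun ρ => (Real.exp (a * |ρ| ^ 3) * iteratedDeriv k u ρ) ^ 2))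
    (w : ℝ → ℝ) (hw : ContDiff ℝ 2 w) (hwL2 : Integrable (fun ρ => w ρ ^ 2))
    (heq : ∀ ρ : ℝ, -(deriv (deriv w) ρ) + ((ζ + ρ ^ 2) ^ 2 - ν) * w ρ = u ρ) :
    ∀ b : ℝ, 0 < b → b < a → ∀ l : ℕ,
      Integrable (fun ρ => (Real.exp (b * |ρ| ^ 3) * w ρ) ^ 2) ∧
      Integrable (fun ρ => (Real.exp (b * |ρ| ^ 3) * ρ ^ l * w ρ) ^ 2) ∧
      Integrable (fun ρ => (Real.exp (b * |ρ| ^ 3) * iteratedDeriv l w ρ) ^ 2) := by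
  have hU : ∀ k x, HasDerivAt (iteratedDeriv k u) (iteratedDeriv (k + 1) u x) x := by
    intro k x
    rw [iteratedDeriv_succ]
    exact ((hu.differentiable_iteratedDeriv k (by exact_mod_cast ENat.natCast_lt_top k)) x).hasDerivAt
  have hUc : ∀ k, Continuous (iteratedDeriv k u) := fun k =>
    continuous_iff_continuousAt.2 fun x => (hU k x).continuousAt
  have hUd : ∀ k, Dec a (iteratedDeriv k u) := fun k =>
    full_bound a ha _ _ (hU k) (hUc (k + 1)) (hdecay k).2.2 (hdecay (k + 1)).2.2
  have hu0 : Dec a u := by simpa using hUd 0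
  have hw1 : ∀ x, HasDerivAt w (deriv w x) x := fun x =>
    (hw.differentiable (by norm_num) x).hasDerivAt
  have hwd : ContDiff ℝ 1 (deriv w) := by
    have : ContDiff ℝ (1 + 1) w := by simpa [one_add_one_eq_two] using hw
    exact (contDiff_succ_iff_deriv.1 this).2.2
  have hw2 : ∀ x, HasDerivAt (deriv w) (deriv (deriv w) x) x := fun x =>
    (hwd.differentiable (by norm_num) x).hasDerivAt
  have hw2' : ∀ x, deriv (deriv w) x = ((ζ + x ^ 2) ^ 2 - ν) * w x - iteratedDeriv 0 u x := by
    intro x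
    have := heq x
    rw [iteratedDeriv_zero]; linarith
  have hD0 : Dec a w := full_comparison ζ ν a ha' u w _ _ hw1 hw2 hwL2 heq hu0
  have hD2 : Dec a (deriv (deriv w)) := by
    have := ((((hD0.smul (ζ ^ 2 - ν)).add ((hD0.xpow 2).smul (2 * ζ))).add (hD0.xpow 4)).add
      (hu0.smul (-1)))
    convert this using 2 with x
    rw [hw2', iteratedDeriv_zero]; ring
  have hD1 : Dec a (deriv w) := dec_deriv a _ _ _ hw1 hw2 hD0 hD2
  have hcls : ∀ l, Cls w (deriv w) (fun k => iteratedDeriv k u) (iteratedDeriv l w) := by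
    intro l
    induction l with
    | zero => rw [iteratedDeriv_zero]; exact .w0
    | succ l ih =>
      obtain ⟨f', h1, h2⟩ := ih.der ζ ν hw1 (fun x => by rw [← hw2']; exact hw2 x) hU
      rw [iteratedDeriv_succ]
      rwa [show deriv (iteratedDeriv l w) = f' from funext fun x => (h2 x).deriv]
  intro b hb hba l
  have hwc := hw.continuous
  refine ⟨hD0.integrable hwc hb hba, ?_, ?_⟩
  · have := (hD0.xpow l).integrable (by fun_prop) hb hba
    simpa only [mul_assoc] using this
  · refine ((hcls l).dec hD0 hD1 hUd).integrable ?_ hb hba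
    obtain ⟨f', h1, h2⟩ := (hcls l).der ζ ν hw1 (fun x => by rw [← hw2']; exact hw2 x) hU
    exact continuous_iff_continuousAt.2 fun x => (h2 x).continuousAt
end
end
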